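/- Let d = 2 and, for each even integer L ≥ 2, let h_L be sampled uniformly from the set of homomorphism height functions on Λ(L) := {v ∈ ℤ² : ‖v‖₁ ≤ L} which equal zero on ∂•Λ(L). Then the variance of h_L(0,0) tends to infinity as L → ∞ (along even L). -/

import Mathlib

/-! The variance at the origin is a monotone function of the domain, so it diverges once it is
unbounded. The proof assumes that it is bounded (`Loc C`) and derives a contradiction (`not_Loc`);
`varHeight_eq` translates between the infinite-lattice model used here and the statement. It is
based on positive association, on exploration arguments, and on the impossibility of having
trifurcation points with positive density.

*Correlation inequalities.* The uniform measure on height functions satisfies FKG and is monotone in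
its boundary values (`Om_PA`, `Om_SD`). So is the law of the absolute value `|h|` for nonnegative
boundary values (`abs_PA`, `abs_SD`): the sign patterns compatible with a given absolute value form a
group, and the order of this group is log-supermodular (`Kg_supermod`). In particular second
moments increase with the domain when the outer boundary is even.

*Zeros percolate.* Explore the zeros from the boundary along `*`-paths. If none of these paths
approaches a given diamond, then the unexplored region sees boundary values of constant sign, all
at least `1` in absolute value, and the second moments at two adjacent vertices rise by a fixed
amount. These moments are bounded and monotone in the domain, so this event is unlikely
(`NoZ_small`). The square-root trick and the dihedral symmetry of the diamond then give paths of
zeros to every half-side at once (`root8`, `zero_arms`).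

*Six arms are impossible.* Let `S = h1 + h2` be the sum of two independent height functions. Three
arms of `{S ≥ 1}` and three `*`-arms of `{S ≤ 0}` around a core can be turned, at a bounded cost in
probability, into a trifurcation of the super-level set: raise `h1` to a cone near the core
(`raise_trif`, `finite_energy`). By the Burton–Keane count, disjoint trifurcations in a box are at
most as many as its boundary points (`card_trifurcation`), whereas arms with probability bounded
below around each point of a box of side `N` would produce order `N²` of them, against a boundary of
order `N` (`no_six`).

*Nonzero clusters are confined.* If nonzero clusters reached far with probability bounded below,
positive association of `|h|` would give three nonzero arms in prescribed directions, with positive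
heights after a choice of signs, and arms of zeros would separate them. This contradicts `no_six`
with one of the two functions frozen, so nonzero clusters do not reach far (`far_small_even`). As
signs are independent and symmetric beyond a circuit of zeros, the height at a vertex is almost
uncorrelated with the heights far away (`corr_small`), and the local law hardly depends on the
domain, provided the domain is taken from a large enough scale on (`close_even`, `close_odd`).

*A pair of height functions.* Let `h1` live in an odd domain, where its boundary values and its
mean are `1`, and `h2` in an even domain, where they are `0`. The sum `S` is even everywhere and
symmetric about `1`, and the symmetry exchanges `{S ≥ 1} = {S ≥ 2}` with `{S ≤ 0}`. If no path of
`{S ≥ 1}` comes in from the boundary to a given core, then the unexplored region sees boundary sums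
at most `0`, and the conditional mean of `S - 1` at its centre is at most `-1`. By decorrelation this
has small probability (`pair_small`), and likewise for `{S ≤ 0}`. The square-root trick turns this
into six alternating arms with probability at least `1/2` (`six_sym`). As local laws hardly depend
on the domain, the same holds around all points of a box in one common pair of domains,
contradicting `no_six`. -/

noncomputable section

namespace Stmt5

/-- Two vertices of `ℤ²` are adjacent when their `ℓ¹`-distance is `1`. -/
def adj2 (u v : ℤ × ℤ) : Prop := |u.1 - v.1| + |u.2 - v.2| = 1

/-- The `ℓ¹`-ball `Λ(L) = {v ∈ ℤ² : ‖v‖₁ ≤ L}`. -/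
def Lam (L : ℕ) : Set (ℤ × ℤ) := {v | |v.1| + |v.2| ≤ (L : ℤ)}

lemma origin_mem (L : ℕ) : ((0, 0) : ℤ × ℤ) ∈ Lam L := by
  simp [Lam]

/-- The set of homomorphism height functions on `Λ(L)` equal to `0` on `∂•Λ(L)`. -/
def HF (L : ℕ) : Set (↥(Lam L) → ℤ) :=
  {h | (∀ u v : ↥(Lam L), adj2 u.1 v.1 → |h u - h v| = 1) ∧
       (∀ v : ↥(Lam L), Even (v.1.1 + v.1.2) → Even (h v)) ∧
       (∀ v : ↥(Lam L), (∃ w, w ∉ Lam L ∧ adj2 v.1 w) → h v = 0)}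

/-- The number of configurations. -/
def total (L : ℕ) : ℝ := ∑' _h : ↥(HF L), (1 : ℝ)

/-- The height at the origin. -/
def heightAt (L : ℕ) (h : ↥(HF L)) : ℤ := h.1 ⟨((0 : ℤ), (0 : ℤ)), origin_mem L⟩

/-- The mean of the height at the origin under the uniform measure. -/
def meanHeight (L : ℕ) : ℝ := (∑' h : ↥(HF L), ((heightAt L h : ℤ) : ℝ)) / total L

/-- The variance of the height at the origin under the uniform measure. -/
def varHeight (L : ℕ) : ℝ :=
  (∑' h : ↥(HF L), (((heightAt L h : ℤ) : ℝ)) ^ 2) / total L - (meanHeight L) ^ 2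

/-! ### Height functions on the plane -/

/-- The vertex set of the square lattice. -/
abbrev P := ℤ × ℤ

lemma adj2_iff {u v : P} : adj2 u v ↔
    (u.1 = v.1 ∧ (u.2 = v.2 + 1 ∨ v.2 = u.2 + 1)) ∨
    (u.2 = v.2 ∧ (u.1 = v.1 + 1 ∨ v.1 = u.1 + 1)) := by
  unfold adj2
  constructor
  · intro h
    rcases abs_cases (u.1 - v.1) with h1 | h1 <;> rcases abs_cases (u.2 - v.2) with h2 | h2 <;> omega
  · intro h
    rcases abs_cases (u.1 - v.1) with h1 | h1 <;> rcases abs_cases (u.2 - v.2) with h2 | h2 <;> omega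

lemma adj2_symm {u v : P} (h : adj2 u v) : adj2 v u := by
  rw [adj2_iff] at *; omega

/-- Homomorphism height functions on the whole lattice. Given the parity condition, an increment
of absolute value at most one along an edge is automatically `±1`. -/
def isHom (h : P → ℤ) : Prop :=
  (∀ v : P, (h v + v.1 + v.2) % 2 = 0) ∧ ∀ u v, adj2 u v → h u - h v ≤ 1

lemma isHom.sup {h g : P → ℤ} (hh : isHom h) (hg : isHom g) : isHom (h ⊔ g) := by
  refine ⟨fun v => ?_, fun u v a => ?_⟩
  · have := hh.1 v; have := hg.1 v
    simp only [Pi.sup_apply]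
    rcases le_total (h v) (g v) with h1 | h1 <;> simp only [h1, sup_of_le_left, sup_of_le_right, inf_of_le_left, inf_of_le_right] <;> assumption
  · have := hh.2 u v a; have := hg.2 u v a
    simp only [Pi.sup_apply]; omega

lemma isHom.inf {h g : P → ℤ} (hh : isHom h) (hg : isHom g) : isHom (h ⊓ g) := by
  refine ⟨fun v => ?_, fun u v a => ?_⟩
  · have := hh.1 v; have := hg.1 v
    simp only [Pi.inf_apply]
    rcases le_total (h v) (g v) with h1 | h1 <;> simp only [h1, sup_of_le_left, sup_of_le_right, inf_of_le_left, inf_of_le_right] <;> assumption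
  · have := hh.2 u v a; have := hg.2 u v a
    simp only [Pi.inf_apply]; omega

lemma isHom.neg {h : P → ℤ} (hh : isHom h) : isHom (-h) := by
  refine ⟨fun v => ?_, fun u v a => ?_⟩
  · have := hh.1 v; simp only [Pi.neg_apply]; omega
  · have := hh.2 v u (adj2_symm a); simp only [Pi.neg_apply]; omega

lemma isHom.step {h : P → ℤ} (hh : isHom h) {u v : P} (a : adj2 u v) :
    h u = h v + 1 ∨ h v = h u + 1 := by
  have h1 := hh.2 u v a
  have h2 := hh.2 v u (adj2_symm a)
  have h3 := hh.1 u
  have h4 := hh.1 v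
  rw [adj2_iff] at a
  omega

/-- `ℓ¹`-distance. -/
def dist1 (u v : P) : ℤ := |u.1 - v.1| + |u.2 - v.2|

lemma dist1_comm (u v : P) : dist1 u v = dist1 v u := by
  unfold dist1; rw [abs_sub_comm, abs_sub_comm u.2]

lemma dist1_step {u v : P} (h : u ≠ v) : ∃ w, adj2 u w ∧ dist1 w v = dist1 u v - 1 := by
  unfold dist1
  by_cases h1 : u.1 = v.1
  · have h2 : u.2 ≠ v.2 := fun h2 => h (Prod.ext h1 h2)
    rcases lt_or_gt_of_ne h2 with h3 | h3
    · refine ⟨(u.1, u.2 + 1), adj2_iff.2 (by simp), ?_⟩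
      simp only [h1]
      rw [abs_of_nonpos (by omega : u.2 + 1 - v.2 ≤ 0), abs_of_nonpos (by omega : u.2 - v.2 ≤ 0)]
      omega
    · refine ⟨(u.1, u.2 - 1), adj2_iff.2 (by simp), ?_⟩
      simp only [h1]
      rw [abs_of_nonneg (by omega : 0 ≤ u.2 - 1 - v.2), abs_of_nonneg (by omega : 0 ≤ u.2 - v.2)]
      omega
  · rcases lt_or_gt_of_ne h1 with h3 | h3
    · refine ⟨(u.1 + 1, u.2), adj2_iff.2 (by simp), ?_⟩
      simp only
      rw [abs_of_nonpos (by omega : u.1 + 1 - v.1 ≤ 0), abs_of_nonpos (by omega : u.1 - v.1 ≤ 0)]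
      omega
    · refine ⟨(u.1 - 1, u.2), adj2_iff.2 (by simp), ?_⟩
      simp only
      rw [abs_of_nonneg (by omega : 0 ≤ u.1 - 1 - v.1), abs_of_nonneg (by omega : 0 ≤ u.1 - v.1)]
      omega

lemma dist1_nonneg (u v : P) : 0 ≤ dist1 u v := by unfold dist1; positivity

lemma dist1_self (u : P) : dist1 u u = 0 := by simp [dist1]

lemma dist1_eq_zero {u v : P} (h : dist1 u v ≤ 0) : u = v := by
  unfold dist1 at h
  have := abs_nonneg (u.1 - v.1)
  have := abs_nonneg (u.2 - v.2)
  apply Prod.ext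
  · have := abs_eq_zero.1 (by omega : |u.1 - v.1| = 0); omega
  · have := abs_eq_zero.1 (by omega : |u.2 - v.2| = 0); omega

lemma isHom.lip {h : P → ℤ} (hh : isHom h) (u v : P) : h u - h v ≤ dist1 u v := by
  generalize hn : (dist1 u v).toNat = n
  induction n generalizing u with
  | zero =>
    have := dist1_nonneg u v
    have e : u = v := dist1_eq_zero (by omega)
    subst e; omega
  | succ n ih =>
    have : u ≠ v := by rintro rfl; simp [dist1_self] at hn
    obtain ⟨w, hw, hd⟩ := dist1_step this
    have := hh.2 u w hw
    have := ih w (by omega)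
    omega

/-- The minimal nonnegative height function: `0` on even and `1` on odd vertices. -/
def xi0 : P → ℤ := fun v => (v.1 + v.2) % 2

lemma xi0_isHom : isHom xi0 := by
  refine ⟨fun v => ?_, fun u v a => ?_⟩ <;> simp only [xi0] <;> omega

lemma xi0_nonneg (v : P) : 0 ≤ xi0 v := by simp only [xi0]; omega
lemma xi0_le_one (v : P) : xi0 v ≤ 1 := by simp only [xi0]; omega

/-- `g` on `U`, `ξ` off `U`. -/
def glue (U : Finset P) (g ξ : P → ℤ) : P → ℤ := fun v => if v ∈ U then g v else ξ v

lemma exists_notMem (D : Finset P) : ∃ w : P, w ∉ D := Infinite.exists_notMem_finset D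

lemma OmSet_finite (D : Finset P) (ξ : P → ℤ) :
    {h : P → ℤ | isHom h ∧ ∀ v, v ∉ D → h v = ξ v}.Finite := by
  obtain ⟨w, hw⟩ := exists_notMem D
  let I : Set (D → ℤ) := Set.pi Set.univ
    (fun v => Set.Icc (ξ w - dist1 w v.1) (ξ w + dist1 w v.1))
  have hI : I.Finite := Set.Finite.pi fun v => Set.finite_Icc _ _
  refine Set.Finite.of_finite_image (f := fun h (v : D) => h v.1) (hI.subset ?_) ?_
  · rintro _ ⟨h, ⟨h1, h2⟩, rfl⟩ v -
    have a := h1.lip v.1 w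
    have b := h1.lip w v.1
    rw [dist1_comm v.1 w] at a
    rw [h2 w hw] at a b
    simp only [Set.mem_Icc]; omega
  · rintro h ⟨-, h2⟩ g ⟨-, g2⟩ e
    funext v
    by_cases hv : v ∈ D
    · exact congrFun e ⟨v, hv⟩
    · rw [h2 v hv, g2 v hv]

/-- Height functions on the plane that agree with `ξ` off the finite set `D`. -/
def Om (D : Finset P) (ξ : P → ℤ) : Finset (P → ℤ) := (OmSet_finite D ξ).toFinset

lemma mem_Om {D : Finset P} {ξ h : P → ℤ} :
    h ∈ Om D ξ ↔ isHom h ∧ ∀ v, v ∉ D → h v = ξ v := by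
  simp [Om]

lemma self_mem_Om {D : Finset P} {ξ : P → ℤ} (h : isHom ξ) : ξ ∈ Om D ξ :=
  mem_Om.2 ⟨h, fun _ _ => rfl⟩

lemma Om_nonempty {D : Finset P} {ξ : P → ℤ} (h : isHom ξ) : (Om D ξ).Nonempty :=
  ⟨ξ, self_mem_Om h⟩

/-- The number of extensions is bounded uniformly in the boundary condition. -/
lemma exists_card_Om_le (D : Finset P) : ∃ M : ℕ, ∀ ξ, (Om D ξ).card ≤ M := by
  obtain ⟨w, hw⟩ := exists_notMem D
  refine ⟨(Fintype.piFinset fun v : D => Finset.Icc (- dist1 w v.1) (dist1 w v.1)).card,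
    fun ξ => ?_⟩
  refine Finset.card_le_card_of_injOn (fun h v => h v.1 - ξ w) ?_ ?_
  · intro h hh
    obtain ⟨h1, h2⟩ := mem_Om.1 hh
    simp only [Finset.mem_coe, Fintype.mem_piFinset]
    intro v
    have a := h1.lip v.1 w
    have b := h1.lip w v.1
    rw [dist1_comm v.1 w] at a
    rw [h2 w hw] at a b
    simp only [Finset.mem_Icc]; omega
  · intro h hh g hg e
    have h2 := (mem_Om.1 hh).2
    have g2 := (mem_Om.1 hg).2
    funext v
    by_cases hv : v ∈ D
    · have := congrFun e ⟨v, hv⟩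
      simp only at this; omega
    · rw [h2 v hv, g2 v hv]

lemma Om_sub {D U : Finset P} {ξ h h' : P → ℤ} (hU : U ⊆ D) (hh : h ∈ Om D ξ)
    (h1 : h' ∈ Om U h) : h' ∈ Om D ξ := by
  rw [mem_Om] at *
  exact ⟨h1.1, fun v hv => by rw [h1.2 v (fun c => hv (hU c)), hh.2 v hv]⟩

lemma Om_congr {U : Finset P} {h h' : P → ℤ} (e : ∀ v, v ∉ U → h v = h' v) :
    Om U h = Om U h' := by
  ext g; simp only [mem_Om]
  refine and_congr_right fun _ => forall₂_congr fun v hv => by rw [e v hv]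

lemma Om_eq_of_mem {U : Finset P} {h h' : P → ℤ} (h1 : h' ∈ Om U h) : Om U h' = Om U h :=
  Om_congr (mem_Om.1 h1).2

lemma glue_isHom {U : Finset P} {g ξ : P → ℤ} (hg : isHom g) (hξ : isHom ξ)
    (e : ∀ u v, u ∈ U → v ∉ U → adj2 u v → g v = ξ v) : isHom (glue U g ξ) := by
  refine ⟨fun v => ?_, fun u v a => ?_⟩
  · unfold glue; split_ifs
    · exact hg.1 v
    · exact hξ.1 v
  · unfold glue
    split_ifs with h1 h2 h2
    · exact hg.2 u v a
    · rw [← e u v h1 h2 a]; exact hg.2 u v a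
    · rw [← e v u h2 h1 (adj2_symm a)]; exact hg.2 u v a
    · exact hξ.2 u v a

/-- The outer boundary of `U` separates: the law inside `U` depends on the boundary condition only
through its values on the outer boundary. -/
lemma Om_sum_glue {U : Finset P} {ξ ξ' : P → ℤ} (h1 : isHom ξ) (h2 : isHom ξ')
    (e : ∀ u v, u ∈ U → v ∉ U → adj2 u v → ξ v = ξ' v) {β : Type*} [AddCommMonoid β]
    (F : (P → ℤ) → β) :
    ∑ h ∈ Om U ξ', F h = ∑ h ∈ Om U ξ, F (glue U h ξ') := by
  symm
  refine Finset.sum_bij' (fun h _ => glue U h ξ') (fun h _ => glue U h ξ) ?_ ?_ ?_ ?_ ?_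
  · intro h hh
    rw [mem_Om] at *
    refine ⟨glue_isHom hh.1 h2 fun u v hu hv a => by rw [hh.2 v hv, e u v hu hv a], ?_⟩
    intro v hv; simp [glue, hv]
  · intro h hh
    rw [mem_Om] at *
    refine ⟨glue_isHom hh.1 h1 fun u v hu hv a => by rw [hh.2 v hv, e u v hu hv a], ?_⟩
    intro v hv; simp [glue, hv]
  · intro h hh
    rw [mem_Om] at hh
    funext v; simp only [glue]; split_ifs with hv
    · rfl
    · rw [hh.2 v hv]
  · intro h hh
    rw [mem_Om] at hh
    funext v; simp only [glue]; split_ifs with hv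
    · rfl
    · rw [hh.2 v hv]
  · intros; rfl

/-- Transport by a lattice automorphism and possibly `h ↦ c + s h`. -/
lemma Om_sum_symm {D D' : Finset P} {ξ ξ' : P → ℤ} (φ : P ≃ P) (c s : ℤ) (hs : s * s = 1)
    (hφ : ∀ u v, adj2 u v → adj2 (φ u) (φ v)) (hφ' : ∀ u v, adj2 u v → adj2 (φ.symm u) (φ.symm v))
    (hp : ∀ v : P, ((φ v).1 + (φ v).2 + v.1 + v.2 + c) % 2 = 0)
    (hD : ∀ v, v ∈ D' ↔ φ v ∈ D) (hξ : ∀ v, v ∉ D' → ξ' v = c + s * ξ (φ v))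
    {β : Type*} [AddCommMonoid β] (F : (P → ℤ) → β) :
    ∑ h ∈ Om D' ξ', F h = ∑ h ∈ Om D ξ, F (fun v => c + s * h (φ v)) := by
  have hs' : s = 1 ∨ s = -1 := by
    have : (s - 1) * (s + 1) = 0 := by linarith
    rcases mul_eq_zero.1 this with h | h <;> omega
  symm
  refine Finset.sum_bij' (fun h _ v => c + s * h (φ v)) (fun h _ v => s * (h (φ.symm v) - c))
    ?_ ?_ ?_ ?_ ?_
  · intro h hh
    rw [mem_Om] at *
    refine ⟨⟨fun v => ?_, fun u v a => ?_⟩, fun v hv => ?_⟩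
    · have := hh.1.1 (φ v); have := hp v
      rcases hs' with rfl | rfl <;> dsimp only <;> omega
    · have := hh.1.2 _ _ (hφ u v a); have := hh.1.2 _ _ (hφ v u (adj2_symm a))
      rcases hs' with rfl | rfl <;> dsimp only <;> omega
    · rw [hξ v hv, hh.2 (φ v) (fun c => hv ((hD v).2 c))]
  · intro h hh
    rw [mem_Om] at *
    refine ⟨⟨fun v => ?_, fun u v a => ?_⟩, fun v hv => ?_⟩
    · have := hh.1.1 (φ.symm v); have := hp (φ.symm v)
      rw [Equiv.apply_symm_apply] at this
      rcases hs' with rfl | rfl <;> dsimp only <;> omega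
    · have := hh.1.2 _ _ (hφ' u v a); have := hh.1.2 _ _ (hφ' v u (adj2_symm a))
      rcases hs' with rfl | rfl <;> dsimp only <;> omega
    · have : φ.symm v ∉ D' := by rw [hD, Equiv.apply_symm_apply]; exact hv
      rw [hh.2 _ this, hξ _ this, Equiv.apply_symm_apply]
      linear_combination ξ v * hs
  · intro h hh; funext v
    simp only [Equiv.apply_symm_apply]; linear_combination h v * hs
  · intro h hh; funext v
    simp only [Equiv.symm_apply_apply]; linear_combination (h v - c) * hs
  · intros; rfl

/-! ### Finite expectations, Harris and Holley inequalities -/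

/-- The average of `F` over the finite set `s`: expectation under the uniform measure. -/
def Ex {α : Type*} (s : Finset α) (F : α → ℝ) : ℝ := (∑ a ∈ s, F a) / s.card

open Classical in
/-- The real-valued indicator of a proposition. -/
def ind (p : Prop) : ℝ := if p then 1 else 0

lemma ind_nonneg (p : Prop) : 0 ≤ ind p := by unfold ind; split_ifs <;> norm_num
lemma ind_le_one (p : Prop) : ind p ≤ 1 := by unfold ind; split_ifs <;> norm_num
lemma ind_true {p : Prop} (h : p) : ind p = 1 := by simp [ind, h]
lemma ind_false {p : Prop} (h : ¬ p) : ind p = 0 := by simp [ind, h]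
lemma ind_mono {p q : Prop} (h : p → q) : ind p ≤ ind q := by
  unfold ind; split_ifs <;> first | tauto | norm_num
lemma ind_not (p : Prop) : ind (¬ p) = 1 - ind p := by
  unfold ind; split_ifs <;> norm_num
lemma ind_and (p q : Prop) : ind (p ∧ q) = ind p * ind q := by
  unfold ind; split_ifs <;> first | tauto | norm_num
lemma ind_or_le (p q : Prop) : ind (p ∨ q) ≤ ind p + ind q := by
  unfold ind; split_ifs <;> first | tauto | norm_num

section
variable {α β : Type*} {s : Finset α}

lemma Ex_mono {F G : α → ℝ} (h : ∀ a ∈ s, F a ≤ G a) : Ex s F ≤ Ex s G := by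
  unfold Ex; gcongr with a ha; exact h a ha

lemma Ex_congr {F G : α → ℝ} (h : ∀ a ∈ s, F a = G a) : Ex s F = Ex s G := by
  unfold Ex; rw [Finset.sum_congr rfl h]

lemma Ex_add (F G : α → ℝ) : Ex s (fun a => F a + G a) = Ex s F + Ex s G := by
  unfold Ex; rw [Finset.sum_add_distrib, add_div]

lemma Ex_sub (F G : α → ℝ) : Ex s (fun a => F a - G a) = Ex s F - Ex s G := by
  unfold Ex; rw [Finset.sum_sub_distrib, sub_div]

lemma Ex_mul (c : ℝ) (F : α → ℝ) : Ex s (fun a => c * F a) = c * Ex s F := by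
  unfold Ex; rw [← Finset.mul_sum, mul_div_assoc]

lemma Ex_const (hs : s.Nonempty) (c : ℝ) : Ex s (fun _ => c) = c := by
  unfold Ex
  have : (s.card : ℝ) ≠ 0 := by exact_mod_cast hs.card_pos.ne'
  rw [Finset.sum_const, nsmul_eq_mul, mul_div_cancel_left₀ _ this]

lemma Ex_nonneg {F : α → ℝ} (h : ∀ a ∈ s, 0 ≤ F a) : 0 ≤ Ex s F := by
  unfold Ex; exact div_nonneg (Finset.sum_nonneg h) (by positivity)

lemma Ex_sum (I : Finset β) (F : β → α → ℝ) :
    Ex s (fun a => ∑ i ∈ I, F i a) = ∑ i ∈ I, Ex s (F i) := by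
  unfold Ex; rw [Finset.sum_comm, Finset.sum_div]

lemma Ex_le_const (hs : s.Nonempty) {F : α → ℝ} {c : ℝ} (h : ∀ a ∈ s, F a ≤ c) : Ex s F ≤ c := by
  rw [← Ex_const hs c]; exact Ex_mono h

lemma const_le_Ex (hs : s.Nonempty) {F : α → ℝ} {c : ℝ} (h : ∀ a ∈ s, c ≤ F a) : c ≤ Ex s F := by
  rw [← Ex_const hs c]; exact Ex_mono h

/-- Cauchy–Schwarz. -/
lemma Ex_cs (F G : α → ℝ) :
    (Ex s fun a => F a * G a) ^ 2 ≤ (Ex s fun a => F a ^ 2) * Ex s fun a => G a ^ 2 := by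
  unfold Ex
  rw [div_pow, div_mul_div_comm, ← sq]
  gcongr
  exact Finset.sum_mul_sq_le_sq_mul_sq s F G

/-- The tower property for a partition of `s` into classes. -/
lemma Ex_tower (cl : α → Finset α) (h1 : ∀ a ∈ s, a ∈ cl a) (h2 : ∀ a ∈ s, cl a ⊆ s)
    (h3 : ∀ a ∈ s, ∀ b ∈ cl a, cl b = cl a) (F : α → ℝ) :
    Ex s F = Ex s (fun a => Ex (cl a) F) := by
  classical
  unfold Ex
  congr 1
  have : ∀ a ∈ s, (∑ b ∈ cl a, F b) / ((cl a).card : ℝ)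
      = ∑ b ∈ s, if b ∈ cl a then F b / (cl b).card else 0 := by
    intro a ha
    rw [← Finset.sum_filter, Finset.sum_div]
    have e : s.filter (fun b => b ∈ cl a) = cl a := by
      ext b; simp only [Finset.mem_filter]; exact ⟨fun h => h.2, fun h => ⟨h2 a ha h, h⟩⟩
    rw [e]
    exact Finset.sum_congr rfl fun b hb => by rw [h3 a ha b hb]
  rw [Finset.sum_congr rfl this, Finset.sum_comm]
  refine Finset.sum_congr rfl fun b hb => ?_
  have e : ∀ a ∈ s, (if b ∈ cl a then F b / ((cl b).card : ℝ) else 0)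
      = if a ∈ cl b then F b / ((cl b).card : ℝ) else 0 := by
    intro a ha
    have : b ∈ cl a ↔ a ∈ cl b :=
      ⟨fun h => by rw [h3 a ha b h]; exact h1 a ha, fun h => by rw [h3 b hb a h]; exact h1 b hb⟩
    simp only [this]
  rw [Finset.sum_congr rfl e, ← Finset.sum_filter]
  have e : s.filter (fun a => a ∈ cl b) = cl b := by
    ext a; simp only [Finset.mem_filter]; exact ⟨fun h => h.2, fun h => ⟨h2 b hb h, h⟩⟩
  rw [e, Finset.sum_const, nsmul_eq_mul]
  have : ((cl b).card : ℝ) ≠ 0 := by exact_mod_cast (Finset.card_pos.2 ⟨b, h1 b hb⟩).ne'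
  field_simp

lemma Ex_prod {t : Finset β} (F : α × β → ℝ) :
    Ex (s ×ˢ t) F = Ex s (fun a => Ex t (fun b => F (a, b))) := by
  unfold Ex
  rw [Finset.sum_product, ← Finset.sum_div, div_div, Finset.card_product]
  push_cast; rw [mul_comm (s.card : ℝ)]

lemma Ex_comm {t : Finset β} (F : α → β → ℝ) :
    Ex s (fun a => Ex t (fun b => F a b)) = Ex t (fun b => Ex s (fun a => F a b)) := by
  unfold Ex
  rw [← Finset.sum_div, ← Finset.sum_div, Finset.sum_comm, div_div, div_div, mul_comm]

/-- Positive association of the uniform measure on `s` for the relation `r`. -/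
def PA (s : Finset α) (r : α → α → Prop) : Prop :=
  ∀ F G : α → ℝ, (∀ a, 0 ≤ F a) → (∀ a, 0 ≤ G a) → (∀ a b, r a b → F a ≤ F b) →
    (∀ a b, r a b → G a ≤ G b) → Ex s F * Ex s G ≤ Ex s (fun a => F a * G a)

/-- Stochastic domination of uniform measures for the relation `r`. -/
def SD (s t : Finset α) (r : α → α → Prop) : Prop :=
  ∀ F : α → ℝ, (∀ a b, r a b → F a ≤ F b) → Ex s F ≤ Ex t F

lemma PA.flip {r : α → α → Prop} (hs : s.Nonempty) (h : PA s r) :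
    ∀ F G : α → ℝ, (∀ a, 0 ≤ F a ∧ F a ≤ 1) → (∀ a, 0 ≤ G a ∧ G a ≤ 1) →
    (∀ a b, r a b → F b ≤ F a) → (∀ a b, r a b → G b ≤ G a) →
    Ex s F * Ex s G ≤ Ex s (fun a => F a * G a) := by
  intro F G hF hG mF mG
  have := h (fun a => 1 - F a) (fun a => 1 - G a) (fun a => by linarith [hF a])
    (fun a => by linarith [hG a]) (fun a b hab => by linarith [mF a b hab])
    (fun a b hab => by linarith [mG a b hab])
  have e : (fun a => (1 - F a) * (1 - G a)) = fun a => (1 - F a) - (G a - F a * G a) := by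
    funext a; ring
  rw [e, Ex_sub, Ex_sub, Ex_sub, Ex_sub, Ex_sub, Ex_const hs] at this
  nlinarith

lemma PA.prod_inc {r : α → α → Prop} (hs : s.Nonempty) (h : PA s r) (I : Finset β)
    (F : β → α → ℝ) (hF : ∀ i a, 0 ≤ F i a) (mF : ∀ i a b, r a b → F i a ≤ F i b) :
    ∏ i ∈ I, Ex s (F i) ≤ Ex s (fun a => ∏ i ∈ I, F i a) := by
  classical
  induction I using Finset.induction_on with
  | empty => simp [Ex_const hs]
  | insert i I hi ih =>
    simp only [Finset.prod_insert hi]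
    refine le_trans (mul_le_mul_of_nonneg_left ih (Ex_nonneg fun a _ => hF i a)) ?_
    exact h _ _ (hF i) (fun a => Finset.prod_nonneg fun j _ => hF j a) (mF i)
      (fun a b hab => Finset.prod_le_prod (fun j _ => hF j a) fun j _ => mF j a b hab)

lemma PA.prod_dec {r : α → α → Prop} (hs : s.Nonempty) (h : PA s r) (I : Finset β)
    (F : β → α → ℝ) (hF : ∀ i a, 0 ≤ F i a ∧ F i a ≤ 1) (mF : ∀ i a b, r a b → F i b ≤ F i a) :
    ∏ i ∈ I, Ex s (F i) ≤ Ex s (fun a => ∏ i ∈ I, F i a) := by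
  classical
  induction I using Finset.induction_on with
  | empty => simp [Ex_const hs]
  | insert i I hi ih =>
    simp only [Finset.prod_insert hi]
    refine le_trans (mul_le_mul_of_nonneg_left ih (Ex_nonneg fun a _ => (hF i a).1)) ?_
    exact h.flip hs _ _ (hF i) (fun a => ⟨Finset.prod_nonneg fun j _ => (hF j a).1,
        Finset.prod_le_one (fun j _ => (hF j a).1) fun j _ => (hF j a).2⟩) (mF i)
      (fun a b hab => Finset.prod_le_prod (fun j _ => (hF j b).1) fun j _ => mF j a b hab)

/-- A product of positively associated measures is positively associated: condition on the first
coordinate and apply positive association in each factor in turn. -/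
lemma PA.prod {t : Finset β} {r : α → α → Prop} {r' : β → β → Prop} (h : PA s r) (h' : PA t r')
    (rr : ∀ a, r a a) (rr' : ∀ b, r' b b) :
    PA (s ×ˢ t) (fun x y => r x.1 y.1 ∧ r' x.2 y.2) := by
  intro F G hF hG mF mG
  rw [Ex_prod, Ex_prod, Ex_prod]
  refine le_trans (h (fun a => Ex t fun b => F (a, b)) (fun a => Ex t fun b => G (a, b))
    (fun a => Ex_nonneg fun b _ => hF _) (fun a => Ex_nonneg fun b _ => hG _)
    (fun a b hab => Ex_mono fun c _ => mF _ _ ⟨hab, rr' c⟩)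
    (fun a b hab => Ex_mono fun c _ => mG _ _ ⟨hab, rr' c⟩)) ?_
  exact Ex_mono fun a _ => h' _ _ (fun b => hF _) (fun b => hG _)
    (fun b c hbc => mF _ _ ⟨rr a, hbc⟩) (fun b c hbc => mG _ _ ⟨rr a, hbc⟩)

/-- Stochastic domination passes to product measures, one coordinate at a time. -/
lemma SD.prod {s' : Finset α} {t t' : Finset β} {r : α → α → Prop} {r' : β → β → Prop}
    (h : SD s s' r) (h' : SD t t' r') (rr : ∀ a, r a a) (rr' : ∀ b, r' b b) :
    SD (s ×ˢ t) (s' ×ˢ t') (fun x y => r x.1 y.1 ∧ r' x.2 y.2) := by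
  intro F mF
  rw [Ex_prod, Ex_prod]
  refine le_trans (h (fun a => Ex t fun b => F (a, b))
    (fun a b hab => Ex_mono fun c _ => mF _ _ ⟨hab, rr' c⟩)) ?_
  exact Ex_mono fun a _ => h' _ (fun b c hbc => mF _ _ ⟨rr a, hbc⟩)

end

section
variable {α : Type*} [DistribLattice α]

/-- Holley's inequality for two weights on finite sets. -/
lemma holley_nonneg (s t : Finset α) (w1 w2 : α → ℝ) (h1 : ∀ a, 0 ≤ w1 a) (h2 : ∀ a, 0 ≤ w2 a)
    (hst : ∀ a ∈ s, ∀ b ∈ t, a ⊓ b ∈ s ∧ a ⊔ b ∈ t ∧ w1 a * w2 b ≤ w1 (a ⊓ b) * w2 (a ⊔ b))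
    (F : α → ℝ) (hF : ∀ a, 0 ≤ F a) (mF : ∀ a ∈ s, ∀ b, a ≤ b → F a ≤ F b) :
    (∑ a ∈ s, w1 a * F a) * (∑ b ∈ t, w2 b) ≤ (∑ a ∈ s, w1 a) * ∑ b ∈ t, w2 b * F b := by
  classical
  have key := four_functions_theorem (α := α) (β := ℝ)
    (f₁ := fun a => if a ∈ s then w1 a * F a else 0) (f₂ := fun b => if b ∈ t then w2 b else 0)
    (f₃ := fun a => if a ∈ s then w1 a else 0) (f₄ := fun b => if b ∈ t then w2 b * F b else 0)
    (fun a => by dsimp only [Pi.zero_apply]; split_ifs <;> first | exact mul_nonneg (h1 a) (hF a) | exact le_rfl)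
    (fun a => by dsimp only [Pi.zero_apply]; split_ifs <;> first | exact h2 a | exact le_rfl)
    (fun a => by dsimp only [Pi.zero_apply]; split_ifs <;> first | exact h1 a | exact le_rfl)
    (fun a => by dsimp only [Pi.zero_apply]; split_ifs <;> first | exact mul_nonneg (h2 a) (hF a) | exact le_rfl)
    (fun a b => by
      by_cases ha : a ∈ s
      · by_cases hb : b ∈ t
        · obtain ⟨p1, p2, p3⟩ := hst a ha b hb
          rw [if_pos ha, if_pos hb, if_pos p1, if_pos p2]
          calc w1 a * F a * w2 b = (w1 a * w2 b) * F a := by ring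
            _ ≤ (w1 (a ⊓ b) * w2 (a ⊔ b)) * F (a ⊔ b) :=
                mul_le_mul p3 (mF a ha _ le_sup_left) (hF a) (mul_nonneg (h1 _) (h2 _))
            _ = _ := by ring
        · rw [if_neg hb, mul_zero]
          apply mul_nonneg <;> split_ifs <;>
            first | exact h1 _ | exact mul_nonneg (h2 _) (hF _) | exact le_rfl
      · rw [if_neg ha, zero_mul]
        apply mul_nonneg <;> split_ifs <;>
          first | exact h1 _ | exact mul_nonneg (h2 _) (hF _) | exact le_rfl)
    s t
  have e1 : ∀ (u : Finset α) (w : α → ℝ), ∑ a ∈ u, (if a ∈ u then w a else 0) = ∑ a ∈ u, w a :=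
    fun u w => Finset.sum_congr rfl fun a ha => if_pos ha
  rw [e1 s, e1 t] at key
  refine key.trans (mul_le_mul ?_ ?_ ?_ ?_)
  · rw [← Finset.sum_filter]
    refine Finset.sum_le_sum_of_subset_of_nonneg ?_ fun a _ _ => h1 a
    intro a ha; exact (Finset.mem_filter.1 ha).2
  · rw [← Finset.sum_filter]
    refine Finset.sum_le_sum_of_subset_of_nonneg ?_ fun a _ _ => mul_nonneg (h2 a) (hF a)
    intro a ha; exact (Finset.mem_filter.1 ha).2
  · refine Finset.sum_nonneg fun a _ => ?_
    split_ifs <;> first | exact mul_nonneg (h2 _) (hF _) | exact le_rfl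
  · exact Finset.sum_nonneg fun a _ => h1 a

/-- Holley's inequality for increasing functions of arbitrary sign. -/
lemma holley' (s t : Finset α) (w1 w2 : α → ℝ) (h1 : ∀ a, 0 ≤ w1 a) (h2 : ∀ a, 0 ≤ w2 a)
    (hst : ∀ a ∈ s, ∀ b ∈ t, a ⊓ b ∈ s ∧ a ⊔ b ∈ t ∧ w1 a * w2 b ≤ w1 (a ⊓ b) * w2 (a ⊔ b))
    (F : α → ℝ) (mF : ∀ a b, a ≤ b → F a ≤ F b) :
    (∑ a ∈ s, w1 a * F a) * (∑ b ∈ t, w2 b) ≤ (∑ a ∈ s, w1 a) * ∑ b ∈ t, w2 b * F b := by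
  classical
  -- truncate `F` from below so that the nonnegative version applies
  obtain ⟨c, hc⟩ : ∃ c : ℝ, ∀ a ∈ s ∪ t, c ≤ F a := by
    rcases (s ∪ t).eq_empty_or_nonempty with h | h
    · exact ⟨0, by simp [h]⟩
    · exact ⟨(s ∪ t).inf' h F, fun a ha => Finset.inf'_le F ha⟩
  have := holley_nonneg s t w1 w2 h1 h2 hst (fun a => max (F a - c) 0)
    (fun a => le_max_right _ _) (fun a _ b hab => max_le_max (by linarith [mF a b hab]) le_rfl)
  have e : ∀ u ⊆ s ∪ t, ∀ w : α → ℝ, ∑ a ∈ u, w a * max (F a - c) 0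
      = (∑ a ∈ u, w a * F a) - c * ∑ a ∈ u, w a := by
    intro u hu w
    rw [Finset.mul_sum, ← Finset.sum_sub_distrib]
    refine Finset.sum_congr rfl fun a ha => ?_
    rw [max_eq_left (by linarith [hc a (hu ha)])]; ring
  rw [e s Finset.subset_union_left, e t Finset.subset_union_right] at this
  nlinarith

/-- The Harris–FKG inequality for a log-supermodular weight on a finite sublattice. -/
lemma harris' (s : Finset α) (w : α → ℝ) (h1 : ∀ a, 0 ≤ w a)
    (hs : ∀ a ∈ s, ∀ b ∈ s, a ⊓ b ∈ s ∧ a ⊔ b ∈ s ∧ w a * w b ≤ w (a ⊓ b) * w (a ⊔ b))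
    (F G : α → ℝ) (hG : ∀ a, 0 ≤ G a) (mF : ∀ a b, a ≤ b → F a ≤ F b)
    (mG : ∀ a b, a ≤ b → G a ≤ G b) :
    (∑ a ∈ s, w a * F a) * (∑ b ∈ s, w b * G b) ≤ (∑ a ∈ s, w a) * ∑ b ∈ s, w b * (F b * G b) := by
  have := holley' s s w (fun a => w a * G a) h1 (fun a => mul_nonneg (h1 a) (hG a))
    (fun a ha b hb => ?_) F mF
  · refine this.trans (le_of_eq ?_)
    congr 1; exact Finset.sum_congr rfl fun a _ => by ring
  · obtain ⟨p1, p2, p3⟩ := hs a ha b hb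
    refine ⟨p1, p2, ?_⟩
    calc w a * (w b * G b) = (w a * w b) * G b := by ring
      _ ≤ (w (a ⊓ b) * w (a ⊔ b)) * G (a ⊔ b) :=
          mul_le_mul p3 (mG _ _ le_sup_right) (hG b) (mul_nonneg (h1 _) (h1 _))
      _ = _ := by ring

end

/-- Monotonicity in the boundary condition. -/
lemma Om_SD {U : Finset P} {ξ ξ' : P → ℤ} (h : isHom ξ) (h' : isHom ξ')
    (le : ∀ v, v ∉ U → ξ v ≤ ξ' v) : SD (Om U ξ) (Om U ξ') (· ≤ ·) := by
  intro F mF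
  have := holley' (Om U ξ) (Om U ξ') (fun _ => 1) (fun _ => 1) (by simp) (by simp)
    (fun a ha b hb => ?_) F mF
  · simp only [one_mul, Finset.sum_const, nsmul_eq_mul, mul_one] at this
    unfold Ex
    have p1 : (0 : ℝ) < (Om U ξ).card := by exact_mod_cast (Om_nonempty h).card_pos
    have p2 : (0 : ℝ) < (Om U ξ').card := by exact_mod_cast (Om_nonempty h').card_pos
    rw [div_le_div_iff₀ p1 p2]; linarith
  · rw [mem_Om] at ha hb
    refine ⟨mem_Om.2 ⟨ha.1.inf hb.1, fun v hv => ?_⟩, mem_Om.2 ⟨ha.1.sup hb.1, fun v hv => ?_⟩, le_rfl⟩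
    · rw [Pi.inf_apply, ha.2 v hv, hb.2 v hv, inf_eq_left.2 (le v hv)]
    · rw [Pi.sup_apply, ha.2 v hv, hb.2 v hv, sup_eq_right.2 (le v hv)]

/-- The FKG inequality for the uniform measure on height functions: the pointwise minimum and
maximum of two height functions are height functions. -/
lemma Om_PA {U : Finset P} {ξ : P → ℤ} (h : isHom ξ) : PA (Om U ξ) (· ≤ ·) := by
  intro F G _ hG mF mG
  have := harris' (Om U ξ) (fun _ => 1) (by simp) (fun a ha b hb => ?_) F G hG mF mG
  · simp only [one_mul, Finset.sum_const, nsmul_eq_mul, mul_one] at this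
    unfold Ex
    have p1 : (0 : ℝ) < (Om U ξ).card := by exact_mod_cast (Om_nonempty h).card_pos
    rw [div_mul_div_comm, div_le_div_iff₀ (by positivity) p1]
    nlinarith
  · rw [mem_Om] at ha hb
    refine ⟨mem_Om.2 ⟨ha.1.inf hb.1, fun v hv => ?_⟩, mem_Om.2 ⟨ha.1.sup hb.1, fun v hv => ?_⟩, le_rfl⟩
    · rw [Pi.inf_apply, ha.2 v hv, hb.2 v hv, inf_idem]
    · rw [Pi.sup_apply, ha.2 v hv, hb.2 v hv, sup_idem]

/-! ### Positive association of absolute values -/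

open Classical in
/-- Sign patterns on the odd vertices of `U`. -/
def Sg (U : Finset P) : Finset (P → ℤˣ) :=
  (Set.Finite.of_finite_image (s := {s : P → ℤˣ | (∀ v, v ∉ U → s v = 1) ∧
      ∀ v : P, (v.1 + v.2) % 2 = 0 → s v = 1})
    (f := fun s (v : U) => s v.1) (Set.toFinite _) (by
      rintro s ⟨hs, -⟩ t ⟨ht, -⟩ e
      funext v
      by_cases hv : v ∈ U
      · exact congrFun e ⟨v, hv⟩
      · rw [hs v hv, ht v hv])).toFinset

lemma mem_Sg {U : Finset P} {s : P → ℤˣ} :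
    s ∈ Sg U ↔ (∀ v, v ∉ U → s v = 1) ∧ ∀ v : P, (v.1 + v.2) % 2 = 0 → s v = 1 := by
  simp [Sg]

open Classical in
/-- The group of sign patterns compatible with the absolute value `f`: the clusters of odd vertices
joined through even vertices where `f > 0` receive a common sign, which is `+` for clusters
touching a positive vertex off `U`. These patterns are in bijection with the signed height functions
of absolute value `f`. -/
def Kg (U : Finset P) (f : P → ℤ) : Finset (P → ℤˣ) :=
  (Sg U).filter fun s => (∀ v : P, (v.1 + v.2) % 2 = 0 → 0 < f v →
    (∀ u u', adj2 v u → adj2 v u' → s u = s u') ∧ (v ∉ U → ∀ u, adj2 v u → s u = 1))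

lemma mem_Kg {U : Finset P} {f : P → ℤ} {s : P → ℤˣ} :
    s ∈ Kg U f ↔ s ∈ Sg U ∧ (∀ v : P, (v.1 + v.2) % 2 = 0 → 0 < f v →
    (∀ u u', adj2 v u → adj2 v u' → s u = s u') ∧ (v ∉ U → ∀ u, adj2 v u → s u = 1)) := by
  simp [Kg]

lemma Kg_mul {U : Finset P} {f g : P → ℤ} {s t : P → ℤˣ} (hs : s ∈ Kg U f) (ht : t ∈ Kg U g) :
    s * t ∈ Kg U (f ⊓ g) := by
  simp only [mem_Kg, mem_Sg] at *
  refine ⟨⟨fun v hv => ?_, fun v hv => ?_⟩, fun v hv h0 => ?_⟩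
  · simp [hs.1.1 v hv, ht.1.1 v hv]
  · simp [hs.1.2 v hv, ht.1.2 v hv]
  · obtain ⟨h1, h2⟩ := lt_min_iff.1 h0
    obtain ⟨a1, a2⟩ := hs.2 v hv h1
    obtain ⟨b1, b2⟩ := ht.2 v hv h2
    refine ⟨fun u u' hu hu' => ?_, fun hv' u hu => ?_⟩
    · simp [a1 u u' hu hu', b1 u u' hu hu']
    · simp [a2 hv' u hu, b2 hv' u hu]

lemma Kg_inter {U : Finset P} {f g : P → ℤ} {s : P → ℤˣ} (hs : s ∈ Kg U f) (ht : s ∈ Kg U g) :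
    s ∈ Kg U (f ⊔ g) := by
  simp only [mem_Kg] at *
  refine ⟨hs.1, fun v hv h0 => ?_⟩
  rcases lt_max_iff.1 h0 with h | h
  · exact hs.2 v hv h
  · exact ht.2 v hv h

lemma Kg_self_mul {U : Finset P} {f : P → ℤ} {s t : P → ℤˣ} (hs : s ∈ Kg U f) (ht : t ∈ Kg U f) :
    s * t ∈ Kg U f := by
  simpa using Kg_mul hs ht

lemma units_sq (s : P → ℤˣ) : s * s = 1 := by
  funext v; exact Int.units_mul_self _

/-- The product formula for subgroups gives log-supermodularity. -/
lemma Kg_supermod (U : Finset P) (f g : P → ℤ) :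
    ((Kg U f).card : ℝ) * (Kg U g).card ≤ (Kg U (f ⊓ g)).card * (Kg U (f ⊔ g)).card := by
  classical
  have h := Finset.card_le_mul_card_image (f := fun p : (P → ℤˣ) × (P → ℤˣ) => p.1 * p.2)
    (Kg U f ×ˢ Kg U g) (Kg U (f ⊔ g)).card ?_
  · rw [Finset.card_product] at h
    have h2 : ((Kg U f ×ˢ Kg U g).image fun p => p.1 * p.2).card ≤ (Kg U (f ⊓ g)).card := by
      refine Finset.card_le_card ?_
      intro x hx
      obtain ⟨p, hp, rfl⟩ := Finset.mem_image.1 hx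
      rw [Finset.mem_product] at hp
      exact Kg_mul hp.1 hp.2
    have := h.trans (Nat.mul_le_mul_left _ h2)
    rw [mul_comm (Kg U (f ⊔ g)).card] at this
    exact_mod_cast this
  · intro x hx
    obtain ⟨⟨s0, t0⟩, hp, rfl⟩ := Finset.mem_image.1 hx
    rw [Finset.mem_product] at hp
    refine Finset.card_le_card_of_injOn (fun p => p.1 * s0) ?_ ?_
    · rintro ⟨s, t⟩ hst
      simp only [Finset.coe_filter, Finset.mem_product, Set.mem_ofPred_eq] at hst
      obtain ⟨⟨h1, h2⟩, h3⟩ := hst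
      refine Kg_inter (Kg_self_mul h1 hp.1) ?_
      have : s * s0 = t0 * t := by
        have : (s * t) * (s0 * t) = (s0 * t0) * (s0 * t) := by rw [h3]
        calc s * s0 = (s * t) * (s0 * t) := by
              rw [mul_mul_mul_comm, units_sq t, mul_one]
          _ = (s0 * t0) * (s0 * t) := this
          _ = t0 * t := by rw [mul_mul_mul_comm, units_sq s0, one_mul]
      simp only [this]
      exact Kg_self_mul hp.2 h2
    · rintro ⟨s, t⟩ hst ⟨s', t'⟩ hst' e
      simp only [Finset.coe_filter, Finset.mem_product, Set.mem_ofPred_eq] at hst hst' e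
      have e1 : s = s' := mul_right_cancel e
      subst e1
      have e2 := hst.2.trans hst'.2.symm
      rw [mul_left_cancel e2]

/-- `D` is an even domain: its outer boundary consists of even vertices. -/
def EvenDom (D : Finset P) : Prop :=
  ∀ u v, u ∈ D → v ∉ D → adj2 u v → (v.1 + v.2) % 2 = 0

lemma Kg_card_prod {D U : Finset P} (hD : EvenDom D) (hU : D ⊆ U) {f : P → ℤ}
    (hf : ∀ v, v ∉ D → f v = xi0 v) :
    (Kg U f).card = (Sg (U \ D)).card * (Kg D f).card := by
  classical
  rw [← Finset.card_product]
  have odd_nb : ∀ v u : P, (v.1 + v.2) % 2 = 0 → 0 < f v → adj2 v u → v ∈ D ∧ u ∈ D := by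
    intro v u hv h0 a
    have hvD : v ∈ D := by
      by_contra h; rw [hf v h] at h0; simp only [xi0] at h0; omega
    refine ⟨hvD, ?_⟩
    by_contra h
    have := hD v u hvD h a
    rw [adj2_iff] at a; omega
  refine Finset.card_bij' (fun s _ => (fun v => if v ∈ D then 1 else s v,
    fun v => if v ∈ D then s v else 1)) (fun p _ => p.1 * p.2) ?_ ?_ ?_ ?_
  · intro s hs
    simp only [Finset.mem_product, mem_Kg, mem_Sg] at *
    refine ⟨⟨fun v hv => ?_, fun v hv => ?_⟩, ⟨fun v hv => ?_, fun v hv => ?_⟩, fun v hv h0 => ?_⟩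
    · split_ifs with h
      · rfl
      · exact hs.1.1 v (fun c => hv (by simp [c, h]))
    · split_ifs with h
      · rfl
      · exact hs.1.2 v hv
    · simp [hv]
    · split_ifs with h
      · exact hs.1.2 v hv
      · rfl
    · refine ⟨fun u u' hu hu' => ?_, fun hv' u hu => ?_⟩
      · rw [if_pos (odd_nb v u hv h0 hu).2, if_pos (odd_nb v u' hv h0 hu').2]
        exact (hs.2 v hv h0).1 u u' hu hu'
      · exact absurd (odd_nb v u hv h0 hu).1 hv'
  · rintro ⟨s, t⟩ hst
    simp only [Finset.mem_product, mem_Kg, mem_Sg] at *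
    obtain ⟨⟨a1, a2⟩, ⟨b1, b2⟩, b3⟩ := hst
    refine ⟨⟨fun v hv => ?_, fun v hv => ?_⟩, fun v hv h0 => ⟨fun u u' hu hu' => ?_, fun hv' u hu => ?_⟩⟩
    · simp [a1 v (by simp [hv]), b1 v (fun c => hv (hU c))]
    · simp [a2 v hv, b2 v hv]
    · have k1 := (odd_nb v u hv h0 hu).2
      have k2 := (odd_nb v u' hv h0 hu').2
      simp [a1 u (by simp [k1]), a1 u' (by simp [k2]), (b3 v hv h0).1 u u' hu hu']
    · exact absurd (hU (odd_nb v u hv h0 hu).1) hv'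
  · intro s hs; funext v; simp only [Pi.mul_apply]; split_ifs <;> simp
  · rintro ⟨s, t⟩ hst
    simp only [Finset.mem_product, mem_Kg, mem_Sg] at hst
    obtain ⟨⟨a1, a2⟩, ⟨b1, b2⟩, b3⟩ := hst
    refine Prod.ext ?_ ?_ <;> funext v <;> simp only [Pi.mul_apply] <;> split_ifs with h
    · rw [a1 v (by simp [h])]
    · rw [b1 v h, mul_one]
    · rw [a1 v (by simp [h]), one_mul]
    · rw [b1 v h]

/-- A chosen neighbour to the right. -/
def nbr (v : P) : P := (v.1 + 1, v.2)
lemma adj2_nbr (v : P) : adj2 v (nbr v) := adj2_iff.2 (by simp [nbr])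

lemma isHom.odd_ne {f : P → ℤ} (hf : isHom f) {v : P} (hv : (v.1 + v.2) % 2 ≠ 0) : f v ≠ 0 := by
  have := hf.1 v; intro h; omega

/-- The sign of an integer as a unit, with value `1` at zero. -/
def sgu (n : ℤ) : ℤˣ := if n < 0 then -1 else 1

lemma sgu_mul_abs (n : ℤ) : (sgu n : ℤ) * |n| = n := by
  unfold sgu; split_ifs with h
  · rw [abs_of_neg h]; simp
  · rw [abs_of_nonneg (by omega)]; simp

lemma sgu_eq_of_close {a b : ℤ} (ha : a ≠ 0) (hb : b ≠ 0) (h : a - b ≤ 1) (h' : b - a ≤ 1) :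
    sgu a = sgu b := by
  unfold sgu; split_ifs <;> first | rfl | omega

lemma sgu_unit_mul (s : ℤˣ) {n : ℤ} (h : 0 < n) : sgu (s * n) = s := by
  unfold sgu
  rcases Int.units_eq_one_or s with rfl | rfl
  · rw [if_neg (by push_cast; omega)]
  · rw [if_pos (by push_cast; omega)]

open Classical in
lemma card_abs_fiber {U : Finset P} {f : P → ℤ} (hf : isHom f) (f0 : ∀ v, 0 ≤ f v) :
    ((Om U f).filter fun h : P → ℤ => (fun v => |h v|) = f).card = (Kg U f).card := by
  classical
  refine Finset.card_bij' (fun h _ v => if (v.1 + v.2) % 2 = 0 then 1 else sgu (h v))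
    (fun s _ v => (if (v.1 + v.2) % 2 = 0 then (s (nbr v) : ℤ) else (s v : ℤ)) * f v) ?_ ?_ ?_ ?_
  · intro h hh
    rw [Finset.mem_filter, mem_Om] at hh
    obtain ⟨⟨h1, h2⟩, h3⟩ := hh
    have h3' : ∀ v, |h v| = f v := congrFun h3
    rw [mem_Kg, mem_Sg]
    refine ⟨⟨fun v hv => ?_, fun v hv => if_pos hv⟩, fun v hv h0 => ?_⟩
    · split_ifs with e
      · rfl
      · rw [h2 v hv]; unfold sgu; rw [if_neg (by have := f0 v; omega)]
    · have key : ∀ u, adj2 v u → (if (u.1 + u.2) % 2 = 0 then 1 else sgu (h u)) = sgu (h v) := by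
        intro u a
        have ou : (u.1 + u.2) % 2 ≠ 0 := by rw [adj2_iff] at a; omega
        rw [if_neg ou]
        refine sgu_eq_of_close (h1.odd_ne ou) ?_ (h1.2 u v (adj2_symm a)) (h1.2 v u a)
        intro e; have := h3' v; rw [e, abs_zero] at this; omega
      refine ⟨fun u u' hu hu' => by rw [key u hu, key u' hu'], fun hv' u hu => ?_⟩
      rw [key u hu, h2 v hv']; unfold sgu; rw [if_neg (by omega)]
  · intro s hs
    rw [mem_Kg, mem_Sg] at hs
    obtain ⟨⟨s1, s2⟩, s3⟩ := hs
    rw [Finset.mem_filter, mem_Om]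
    -- across an edge from an even vertex, the two signs agree unless the height vanishes
    have key : ∀ v u : P, adj2 v u → (v.1 + v.2) % 2 = 0 →
        (s (nbr v) : ℤ) * f v = s u * f v := by
      intro v u a hv
      rcases (f0 v).eq_or_lt with h | h
      · rw [← h]; simp
      · rw [(s3 v hv h).1 _ u (adj2_nbr v) a]
    have bd : ∀ (t : ℤˣ) (a b : ℤ), a - b ≤ 1 → b - a ≤ 1 → (t : ℤ) * a - t * b ≤ 1 := by
      intro t a b _ _
      rcases Int.units_eq_one_or t with rfl | rfl <;> push_cast <;> omega
    refine ⟨⟨⟨fun v => ?_, fun u v a => ?_⟩, fun v hv => ?_⟩, ?_⟩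
    · have := hf.1 v
      dsimp only
      split_ifs with e
      · rcases Int.units_eq_one_or (s (nbr v)) with h | h <;> rw [h] <;> push_cast <;> omega
      · rcases Int.units_eq_one_or (s v) with h | h <;> rw [h] <;> push_cast <;> omega
    · have b1 := hf.2 u v a
      have b2 := hf.2 v u (adj2_symm a)
      dsimp only
      by_cases e : (v.1 + v.2) % 2 = 0
      · have e' : ¬ (u.1 + u.2) % 2 = 0 := by rw [adj2_iff] at a; omega
        rw [if_pos e, if_neg e', key v u (adj2_symm a) e]
        exact bd _ _ _ b1 b2
      · have e' : (u.1 + u.2) % 2 = 0 := by rw [adj2_iff] at a; omega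
        rw [if_neg e, if_pos e', key u v a e']
        exact bd _ _ _ b1 b2
    · split_ifs with e
      · rcases (f0 v).eq_or_lt with h | h
        · rw [← h]; simp
        · rw [(s3 v e h).2 hv _ (adj2_nbr v)]; simp
      · rw [s1 v hv]; simp
    · funext v
      dsimp only
      have : ∀ t : ℤˣ, |(t : ℤ) * f v| = f v := by
        intro t
        rcases Int.units_eq_one_or t with rfl | rfl <;> simp [abs_of_nonneg (f0 v)]
      split_ifs <;> exact this _
  · intro h hh
    rw [Finset.mem_filter, mem_Om] at hh
    obtain ⟨⟨h1, h2⟩, h3⟩ := hh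
    have h3' : ∀ v, |h v| = f v := congrFun h3
    funext v
    by_cases e : (v.1 + v.2) % 2 = 0
    · have ou : ¬ ((nbr v).1 + (nbr v).2) % 2 = 0 := by simp only [nbr]; omega
      simp only [if_pos e, if_neg ou]
      by_cases hz : h v = 0
      · have := h3' v; rw [hz, abs_zero] at this; rw [← this, hz, mul_zero]
      · rw [sgu_eq_of_close (h1.odd_ne ou) hz (h1.2 _ _ (adj2_symm (adj2_nbr v)))
          (h1.2 _ _ (adj2_nbr v)), ← h3' v, sgu_mul_abs]
    · simp only [if_neg e]
      rw [← h3' v, sgu_mul_abs]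
  · intro s hs
    rw [mem_Kg, mem_Sg] at hs
    funext v
    dsimp only
    by_cases e : (v.1 + v.2) % 2 = 0
    · rw [if_pos e, hs.1.2 v e]
    · rw [if_neg e, if_neg e]
      exact sgu_unit_mul _ (lt_of_le_of_ne (f0 v) (hf.odd_ne e).symm)

/-- Comparison of absolute values. -/
def absle (h h' : P → ℤ) : Prop := ∀ v, |h v| ≤ |h' v|

lemma isHom.abs {h : P → ℤ} (hh : isHom h) : isHom (fun v => |h v|) := by
  have e : (fun v => |h v|) = h ⊔ -h := by funext v; exact abs_eq_max_neg
  rw [e]; exact hh.sup hh.neg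

lemma isHom.xi0_le {f : P → ℤ} (hf : isHom f) (f0 : ∀ v, 0 ≤ f v) (v : P) : xi0 v ≤ f v := by
  have := hf.1 v; have := f0 v; simp only [xi0]; omega

open Classical in
/-- The class of height functions in `Om U ξ` whose absolute value is `η` off `D'`. -/
def absClass (U D' : Finset P) (ξ η : P → ℤ) : Finset (P → ℤ) :=
  (Om U ξ).filter fun h => ∀ v, v ∉ D' → |h v| = η v

lemma mem_absClass {U D' : Finset P} {ξ η h : P → ℤ} : h ∈ absClass U D' ξ η ↔
    h ∈ Om U ξ ∧ ∀ v, v ∉ D' → |h v| = η v := by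
  simp [absClass]

open Classical in
/-- Summation over a class of signed functions, organised by absolute value. -/
lemma sum_abs_eq {U D' : Finset P} {ξ η : P → ℤ} (ξ0 : ∀ v, 0 ≤ ξ v) (F : (P → ℤ) → ℝ) :
    ∑ h ∈ absClass U D' ξ η, F (fun v => |h v|) =
      ∑ f ∈ (absClass U D' ξ η).filter (fun f => ∀ v, 0 ≤ f v), ((Kg U f).card : ℝ) * F f := by
  rw [← Finset.sum_fiberwise_of_maps_to (s := absClass U D' ξ η)
    (t := (absClass U D' ξ η).filter (fun f => ∀ v, 0 ≤ f v)) (g := fun h v => |h v|)]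
  · refine Finset.sum_congr rfl fun f hf => ?_
    rw [Finset.mem_filter, mem_absClass, mem_Om] at hf
    obtain ⟨⟨⟨f1, f2⟩, f3⟩, f4⟩ := hf
    rw [← card_abs_fiber f1 f4]
    have e : (absClass U D' ξ η).filter (fun h => (fun v => |h v|) = f)
        = (Om U f).filter (fun h => (fun v => |h v|) = f) := by
      ext h
      simp only [Finset.mem_filter, mem_absClass]
      rw [Om_congr f2]
      constructor
      · rintro ⟨⟨a, b⟩, c⟩; exact ⟨a, c⟩
      · rintro ⟨a, c⟩
        refine ⟨⟨a, fun v hv => ?_⟩, c⟩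
        rw [show |h v| = f v from congrFun c v, ← f3 v hv, abs_of_nonneg (f4 v)]
    rw [e, Finset.sum_congr rfl (g := fun _ => F f) (fun h hh => by
      rw [(Finset.mem_filter.1 hh).2]), Finset.sum_const, nsmul_eq_mul]
  · intro h hh
    rw [mem_absClass, mem_Om] at hh
    rw [Finset.mem_filter, mem_absClass, mem_Om]
    refine ⟨⟨⟨hh.1.1.abs, fun v hv => ?_⟩, fun v hv => ?_⟩, fun v => abs_nonneg _⟩
    · rw [hh.1.2 v hv, abs_of_nonneg (ξ0 v)]
    · rw [abs_abs, hh.2 v hv]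

lemma absClass_self {U : Finset P} {ξ η : P → ℤ} (h : ∀ v, v ∉ U → |ξ v| = η v) :
    absClass U U ξ η = Om U ξ := by
  ext g; rw [mem_absClass, mem_Om]
  exact ⟨fun a => a.1, fun a => ⟨a, fun v hv => by rw [a.2 v hv, h v hv]⟩⟩

/-- Stochastic domination of absolute values: a smaller even domain with zero boundary values is
dominated by any class with prescribed absolute values off a larger domain. -/
theorem abs_SD {D D' U : Finset P} {ξ η : P → ℤ} (hD : EvenDom D) (h1 : D ⊆ D') (h2 : D' ⊆ U)
    (ξ0 : ∀ v, 0 ≤ ξ v) (hη : η ∈ Om U ξ) (η0 : ∀ v, 0 ≤ η v) :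
    SD (Om D xi0) (absClass U D' ξ η) absle := by
  classical
  intro F0 mF
  set F : (P → ℤ) → ℝ := fun f => F0 (fun v => max (f v) 0) with hF
  have F_abs : ∀ h, F (fun v => |h v|) = F0 h := fun h =>
    le_antisymm (mF _ _ fun v => by simp) (mF _ _ fun v => by simp)
  have e1 : ∀ (s : Finset (P → ℤ)), Ex s F0 = Ex s (fun h => F (fun v => |h v|)) :=
    fun s => Ex_congr fun h _ => (F_abs h).symm
  rw [e1, e1, ← absClass_self (U := D) (ξ := xi0) (η := xi0)
    (fun v _ => abs_of_nonneg (xi0_nonneg v))]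
  set S := (absClass D D xi0 xi0).filter (fun f => ∀ v, 0 ≤ f v) with hS
  set T := (absClass U D' ξ η).filter (fun f => ∀ v, 0 ≤ f v) with hT
  have memS : ∀ f, f ∈ S → isHom f ∧ (∀ v, v ∉ D → f v = xi0 v) ∧ ∀ v, 0 ≤ f v := by
    intro f hf
    rw [hS, Finset.mem_filter, mem_absClass, mem_Om] at hf
    exact ⟨hf.1.1.1, hf.1.1.2, hf.2⟩
  have hol := holley' S T (fun f => ((Kg U f).card : ℝ)) (fun f => ((Kg U f).card : ℝ))
    (fun _ => by positivity) (fun _ => by positivity) ?_ F ?_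
  · have sums : ∀ G : (P → ℤ) → ℝ, (∑ f ∈ S, ((Kg U f).card : ℝ) * G f)
        = (Sg (U \ D)).card * ∑ h ∈ absClass D D xi0 xi0, G (fun v => |h v|) := by
      intro G
      rw [sum_abs_eq xi0_nonneg, Finset.mul_sum]
      refine Finset.sum_congr rfl fun f hf => ?_
      rw [Kg_card_prod hD (h1.trans h2) (memS f hf).2.1]; push_cast; ring
    have s1 := sums F
    have s2 := sums (fun _ => 1)
    have t1 := sum_abs_eq (U := U) (D' := D') (η := η) ξ0 F
    have t2 := sum_abs_eq (U := U) (D' := D') (η := η) ξ0 (fun _ => 1)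
    simp only [mul_one, Finset.sum_const, nsmul_eq_mul] at s2 t2
    rw [s1, s2, ← t1, ← t2] at hol
    have p1 : (0 : ℝ) < (absClass D D xi0 xi0).card := by
      rw [absClass_self (fun v _ => abs_of_nonneg (xi0_nonneg v))]
      exact_mod_cast (Om_nonempty xi0_isHom).card_pos
    have p2 : (0 : ℝ) < (absClass U D' ξ η).card := by
      exact_mod_cast Finset.card_pos.2 ⟨η, mem_absClass.2 ⟨hη, fun v _ => abs_of_nonneg (η0 v)⟩⟩
    have p3 : (0 : ℝ) < (Sg (U \ D)).card := by
      exact_mod_cast Finset.card_pos.2 ⟨1, mem_Sg.2 (by simp)⟩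
    unfold Ex
    rw [div_le_div_iff₀ p1 p2]
    rw [mul_assoc, mul_assoc] at hol
    have := le_of_mul_le_mul_left hol p3
    linarith
  · intro a ha b hb
    obtain ⟨a1, a2, a3⟩ := memS a ha
    have hb' := hb
    rw [hT, Finset.mem_filter, mem_absClass, mem_Om] at hb'
    obtain ⟨⟨⟨b1, b2⟩, b3⟩, b4⟩ := hb'
    refine ⟨?_, ?_, Kg_supermod U a b⟩
    · rw [hS, Finset.mem_filter, mem_absClass, mem_Om]
      have : ∀ v, v ∉ D → (a ⊓ b) v = xi0 v := fun v hv => by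
        rw [Pi.inf_apply, a2 v hv, inf_eq_left.2 (b1.xi0_le b4 v)]
      exact ⟨⟨⟨a1.inf b1, this⟩, fun v hv => by rw [this v hv, abs_of_nonneg (xi0_nonneg v)]⟩,
        fun v => le_min (a3 v) (b4 v)⟩
    · rw [hT, Finset.mem_filter, mem_absClass, mem_Om]
      have : ∀ v, v ∉ D → (a ⊔ b) v = b v := fun v hv => by
        rw [Pi.sup_apply, a2 v hv, sup_eq_right.2 (b1.xi0_le b4 v)]
      refine ⟨⟨⟨a1.sup b1, fun v hv => ?_⟩, fun v hv => ?_⟩, fun v => le_max_of_le_left (a3 v)⟩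
      · rw [this v (fun c => hv (h2 (h1 c))), b2 v hv]
      · rw [this v (fun c => hv (h1 c)), b3 v hv]
  · intro a b hab
    refine mF _ _ fun v => ?_
    rw [abs_of_nonneg (le_max_right _ _), abs_of_nonneg (le_max_right _ _)]
    exact max_le_max (hab v) le_rfl

/-- Positive association of the absolute value. -/
theorem abs_PA {U : Finset P} {ξ : P → ℤ} (ξh : isHom ξ) (ξ0 : ∀ v, 0 ≤ ξ v) :
    PA (Om U ξ) absle := by
  classical
  intro F0 G0 F00 G00 mF mG
  set F : (P → ℤ) → ℝ := fun f => F0 (fun v => max (f v) 0) with hF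
  set G : (P → ℤ) → ℝ := fun f => G0 (fun v => max (f v) 0) with hG
  have F_abs : ∀ h, F (fun v => |h v|) = F0 h := fun h =>
    le_antisymm (mF _ _ fun v => by simp) (mF _ _ fun v => by simp)
  have G_abs : ∀ h, G (fun v => |h v|) = G0 h := fun h =>
    le_antisymm (mG _ _ fun v => by simp) (mG _ _ fun v => by simp)
  have e : Om U ξ = absClass U U ξ ξ := (absClass_self fun v _ => abs_of_nonneg (ξ0 v)).symm
  have e1 : Ex (Om U ξ) F0 = Ex (Om U ξ) (fun h => F (fun v => |h v|)) :=
    Ex_congr fun h _ => (F_abs h).symm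
  have e2 : Ex (Om U ξ) G0 = Ex (Om U ξ) (fun h => G (fun v => |h v|)) :=
    Ex_congr fun h _ => (G_abs h).symm
  have e3 : Ex (Om U ξ) (fun h => F0 h * G0 h)
      = Ex (Om U ξ) (fun h => (fun f => F f * G f) (fun v => |h v|)) :=
    Ex_congr fun h _ => by dsimp only; rw [F_abs, G_abs]
  rw [e1, e2, e3]
  have mono : ∀ H : (P → ℤ) → ℝ, (∀ a b, absle a b → H a ≤ H b) → ∀ a b : P → ℤ, a ≤ b →
      H (fun v => max (a v) 0) ≤ H (fun v => max (b v) 0) := by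
    intro H mH a b hab
    refine mH _ _ fun v => ?_
    rw [abs_of_nonneg (le_max_right _ _), abs_of_nonneg (le_max_right _ _)]
    exact max_le_max (hab v) le_rfl
  have key := harris' ((Om U ξ).filter fun f => ∀ v, 0 ≤ f v) (fun f => ((Kg U f).card : ℝ))
    (fun _ => by positivity) ?_ F G (fun _ => G00 _) (mono _ mF) (mono _ mG)
  · have t := fun H => sum_abs_eq (U := U) (D' := U) (η := ξ) ξ0 H
    rw [← e] at t
    have p : (0 : ℝ) < (Om U ξ).card := by exact_mod_cast (Om_nonempty ξh).card_pos
    have t0 := t (fun _ => 1)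
    simp only [mul_one, Finset.sum_const, nsmul_eq_mul] at t0
    have tF := t F
    have tG := t G
    have tFG := t (fun f => F f * G f)
    unfold Ex
    rw [div_mul_div_comm, div_le_div_iff₀ (by positivity) p, tF, tG, tFG]
    rw [← t0] at key
    nlinarith
  · intro a ha b hb
    rw [Finset.mem_filter, mem_Om] at ha hb
    refine ⟨?_, ?_, Kg_supermod U a b⟩ <;> rw [Finset.mem_filter, mem_Om]
    · exact ⟨⟨ha.1.1.inf hb.1.1, fun v hv => by
        rw [Pi.inf_apply, ha.1.2 v hv, hb.1.2 v hv, inf_idem]⟩, fun v => le_min (ha.2 v) (hb.2 v)⟩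
    · exact ⟨⟨ha.1.1.sup hb.1.1, fun v hv => by
        rw [Pi.sup_apply, ha.1.2 v hv, hb.1.2 v hv, sup_idem]⟩,
        fun v => le_max_of_le_left (ha.2 v)⟩

/-- Domination of absolute values over nonnegative boundary conditions. -/
lemma abs_SD' {D U : Finset P} {ξ : P → ℤ} (hD : EvenDom D) (h1 : D ⊆ U)
    (ξh : isHom ξ) (ξ0 : ∀ v, 0 ≤ ξ v) : SD (Om D xi0) (Om U ξ) absle := by
  rw [← absClass_self (U := U) (ξ := ξ) (η := ξ) fun v _ => abs_of_nonneg (ξ0 v)]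
  exact abs_SD hD h1 subset_rfl ξ0 (self_mem_Om ξh) ξ0

/-! ### Diamonds, symmetries and bounded variance -/

lemma Dm_finite (z : P) (L : ℤ) : {v : P | dist1 v z < L}.Finite := by
  refine (Set.Finite.prod (Set.finite_Icc (z.1 - L) (z.1 + L))
    (Set.finite_Icc (z.2 - L) (z.2 + L))).subset ?_
  intro v hv
  simp only [Set.mem_ofPred_eq, dist1] at hv
  have h1 := abs_nonneg (v.1 - z.1)
  have h2 := abs_nonneg (v.2 - z.2)
  have h3 := abs_le.1 (show |v.1 - z.1| ≤ L by omega)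
  have h4 := abs_le.1 (show |v.2 - z.2| ≤ L by omega)
  simp only [Set.mem_prod, Set.mem_Icc]; omega

/-- The open `ℓ¹`-ball (diamond) of radius `L` around `z`. -/
def Dm (z : P) (L : ℤ) : Finset P := (Dm_finite z L).toFinset

lemma mem_Dm {z v : P} {L : ℤ} : v ∈ Dm z L ↔ dist1 v z < L := by simp [Dm]

lemma dist1_parity (u v : P) : (dist1 u v + u.1 + u.2 + v.1 + v.2) % 2 = 0 := by
  unfold dist1
  rcases abs_cases (u.1 - v.1) with h | h <;> rcases abs_cases (u.2 - v.2) with h' | h' <;> omega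

lemma dist1_tri (u v w : P) : dist1 u w ≤ dist1 u v + dist1 v w := by
  unfold dist1
  have := abs_sub_le u.1 v.1 w.1
  have := abs_sub_le u.2 v.2 w.2
  omega

lemma dist1_adj {u v : P} (h : adj2 u v) : dist1 u v = 1 := h

lemma Dm_mono {z z' : P} {L L' : ℤ} (h : dist1 z z' + L ≤ L') : Dm z L ⊆ Dm z' L' := by
  intro v hv; rw [mem_Dm] at *
  have := dist1_tri v z z'; omega

/-- `D` is an odd domain: its outer boundary consists of odd vertices. -/
def OddDom (D : Finset P) : Prop :=
  ∀ u v, u ∈ D → v ∉ D → adj2 u v → (v.1 + v.2) % 2 = 1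

lemma Dm_bdry {z : P} {L : ℤ} {u v : P} (hu : u ∈ Dm z L) (hv : v ∉ Dm z L) (a : adj2 u v) :
    dist1 v z = L := by
  rw [mem_Dm] at *
  have := dist1_tri v u z
  rw [dist1_adj (adj2_symm a)] at this
  omega

lemma Dm_even {z : P} {L : ℤ} (h : (z.1 + z.2 + L) % 2 = 0) : EvenDom (Dm z L) := by
  intro u v hu hv a
  have := Dm_bdry hu hv a
  have := dist1_parity v z
  omega

lemma Dm_odd {z : P} {L : ℤ} (h : (z.1 + z.2 + L) % 2 = 1) : OddDom (Dm z L) := by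
  intro u v hu hv a
  have := Dm_bdry hu hv a
  have := dist1_parity v z
  omega

/-- Every finite set lies in a diamond of even radius. -/
lemma exists_Dm_supset (D : Finset P) (z : P) : ∃ L : ℤ, 0 < L ∧ L % 2 = 0 ∧ D ⊆ Dm z L := by
  refine ⟨2 * (∑ v ∈ D, dist1 v z) + 2, ?_, by omega, fun v hv => ?_⟩
  · have := Finset.sum_nonneg (s := D) (f := fun v => dist1 v z) fun v _ => dist1_nonneg v z
    omega
  · rw [mem_Dm]
    have := Finset.single_le_sum (s := D) (f := fun v => dist1 v z)
      (fun v _ => dist1_nonneg v z) hv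
    have := dist1_nonneg v z
    omega

/-- The uniform measure is carried to the one on the image domain by `h ↦ c + s * h ∘ φ`, for a
lattice automorphism `φ`, a sign `s`, and a constant `c` that makes up for the parity change of `φ`. -/
lemma Ex_symm {D D' : Finset P} {ξ ξ' : P → ℤ} (φ : P ≃ P) (c s : ℤ) (hs : s * s = 1)
    (hφ : ∀ u v, adj2 u v → adj2 (φ u) (φ v)) (hφ' : ∀ u v, adj2 u v → adj2 (φ.symm u) (φ.symm v))
    (hp : ∀ v : P, ((φ v).1 + (φ v).2 + v.1 + v.2 + c) % 2 = 0)
    (hD : ∀ v, v ∈ D' ↔ φ v ∈ D) (hξ : ∀ v, v ∉ D' → ξ' v = c + s * ξ (φ v))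
    (F : (P → ℤ) → ℝ) :
    Ex (Om D' ξ') F = Ex (Om D ξ) (fun h => F (fun v => c + s * h (φ v))) := by
  unfold Ex
  rw [Om_sum_symm φ c s hs hφ hφ' hp hD hξ F]
  have := Om_sum_symm φ c s hs hφ hφ' hp hD hξ (fun _ => (1 : ℕ))
  simp only [Finset.sum_const, smul_eq_mul, mul_one] at this
  rw [this]

/-- Translation by an even vector `a`. -/
lemma Ex_translate {D D' : Finset P} (a : P) (ha : (a.1 + a.2) % 2 = 0)
    (hD : ∀ v, v ∈ D' ↔ v + a ∈ D) (F : (P → ℤ) → ℝ) :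
    Ex (Om D' xi0) F = Ex (Om D xi0) (fun h => F (fun v => h (v + a))) := by
  rw [Ex_symm (ξ := xi0) (Equiv.addRight a) 0 1 (by norm_num) ?_ ?_ ?_ hD ?_ F]
  · simp
  · intro u v h; rw [adj2_iff] at *
    simp only [Equiv.coe_addRight, Prod.fst_add, Prod.snd_add]; omega
  · intro u v h; rw [adj2_iff] at *
    simp only [Equiv.addRight_symm, Equiv.coe_addRight, Prod.fst_add, Prod.snd_add, Prod.fst_neg,
      Prod.snd_neg]; omega
  · intro v; simp only [Equiv.coe_addRight, Prod.fst_add, Prod.snd_add]; omega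
  · intro v _; simp only [Equiv.coe_addRight, xi0, Prod.fst_add, Prod.snd_add]; omega

/-- The point reflection `v ↦ (1,0) - v`, which exchanges parities. -/
def rho : P ≃ P where
  toFun v := (1 - v.1, - v.2)
  invFun v := (1 - v.1, - v.2)
  left_inv v := by ext <;> simp
  right_inv v := by ext <;> simp

/-- `h ↦ 1 - h ∘ rho` exchanges even and odd domains. -/
lemma Ex_tau {D D' : Finset P} (hD : ∀ v, v ∈ D' ↔ rho v ∈ D) (F : (P → ℤ) → ℝ) :
    Ex (Om D' xi0) F = Ex (Om D xi0) (fun h => F (fun v => 1 - h (rho v))) := by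
  rw [Ex_symm (ξ := xi0) rho 1 (-1) (by norm_num) ?_ ?_ ?_ hD ?_ F]
  · simp [sub_eq_add_neg]
  · intro u v h; rw [adj2_iff] at *; simp only [rho, Equiv.coe_fn_mk]; omega
  · intro u v h; rw [adj2_iff] at *; simp only [rho, Equiv.coe_fn_symm_mk]; omega
  · intro v; simp only [rho, Equiv.coe_fn_mk]; omega
  · intro v _; simp only [rho, Equiv.coe_fn_mk, xi0]; omega

open Classical in
/-- The image of `D` under `rho`. -/
def rhoD (D : Finset P) : Finset P := D.map rho.toEmbedding

lemma rho_rho (v : P) : rho (rho v) = v := by ext <;> simp [rho]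

lemma mem_rhoD {D : Finset P} {v : P} : v ∈ rhoD D ↔ rho v ∈ D := by
  unfold rhoD
  rw [Finset.mem_map_equiv]; rfl

lemma rho_adj {u v : P} (h : adj2 u v) : adj2 (rho u) (rho v) := by
  rw [adj2_iff] at *; simp only [rho, Equiv.coe_fn_mk]; omega

lemma rhoD_even {D : Finset P} (h : OddDom D) : EvenDom (rhoD D) := by
  intro u v hu hv a
  rw [mem_rhoD] at hu hv
  have := h _ _ hu hv (rho_adj a)
  simp only [rho, Equiv.coe_fn_mk] at this; omega

/-- Reflection of the heights inside `U` when the boundary values on the outer boundary vanish. -/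
lemma Ex_neg {U : Finset P} {ξ : P → ℤ} (hξ : isHom ξ)
    (h0 : ∀ u v, u ∈ U → v ∉ U → adj2 u v → ξ v = 0) (F : (P → ℤ) → ℝ) :
    Ex (Om U ξ) F = Ex (Om U ξ) (fun h => F (glue U (-h) ξ)) := by
  rw [Ex_symm (D' := U) (D := U) (ξ' := ξ) (ξ := -ξ) (Equiv.refl P) 0 (-1) (by norm_num)
    (by simp) (by simp) (fun v => by simp only [Equiv.refl_apply]; omega) (by simp) (by simp) F]
  unfold Ex
  have key := fun G : (P → ℤ) → ℝ => Om_sum_glue (U := U) hξ hξ.neg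
    (fun u v hu hv a => by rw [Pi.neg_apply, h0 u v hu hv a]; rfl) G
  rw [key]
  have k1 := key (fun _ => 1)
  simp only [Finset.sum_const, nsmul_eq_mul, mul_one] at k1
  rw [k1]
  congr 1
  refine Finset.sum_congr rfl fun h _ => ?_
  congr 1; funext v
  by_cases hv : v ∈ U <;> simp [glue, hv]

lemma even_xi0_bdry {D : Finset P} (hD : EvenDom D) :
    ∀ u v, u ∈ D → v ∉ D → adj2 u v → xi0 v = 0 := fun u v hu hv a => hD u v hu hv a

/-- Mean zero inside even domains (and inside any domain with vanishing boundary values). -/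
lemma Ex_zero {U : Finset P} {ξ : P → ℤ} (hξ : isHom ξ)
    (h0 : ∀ u v, u ∈ U → v ∉ U → adj2 u v → ξ v = 0) {x : P} (hx : x ∈ U) :
    Ex (Om U ξ) (fun h => (h x : ℝ)) = 0 := by
  have h := Ex_neg hξ h0 (fun h => (h x : ℝ))
  have e : (fun h : P → ℤ => ((glue U (-h) ξ x : ℤ) : ℝ)) = fun h => (-1 : ℝ) * (h x : ℝ) := by
    funext h; simp [glue, hx]
  rw [e, Ex_mul] at h
  linarith

/-- The second moment at the centre of a diamond. -/
def V (L : ℤ) : ℝ := Ex (Om (Dm 0 L) xi0) (fun h => (h 0 : ℝ) ^ 2)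

lemma sq_le_of_absle {a b : P → ℤ} (h : absle a b) (v : P) : (a v : ℝ) ^ 2 ≤ (b v : ℝ) ^ 2 := by
  have := sq_le_sq.2 (h v)
  exact_mod_cast this

lemma Ex_Dm_translate {z : P} {L : ℤ} (hz : (z.1 + z.2) % 2 = 0) (F : (P → ℤ) → ℝ) :
    Ex (Om (Dm z L) xi0) F = Ex (Om (Dm 0 L) xi0) (fun h => F (fun v => h (v - z))) := by
  have := Ex_translate (D' := Dm z L) (D := Dm 0 L) (-z) (by simp only [Prod.fst_neg, Prod.snd_neg]; omega)
    (fun v => by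
      rw [mem_Dm, mem_Dm]; unfold dist1
      simp [sub_eq_add_neg]) F
  simpa [sub_eq_add_neg] using this

lemma V_Dm {z : P} {L : ℤ} (hz : (z.1 + z.2) % 2 = 0) :
    Ex (Om (Dm z L) xi0) (fun h => (h z : ℝ) ^ 2) = V L := by
  rw [Ex_Dm_translate hz]; simp [V]

/-- The hypothesis to be contradicted: the variance stays bounded. -/
def Loc (C : ℝ) : Prop := ∀ L : ℤ, L % 2 = 0 → V L ≤ C

lemma Loc.even {C : ℝ} (hC : Loc C) {D : Finset P} (hD : EvenDom D) {x : P}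
    (hx : (x.1 + x.2) % 2 = 0) : Ex (Om D xi0) (fun h => (h x : ℝ) ^ 2) ≤ C := by
  obtain ⟨L, -, hL, hsub⟩ := exists_Dm_supset D x
  refine le_trans ?_ (hC L hL)
  rw [← V_Dm hx]
  exact abs_SD' hD hsub xi0_isHom xi0_nonneg _ fun a b h => sq_le_of_absle h x

lemma Loc.nonneg {C : ℝ} (hC : Loc C) : 0 ≤ C :=
  le_trans (Ex_nonneg fun h _ => by positivity) (hC 0 (by norm_num))

/-- At an odd vertex the height differs by one from that of an even neighbour, and
`(a ± 1)² ≤ 2a² + 2`. -/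
lemma Loc.all {C : ℝ} (hC : Loc C) {D : Finset P} (hD : EvenDom D) (x : P) :
    Ex (Om D xi0) (fun h => (h x : ℝ) ^ 2) ≤ 2 * C + 2 := by
  have hn := hC.nonneg
  by_cases hx : (x.1 + x.2) % 2 = 0
  · linarith [hC.even hD hx]
  · have h1 := hC.even hD (x := nbr x) (by simp only [nbr]; omega)
    have : Ex (Om D xi0) (fun h => (h x : ℝ) ^ 2)
        ≤ Ex (Om D xi0) (fun h => 2 * (h (nbr x) : ℝ) ^ 2 + 2) := by
      refine Ex_mono fun h hh => ?_
      rcases (mem_Om.1 hh).1.step (adj2_nbr x) with e | e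
      · rw [e]; push_cast; nlinarith [sq_nonneg ((h (nbr x) : ℝ) - 1)]
      · rw [e]; push_cast; nlinarith [sq_nonneg ((h x : ℝ) + 2)]
    rw [Ex_add, Ex_mul, Ex_const (Om_nonempty xi0_isHom)] at this
    linarith

/-- The second-moment bound in odd domains, where the mean height is `1`; the reflection `rho` turns
them into even domains. -/
lemma Loc.odd {C : ℝ} (hC : Loc C) {D : Finset P} (hD : OddDom D) (x : P) :
    Ex (Om D xi0) (fun h => ((h x : ℝ) - 1) ^ 2) ≤ 2 * C + 2 := by
  rw [Ex_tau (D := rhoD D) (fun v => by rw [mem_rhoD, rho_rho])]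
  refine le_trans (le_of_eq (Ex_congr fun h _ => ?_)) (hC.all (rhoD_even hD) (rho x))
  push_cast; ring

/-! ### Connectivity and planar boundaries -/

/-- `*`-adjacency: sup-distance at most one. -/
def star (u v : P) : Prop := (u.1 - v.1 ≤ 1 ∧ v.1 - u.1 ≤ 1) ∧ (u.2 - v.2 ≤ 1 ∧ v.2 - u.2 ≤ 1)

lemma star_symm {u v : P} (h : star u v) : star v u := by unfold star at *; omega

lemma adj2.star {u v : P} (h : adj2 u v) : star u v := by
  rw [adj2_iff] at h; unfold Stmt5.star; omega

/-- `u` and `v` are joined by an `r`-path inside `S`. -/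
def Con (r : P → P → Prop) (S : Set P) : P → P → Prop :=
  Relation.ReflTransGen (fun a b => r a b ∧ a ∈ S ∧ b ∈ S)

section
variable {r : P → P → Prop} {S S' O : Set P}

lemma Con.refl (u : P) : Con r S u u := Relation.ReflTransGen.refl

lemma Con.single {u v : P} (h : r u v) (hu : u ∈ S) (hv : v ∈ S) : Con r S u v :=
  Relation.ReflTransGen.single ⟨h, hu, hv⟩

lemma Con.trans {u v w : P} (h : Con r S u v) (h' : Con r S v w) : Con r S u w :=
  Relation.ReflTransGen.trans h h'

lemma Con.symm (hr : ∀ {a b}, r a b → r b a) {u v : P} (h : Con r S u v) : Con r S v u := by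
  induction h with
  | refl => exact Con.refl _
  | tail _ h ih => exact (Con.single (hr h.1) h.2.2 h.2.1).trans ih

lemma Con.mono {r' : P → P → Prop} (hr : ∀ a b, r a b → r' a b) (hS : S ⊆ S') {u v : P}
    (h : Con r S u v) : Con r' S' u v := by
  induction h with
  | refl => exact Con.refl _
  | tail _ h ih => exact ih.trans (Con.single (hr _ _ h.1) (hS h.2.1) (hS h.2.2))

lemma Con.mem {u v : P} (h : Con r S u v) (hu : u ∈ S) : v ∈ S := by
  induction h with
  | refl => exact hu
  | tail _ h _ => exact h.2.2

lemma Con.mem_left {u v : P} (h : Con r S u v) (hu : v ∈ S) : u ∈ S := by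
  rcases Relation.ReflTransGen.cases_head h with h | ⟨c, h, -⟩
  · rw [h]; exact hu
  · exact h.2.1

/-- An invariant along steps holds along paths. -/
lemma Con.inv {u v : P} {p : P → Prop} (h : Con r S u v) (hu : p u)
    (hs : ∀ a b, r a b → a ∈ S → b ∈ S → p a → p b) : p v := by
  induction h with
  | refl => exact hu
  | tail _ h ih => exact hs _ _ h.1 h.2.1 h.2.2 ih

/-- The region explored from `O` through `S`. -/
def Zr (r : P → P → Prop) (S O : Set P) : Set P := {v | ∃ o ∈ O, Con r (S ∪ O) o v}

lemma Zr_sub : Zr r S O ⊆ S ∪ O := by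
  rintro v ⟨o, ho, h⟩; exact h.mem (Or.inr ho)

lemma sub_Zr : O ⊆ Zr r S O := fun o ho => ⟨o, ho, Con.refl o⟩

lemma Zr_step {u v : P} (hu : u ∈ Zr r S O) (h : r u v) (hv : v ∈ S) : v ∈ Zr r S O := by
  obtain ⟨o, ho, p⟩ := hu
  exact ⟨o, ho, p.trans (Con.single h (p.mem (Or.inr ho)) (Or.inl hv))⟩

/-- The explored region together with its `r`-boundary. -/
def Zb (r : P → P → Prop) (S O : Set P) : Set P :=
  {v | v ∈ Zr r S O ∨ ∃ z ∈ Zr r S O, r z v}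

lemma Zb_notMem {v : P} (h : v ∈ Zb r S O) (h' : v ∉ Zr r S O) : v ∉ S := by
  rcases h with h | ⟨z, hz, hr⟩
  · exact absurd h h'
  · exact fun hv => h' (Zr_step hz hr hv)

/-- The explored region is determined by the configuration on it and on its boundary. -/
lemma Zr_congr (h : ∀ v ∈ Zb r S O, (v ∈ S ↔ v ∈ S')) : Zr r S' O = Zr r S O := by
  ext v
  constructor
  · rintro ⟨o, ho, p⟩
    refine p.inv (sub_Zr ho) fun a b hab _ hb ih => ?_
    rcases hb with hb | hb
    · exact Zr_step ih hab ((h b (Or.inr ⟨a, ih, hab⟩)).2 hb)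
    · exact sub_Zr hb
  · rintro ⟨o, ho, p⟩
    have : v ∈ Zr r S O ∧ v ∈ Zr r S' O := by
      refine p.inv (p := fun w => w ∈ Zr r S O ∧ w ∈ Zr r S' O) ⟨sub_Zr ho, sub_Zr ho⟩ fun a b hab _ hb ih => ?_
      rcases hb with hb | hb
      · have hbZ := Zr_step ih.1 hab hb
        exact ⟨hbZ, Zr_step ih.2 hab ((h b (Or.inl hbZ)).1 hb)⟩
      · exact ⟨sub_Zr hb, sub_Zr hb⟩
    exact this.2

lemma Zb_congr (h : ∀ v ∈ Zb r S O, (v ∈ S ↔ v ∈ S')) : Zb r S' O = Zb r S O := by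
  unfold Zb; rw [Zr_congr h]

end

lemma Con.hseg {S : Set P} {x1 x2 y : ℤ} (h : x1 ≤ x2) (hS : ∀ x, x1 ≤ x → x ≤ x2 → (x, y) ∈ S) :
    Con adj2 S (x1, y) (x2, y) := by
  obtain ⟨n, rfl⟩ := Int.le.dest h
  induction n with
  | zero => simpa using Con.refl _
  | succ n ih =>
    refine (ih (by omega) fun x h1 h2 => hS x h1 (by push_cast; omega)).trans
      (Con.single (adj2_iff.2 ?_) (hS _ (by omega) (by push_cast; omega))
        (hS _ (by omega) (by omega)))
    push_cast; simp; omega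

lemma Con.vseg {S : Set P} {x y1 y2 : ℤ} (h : y1 ≤ y2) (hS : ∀ y, y1 ≤ y → y ≤ y2 → (x, y) ∈ S) :
    Con adj2 S (x, y1) (x, y2) := by
  obtain ⟨n, rfl⟩ := Int.le.dest h
  induction n with
  | zero => simpa using Con.refl _
  | succ n ih =>
    refine (ih (by omega) fun x h1 h2 => hS x h1 (by push_cast; omega)).trans
      (Con.single (adj2_iff.2 ?_) (hS _ (by omega) (by push_cast; omega))
        (hS _ (by omega) (by omega)))
    push_cast; simp; omega

lemma Con.hseg' {S : Set P} {x1 x2 y : ℤ}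
    (hS : ∀ x, min x1 x2 ≤ x → x ≤ max x1 x2 → (x, y) ∈ S) : Con adj2 S (x1, y) (x2, y) := by
  rcases le_total x1 x2 with h | h
  · exact Con.hseg h fun x a b => hS x (by omega) (by omega)
  · exact (Con.hseg h fun x a b => hS x (by omega) (by omega)).symm adj2_symm

lemma Con.vseg' {S : Set P} {x y1 y2 : ℤ}
    (hS : ∀ y, min y1 y2 ≤ y → y ≤ max y1 y2 → (x, y) ∈ S) : Con adj2 S (x, y1) (x, y2) := by
  rcases le_total y1 y2 with h | h
  · exact Con.vseg h fun x a b => hS x (by omega) (by omega)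
  · exact (Con.vseg h fun x a b => hS x (by omega) (by omega)).symm adj2_symm

/-- The complement of a diamond is connected. -/
lemma Dm_compl_con {z : P} {L : ℤ} (hL : 0 ≤ L) {u v : P} (hu : u ∉ Dm z L) (hv : v ∉ Dm z L) :
    Con adj2 {w | w ∉ Dm z L} u v := by
  suffices H : ∀ u, u ∉ Dm z L → Con adj2 {w | w ∉ Dm z L} u (z.1 + L, z.2 + L) from
    (H u hu).trans ((H v hv).symm adj2_symm)
  have mem : ∀ x y : ℤ, (x, y) ∈ {w | w ∉ Dm z L} ↔ L ≤ |x - z.1| + |y - z.2| := by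
    intro x y; rw [Set.mem_ofPred_eq, mem_Dm, not_lt]; rfl
  rintro ⟨x, y⟩ hu
  have hu' := (mem x y).1 hu
  obtain ⟨X, hX1, hX2⟩ : ∃ X : ℤ, L ≤ |X - z.1| ∧
      ∀ x', min x X ≤ x' → x' ≤ max x X → L ≤ |x' - z.1| + |y - z.2| := by
    rcases le_total z.1 x with h | h
    · refine ⟨max x (z.1 + L), by rw [abs_of_nonneg] <;> omega, fun x' h1 h2 => ?_⟩
      rw [abs_of_nonneg (by omega)] at hu' ⊢; omega
    · refine ⟨min x (z.1 - L), by rw [abs_of_nonpos] <;> omega, fun x' h1 h2 => ?_⟩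
      rw [abs_of_nonpos (by omega)] at hu' ⊢; omega
  refine ((Con.hseg' fun x' h1 h2 => (mem _ _).2 (hX2 x' h1 h2)).trans
    (Con.vseg' (y2 := z.2 + L) fun y' _ _ => (mem _ _).2 ?_)).trans
    (Con.hseg' fun x' _ _ => (mem _ _).2 ?_)
  · have := abs_nonneg (y' - z.2); omega
  · have := abs_nonneg (x' - z.1)
    rw [add_sub_cancel_left, abs_of_nonneg hL]; omega

/-- Discrete antiderivative modulo two. -/
lemma exists_antidiff (c : ℤ → ZMod 2) : ∃ F : ℤ → ZMod 2, ∀ x, F (x + 1) = F x + c x := by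
  refine ⟨fun x => ∑ i ∈ Finset.Ico 0 x, c i + ∑ i ∈ Finset.Ico x 0, c i, fun x => ?_⟩
  dsimp only
  rcases le_or_gt 0 x with h | h
  · rw [Finset.Ico_eq_empty (by omega : ¬ x + 1 < 0), Finset.Ico_eq_empty (by omega : ¬ x < 0)]
    have : Finset.Ico 0 (x + 1) = insert x (Finset.Ico 0 x) := by
      ext i; simp only [Finset.mem_Ico, Finset.mem_insert]; omega
    rw [this, Finset.sum_insert (by simp)]; simp [add_comm]
  · rw [Finset.Ico_eq_empty (by omega : ¬ 0 < x + 1), Finset.Ico_eq_empty (by omega : ¬ 0 < x)]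
    have : Finset.Ico x 0 = insert x (Finset.Ico (x + 1) 0) := by
      ext i; simp only [Finset.mem_Ico, Finset.mem_insert]; omega
    rw [this, Finset.sum_insert (by simp)]
    simp only [Finset.sum_empty, zero_add]
    have : c x + c x = 0 := CharTwo.add_self_eq_zero _
    linear_combination -this

/-- A `ZMod 2`-valued 1-cochain on `ℤ²` which is closed on unit squares is exact. -/
lemma exists_potential (a b : ℤ → ℤ → ZMod 2)
    (cl : ∀ x y, a x y + b (x + 1) y + a x (y + 1) + b x y = 0) :
    ∃ φ : ℤ → ℤ → ZMod 2, (∀ x y, φ (x + 1) y = φ x y + a x y) ∧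
      ∀ x y, φ x (y + 1) = φ x y + b x y := by
  obtain ⟨A, hA⟩ := exists_antidiff fun x => a x 0
  choose B hB using fun x => exists_antidiff fun y => b x y
  let φ : ℤ → ℤ → ZMod 2 := fun x y => A x + (B x y - B x 0)
  have hv : ∀ x y, φ x (y + 1) = φ x y + b x y := by
    intro x y; simp only [φ, hB x y]; ring
  refine ⟨φ, fun x y => ?_, hv⟩
  have two : ∀ t : ZMod 2, t + t = 0 := fun t => CharTwo.add_self_eq_zero t
  induction y using Int.induction_on with
  | zero => simp only [φ, hA x]; ring
  | succ n ih =>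
    rw [hv, hv, ih]
    linear_combination cl x n - two (a x (n + 1)) - two (b x n)
  | pred n ih =>
    have e1 := hv (x + 1) (-(n : ℤ) - 1)
    have e2 := hv x (-(n : ℤ) - 1)
    have e3 := cl x (-(n : ℤ) - 1)
    rw [sub_add_cancel] at e1 e2 e3
    rw [e1, e2] at ih
    linear_combination ih - e3 + two (a x (-(n : ℤ))) + two (b x (-(n : ℤ) - 1))

open Classical in
private lemma sq_closed {q0 q1 q2 q3 z0 z1 z2 z3 : Prop} (n0 : q0 → ¬ z0) (n1 : q1 → ¬ z1)
    (n2 : q2 → ¬ z2) (n3 : q3 → ¬ z3)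
    (e01 : q0 → (z0 ∨ z1 ∨ z2 ∨ z3) → ¬ z1 → q1) (e10 : q1 → (z0 ∨ z1 ∨ z2 ∨ z3) → ¬ z0 → q0)
    (e02 : q0 → (z0 ∨ z1 ∨ z2 ∨ z3) → ¬ z2 → q2) (e20 : q2 → (z0 ∨ z1 ∨ z2 ∨ z3) → ¬ z0 → q0)
    (e13 : q1 → (z0 ∨ z1 ∨ z2 ∨ z3) → ¬ z3 → q3) (e31 : q3 → (z0 ∨ z1 ∨ z2 ∨ z3) → ¬ z1 → q1)
    (e23 : q2 → (z0 ∨ z1 ∨ z2 ∨ z3) → ¬ z3 → q3) (e32 : q3 → (z0 ∨ z1 ∨ z2 ∨ z3) → ¬ z2 → q2) :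
    (if (q0 ∧ z1) ∨ (z0 ∧ q1) then (1 : ZMod 2) else 0) +
      (if (q1 ∧ z3) ∨ (z1 ∧ q3) then 1 else 0) + (if (q2 ∧ z3) ∨ (z2 ∧ q3) then 1 else 0) +
      (if (q0 ∧ z2) ∨ (z0 ∧ q2) then 1 else 0) = 0 := by
  have two : (1 : ZMod 2) + 1 = 0 := by decide
  by_cases h0 : z0 <;> by_cases h1 : z1 <;> by_cases h2 : z2 <;> by_cases h3 : z3 <;>
    simp only [h0, h1, h2, h3, not_true_eq_false, not_false_eq_true, or_true, or_false,
      false_or, or_self, forall_true_left, false_imp_iff, imp_false, implies_true, and_true,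
      and_false, true_and, false_and, if_false] at * <;>
    first
    | rfl
    | (by_cases g0 : q0 <;> by_cases g1 : q1 <;> by_cases g2 : q2 <;> by_cases g3 : q3 <;>
        simp_all)

set_option maxHeartbeats 1000000 in
open Classical in
/-- The inner `*`-boundary, seen from a component `U` of the complement of a `*`-connected set `Z`,
is connected. -/
theorem bdry_connected {Z U : Set P} (hZ : ∀ u ∈ Z, ∀ v ∈ Z, Con star Z u v)
    (hUc : ∀ u ∈ U, ∀ v ∈ U, Con adj2 U u v) (hUZ : ∀ u ∈ U, u ∉ Z)
    (hU : ∀ u v, u ∈ U → adj2 u v → v ∉ Z → v ∈ U) {u v : P}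
    (hu : u ∈ {w | w ∈ U ∧ ∃ z ∈ Z, star z w}) (hv : v ∈ {w | w ∈ U ∧ ∃ z ∈ Z, star z w}) :
    Con adj2 {w | w ∈ U ∧ ∃ z ∈ Z, star z w} u v := by
  set l := {w | w ∈ U ∧ ∃ z ∈ Z, star z w} with hl
  by_contra hcon
  set Q : Set P := {w | w ∈ l ∧ Con adj2 l u w} with hQ
  have QZ : ∀ w ∈ Q, w ∉ Z := fun w hw => hUZ w hw.1.1
  -- `Q` absorbs lattice neighbours off `Z` that are `*`-adjacent to `Z`
  have Qst : ∀ p w q, p ∈ Q → adj2 p w → q ∈ Z → star q w → w ∉ Z → w ∈ Q := by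
    intro p w q hp a hq s hw
    have hwl : w ∈ l := ⟨hU p w hp.1.1 a hw, q, hq, s⟩
    exact ⟨hwl, hp.2.trans (Con.single a hp.1 hwl)⟩
  -- the cochain counting edges between `Q` and `Z`
  let c : P → P → ZMod 2 := fun s t => if (s ∈ Q ∧ t ∈ Z) ∨ (s ∈ Z ∧ t ∈ Q) then 1 else 0
  obtain ⟨φ, hφ1, hφ2⟩ := exists_potential (fun x y => c (x, y) (x + 1, y))
    (fun x y => c (x, y) (x, y + 1)) (by
      intro x y
      have n0 := QZ (x, y)
      have n1 := QZ (x + 1, y)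
      have n2 := QZ (x, y + 1)
      have n3 := QZ (x + 1, y + 1)
      have step : ∀ x1 y1 x2 y2 x3 y3 : ℤ, (x1, y1) ∈ Q → (x3, y3) ∈ Z →
          adj2 (x1, y1) (x2, y2) → star (x3, y3) (x2, y2) → (x2, y2) ∉ Z → (x2, y2) ∈ Q :=
        fun x1 y1 x2 y2 x3 y3 h1 h2 h3 h4 h5 => Qst _ _ _ h1 h3 h2 h4 h5
      have a01 : adj2 (x, y) (x + 1, y) := adj2_iff.2 (by simp)
      have a02 : adj2 (x, y) (x, y + 1) := adj2_iff.2 (by simp)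
      have a13 : adj2 (x + 1, y) (x + 1, y + 1) := adj2_iff.2 (by simp)
      have a23 : adj2 (x, y + 1) (x + 1, y + 1) := adj2_iff.2 (by simp)
      have sall : ∀ q w : P, (q = (x, y) ∨ q = (x + 1, y) ∨ q = (x, y + 1) ∨ q = (x + 1, y + 1)) →
          (w = (x, y) ∨ w = (x + 1, y) ∨ w = (x, y + 1) ∨ w = (x + 1, y + 1)) → star q w := by
        intro q w hq hw
        unfold star
        rcases hq with rfl | rfl | rfl | rfl <;> rcases hw with rfl | rfl | rfl | rfl <;>
          dsimp only <;> omega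
      have stepQ : ∀ p w q : P,
          (w = (x, y) ∨ w = (x + 1, y) ∨ w = (x, y + 1) ∨ w = (x + 1, y + 1)) →
          (q = (x, y) ∨ q = (x + 1, y) ∨ q = (x, y + 1) ∨ q = (x + 1, y + 1)) →
          adj2 p w → p ∈ Q → q ∈ Z → w ∉ Z → w ∈ Q :=
        fun p w q hw hq a hp hqZ hwZ => Qst p w q hp a hqZ (sall q w hq hw) hwZ
      have anyZ : ∀ p w : P,
          (w = (x, y) ∨ w = (x + 1, y) ∨ w = (x, y + 1) ∨ w = (x + 1, y + 1)) → adj2 p w → p ∈ Q →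
          ((x, y) ∈ Z ∨ (x + 1, y) ∈ Z ∨ (x, y + 1) ∈ Z ∨ (x + 1, y + 1) ∈ Z) → w ∉ Z → w ∈ Q := by
        intro p w hw a hp hz hwZ
        rcases hz with hz | hz | hz | hz
        · exact stepQ p w _ hw (by simp) a hp hz hwZ
        · exact stepQ p w _ hw (by simp) a hp hz hwZ
        · exact stepQ p w _ hw (by simp) a hp hz hwZ
        · exact stepQ p w _ hw (by simp) a hp hz hwZ
      have e01 := anyZ _ _ (by simp) a01
      have e10 := anyZ _ _ (by simp) (adj2_symm a01)
      have e02 := anyZ _ _ (by simp) a02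
      have e20 := anyZ _ _ (by simp) (adj2_symm a02)
      have e13 := anyZ _ _ (by simp) a13
      have e31 := anyZ _ _ (by simp) (adj2_symm a13)
      have e23 := anyZ _ _ (by simp) a23
      have e32 := anyZ _ _ (by simp) (adj2_symm a23)
      clear anyZ stepQ sall step a01 a02 a13 a23 hcon Qst QZ hU hUZ hUc hZ hu hv
      simp only [c]
      convert sq_closed n0 n1 n2 n3 e01 e10 e02 e20 e13 e31 e23 e32)
  have csymm : ∀ s t, c s t = c t s := by
    intro s t; simp only [c]; congr 1; apply propext; tauto
  -- along lattice edges the potential changes by the cochain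
  have hφ : ∀ s t : P, adj2 s t → φ t.1 t.2 = φ s.1 s.2 + c s t := by
    have two : ∀ t : ZMod 2, t + t = 0 := fun t => CharTwo.add_self_eq_zero t
    rintro ⟨x, y⟩ ⟨x', y'⟩ a
    rw [adj2_iff] at a
    dsimp only at a ⊢
    rcases a with ⟨rfl, rfl | rfl⟩ | ⟨rfl, rfl | rfl⟩
    · rw [hφ2, csymm (x, y' + 1) (x, y')]; linear_combination - two (c (x, y') (x, y' + 1))
    · rw [hφ2]
    · rw [hφ1, csymm (x' + 1, y) (x', y)]; linear_combination - two (c (x', y) (x' + 1, y))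
    · rw [hφ1]
  -- intermediate corner of a diagonal step
  have diag : ∀ s t : P, star s t → s = t ∨ adj2 s t ∨ ∃ w, adj2 s w ∧ adj2 w t := by
    rintro ⟨x, y⟩ ⟨x', y'⟩ h
    unfold star at h
    dsimp only at h
    by_cases h1 : x = x'
    · by_cases h2 : y = y'
      · left; rw [h1, h2]
      · right; left; rw [adj2_iff]; dsimp only; omega
    · by_cases h2 : y = y'
      · right; left; rw [adj2_iff]; dsimp only; omega
      · right; right; refine ⟨(x', y), ?_, ?_⟩ <;> rw [adj2_iff] <;> dsimp only <;> omega
  have hφZ : ∀ z ∈ Z, ∀ z' ∈ Z, φ z'.1 z'.2 = φ z.1 z.2 := by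
    intro z hz z' hz'
    refine (hZ z hz z' hz').inv (p := fun w => φ w.1 w.2 = φ z.1 z.2) rfl ?_
    intro a b hab ha hb ih
    rw [← ih]
    have na : a ∉ Q := fun h => QZ a h ha
    have nb : b ∉ Q := fun h => QZ b h hb
    rcases diag a b hab with rfl | h | ⟨w, h1, h2⟩
    · rfl
    · rw [hφ a b h]; simp [c, na, nb]
    · rw [hφ w b h2, hφ a w h1, csymm a w]
      have : c w a = c w b := by simp [c, na, nb, ha, hb]
      rw [this, add_assoc, CharTwo.add_self_eq_zero, add_zero]
  have hφU : ∀ s ∈ U, ∀ t ∈ U, φ t.1 t.2 = φ s.1 s.2 := by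
    intro s hs t ht
    refine (hUc s hs t ht).inv (p := fun w => φ w.1 w.2 = φ s.1 s.2) rfl ?_
    intro a b hab ha hb ih
    rw [hφ a b hab, ih]
    simp [c, hUZ a ha, hUZ b hb]
  obtain ⟨hu1, z, hz, hzu⟩ := id hu
  obtain ⟨hv1, z', hz', hzv⟩ := id hv
  have huQ : u ∈ Q := ⟨hu, Con.refl u⟩
  have hvQ : v ∉ Q := fun h => hcon h.2
  have nz : z ∉ Q := fun h => QZ z h hz
  have nz' : z' ∉ Q := fun h => QZ z' h hz'
  have e1 : φ z.1 z.2 = φ u.1 u.2 + 1 := by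
    rcases diag u z (star_symm hzu) with rfl | h | ⟨w, h1, h2⟩
    · exact absurd hz (hUZ _ hu1)
    · rw [hφ u z h]; simp [c, huQ, hz]
    · rw [hφ w z h2, hφ u w h1]
      by_cases hw : w ∈ Z
      · have : w ∉ Q := fun h => QZ w h hw
        simp [c, huQ, hz, hw, this, nz]
      · have : w ∈ Q := Qst u w z huQ h1 hz (star_symm h2.star) hw
        simp [c, huQ, hz, hw, this, hUZ u hu1]
  have e2 : φ z'.1 z'.2 = φ v.1 v.2 := by
    have nv := hUZ v hv1
    rcases diag v z' (star_symm hzv) with rfl | h | ⟨w, h1, h2⟩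
    · exact absurd hz' nv
    · have : c v z' = 0 := if_neg (by tauto)
      rw [hφ v z' h, this, add_zero]
    · rw [hφ w z' h2, hφ v w h1]
      have : w ∉ Q := by
        intro hw
        exact hvQ (Qst w v z' hw (adj2_symm h1) hz' hzv nv)
      simp [c, hvQ, nz', nv, this]
  rw [hφZ z hz z' hz', hφU u hu1 v hv1] at e2
  rw [e2] at e1
  exact absurd (left_eq_add.1 e1) (by decide)

/-! ### Boundary monotonicity and second moments -/

lemma Ex_glue {U : Finset P} {ξ ξ' : P → ℤ} (h1 : isHom ξ) (h2 : isHom ξ')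
    (e : ∀ u v, u ∈ U → v ∉ U → adj2 u v → ξ v = ξ' v) (F : (P → ℤ) → ℝ) :
    Ex (Om U ξ') F = Ex (Om U ξ) (fun h => F (glue U h ξ')) := by
  have key := fun G : (P → ℤ) → ℝ => Om_sum_glue h1 h2 e G
  unfold Ex
  rw [key]
  have k1 := key (fun _ => 1)
  simp only [Finset.sum_const, nsmul_eq_mul, mul_one] at k1
  rw [k1]

/-- Functions of the values inside `U` have an expectation depending on the outer boundary only. -/
lemma Ex_bdry {U : Finset P} {ξ ξ' : P → ℤ} (h1 : isHom ξ) (h2 : isHom ξ')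
    (e : ∀ u v, u ∈ U → v ∉ U → adj2 u v → ξ v = ξ' v) {F : (P → ℤ) → ℝ}
    (hF : ∀ h h' : P → ℤ, (∀ v ∈ U, h v = h' v) → F h = F h') :
    Ex (Om U ξ') F = Ex (Om U ξ) F := by
  rw [Ex_glue h1 h2 e]
  exact Ex_congr fun h _ => hF _ _ fun v hv => by simp [glue, hv]

lemma Ex_negate {U : Finset P} {ξ : P → ℤ} (F : (P → ℤ) → ℝ) :
    Ex (Om U (-ξ)) F = Ex (Om U ξ) (fun h => F (-h)) := by
  rw [Ex_symm (D' := U) (D := U) (ξ' := -ξ) (ξ := ξ) (Equiv.refl P) 0 (-1) (by norm_num)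
    (by simp) (by simp) (fun v => by simp only [Equiv.refl_apply]; omega) (by simp) (by simp) F]
  refine Ex_congr fun h _ => ?_
  congr 1; funext v; simp

/-- The mean height depends monotonically on the boundary values, and only those on the outer
boundary of `U` matter. -/
lemma Ex_le_bdry {U : Finset P} {ξ ξ' : P → ℤ} (h1 : isHom ξ) (h2 : isHom ξ')
    (e : ∀ u v, u ∈ U → v ∉ U → adj2 u v → ξ v ≤ ξ' v) {x : P} (hx : x ∈ U) :
    Ex (Om U ξ) (fun h => (h x : ℝ)) ≤ Ex (Om U ξ') (fun h => (h x : ℝ)) := by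
  rw [Ex_bdry (U := U) (h1.sup h2) h2 (fun u v hu hv a => sup_eq_right.2 (e u v hu hv a))
    (F := fun h => (h x : ℝ)) fun h h' hh => by rw [hh x hx]]
  exact Om_SD h1 (h1.sup h2) (fun v _ => le_sup_left) _ fun a b hab => by
    exact_mod_cast hab x

lemma Ex_nonneg_bdry {U : Finset P} {ξ : P → ℤ} (h1 : isHom ξ)
    (e : ∀ u v, u ∈ U → v ∉ U → adj2 u v → 0 ≤ ξ v) {x : P} (hx : x ∈ U) :
    0 ≤ Ex (Om U ξ) (fun h => (h x : ℝ)) := by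
  have := Ex_le_bdry (U := U) h1.neg h1 (fun u v hu hv a => by
    have := e u v hu hv a; rw [Pi.neg_apply]; omega) hx
  rw [Ex_negate] at this
  have e2 : (fun h : P → ℤ => (((-h) x : ℤ) : ℝ)) = fun h => (-1 : ℝ) * (h x : ℝ) := by
    funext h; simp
  rw [e2, Ex_mul] at this
  linarith

lemma Dm_con {z : P} {L : ℤ} {u v : P} (hu : u ∈ Dm z L) (hv : v ∈ Dm z L) :
    Con adj2 (Dm z L : Set P) u v := by
  suffices H : ∀ n : ℕ, ∀ u, u ∈ Dm z L → dist1 u z ≤ n → Con adj2 (Dm z L : Set P) u z from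
    (H _ u hu (Int.self_le_toNat _)).trans ((H _ v hv (Int.self_le_toNat _)).symm adj2_symm)
  intro n
  induction n with
  | zero => 
    intro u _ h
    have e : u = z := dist1_eq_zero (by simpa using h)
    rw [e]; exact Con.refl _
  | succ n ih =>
    intro u hu h
    by_cases huz : u = z
    · rw [huz]; exact Con.refl _
    · obtain ⟨w, a, hw⟩ := dist1_step huz
      rw [mem_Dm] at hu
      have hw' : w ∈ Dm z L := by rw [mem_Dm]; omega
      exact (Con.single a (Finset.mem_coe.2 (mem_Dm.2 hu)) (Finset.mem_coe.2 hw')).trans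
        (ih w hw' (by push_cast at h; omega))

lemma star.dist1_le {u v : P} (h : star u v) : dist1 u v ≤ 2 := by
  unfold star at h; unfold dist1
  rcases abs_cases (u.1 - v.1) with a | a <;> rcases abs_cases (u.2 - v.2) with b | b <;> omega

/-- The sum of squares at the two adjacent vertices `(0,0)` and `(1,0)`. -/
def G2 (h : P → ℤ) : ℝ := (h 0 : ℝ) ^ 2 + (h (1, 0) : ℝ) ^ 2

lemma G2_mono {a b : P → ℤ} (h : absle a b) : G2 a ≤ G2 b :=
  add_le_add (sq_le_of_absle h _) (sq_le_of_absle h _)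

/-- The sum of the second moments at the origin and at `(1,0)`. -/
def W (L : ℤ) : ℝ := Ex (Om (Dm 0 L) xi0) G2

/-- Positive boundary values raise the second moments by one each. -/
lemma G2_pos_class {n : ℤ} {U : Finset P} {ξ : P → ℤ} (hn : n % 2 = 0) (hn0 : 0 ≤ n) (hξ : isHom ξ)
    (hU : Dm 0 (n + 2) ⊆ U) (hb : ∀ u v, u ∈ U → v ∉ U → adj2 u v → 1 ≤ ξ v) :
    W n + 2 ≤ Ex (Om U ξ) G2 := by
  set x1 : P → ℤ := fun v => 1 + (v.1 + v.2 + 1) % 2 with hx1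
  have hx1h : isHom x1 := by
    refine ⟨fun v => by simp only [x1]; omega, fun u v a => ?_⟩
    rw [adj2_iff] at a; simp only [x1]; omega
  have m0 : (0 : P) ∈ U := hU (by rw [mem_Dm, dist1_self]; omega)
  have m1 : ((1, 0) : P) ∈ U := hU (by rw [mem_Dm]; simp [dist1]; omega)
  rw [Ex_bdry (U := U) (hξ.sup hx1h) hξ (fun u v hu hv a => sup_eq_left.2 (by
    have := hb u v hu hv a; have := hξ.1 v; simp only [x1]; omega))
    (F := G2) fun h h' hh => by unfold G2; rw [hh _ m0, hh _ m1]]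
  set ζ := ξ ⊔ x1 with hζ
  have hζh : isHom ζ := hξ.sup hx1h
  have ζ1 : ∀ v, 1 ≤ ζ v := fun v => by
    have : x1 v ≤ ζ v := le_sup_right
    simp only [x1] at this; omega
  set ζ' : P → ℤ := fun v => -1 + 1 * ζ (rho v) with hζ'
  have hζ'h : isHom ζ' := by
    refine ⟨fun v => ?_, fun u v a => ?_⟩
    · have := hζh.1 (rho v); simp only [rho, Equiv.coe_fn_mk] at this
      simp only [ζ', rho, Equiv.coe_fn_mk]; omega
    · have := hζh.2 _ _ (rho_adj a); simp only [ζ']; omega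
  have key := fun F : (P → ℤ) → ℝ => Ex_symm (D := U) (D' := rhoD U) (ξ := ζ) (ξ' := ζ') rho (-1) 1
    (by norm_num) (fun u v a => rho_adj a) (fun u v a => rho_adj a)
    (fun v => by simp only [rho, Equiv.coe_fn_mk]; omega) (fun v => mem_rhoD) (fun v _ => rfl) F
  have r0 : rho 0 = (1, 0) := by simp [rho]
  have r1 : rho (1, 0) = 0 := by simp [rho]
  have k1 : W n ≤ Ex (Om U ζ) (fun h => ((h (1, 0) : ℝ) - 1) ^ 2 + ((h 0 : ℝ) - 1) ^ 2) := by
    have := abs_SD' (D := Dm 0 n) (U := rhoD U) (ξ := ζ') (Dm_even (by simp [hn])) (by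
      intro v hv
      rw [mem_rhoD]; apply hU
      rw [mem_Dm] at *
      have := dist1_tri (rho v) (rho 0) 0
      have e : dist1 (rho v) (rho 0) = dist1 v 0 := by
        simp only [dist1, rho, Equiv.coe_fn_mk, Prod.fst_zero, Prod.snd_zero]
        rw [abs_sub_comm, abs_sub_comm (-v.2)]; congr 2 <;> ring
      rw [e, r0] at this
      have : dist1 ((1, 0) : P) 0 = 1 := by simp [dist1]
      omega) hζ'h (fun v => by have := ζ1 (rho v); simp only [ζ']; omega) G2
      (fun a b h => G2_mono h)
    rw [key] at this
    refine this.trans (le_of_eq (Ex_congr fun h _ => ?_))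
    simp only [G2, r0, r1]; push_cast; ring
  have k2 : ∀ x, rho x ∈ U → 1 ≤ Ex (Om U ζ) (fun h => (h (rho x) : ℝ)) := by
    intro x hx
    have := Ex_nonneg_bdry (U := rhoD U) hζ'h
      (fun u v _ _ _ => by have := ζ1 (rho v); simp only [ζ']; omega) (x := x) (mem_rhoD.2 hx)
    rw [key] at this
    have e : (fun h : P → ℤ => (((-1 + 1 * h (rho x) : ℤ)) : ℝ)) =
      fun h : P → ℤ => (h (rho x) : ℝ) - 1 := by funext h; push_cast; ring
    rw [e, Ex_sub, Ex_const (Om_nonempty hζh)] at this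
    linarith
  have k3 := k2 0 (by rw [r0]; exact m1)
  have k4 := k2 (1, 0) (by rw [r1]; exact m0)
  rw [r0] at k3; rw [r1] at k4
  have e : Ex (Om U ζ) G2 = Ex (Om U ζ) (fun h => ((h (1, 0) : ℝ) - 1) ^ 2 + ((h 0 : ℝ) - 1) ^ 2)
      + (2 * Ex (Om U ζ) (fun h => (h (1, 0) : ℝ)) + 2 * Ex (Om U ζ) (fun h => (h 0 : ℝ)) - 2) := by
    rw [← Ex_mul, ← Ex_mul, ← Ex_add]
    conv_lhs => rw [← add_sub_cancel_right (Ex (Om U ζ) G2) 2]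
    nth_rewrite 1 [← Ex_const (Om_nonempty hζh) (2 : ℝ)]
    rw [← Ex_add, ← add_sub_assoc, ← Ex_add]
    congr 1
    refine Ex_congr fun h _ => ?_
    unfold G2; ring
  rw [e]; linarith

/-- The counterpart of `G2_pos_class` for negative boundary values, by the symmetry `h ↦ -h`. -/
lemma G2_neg_class {n : ℤ} {U : Finset P} {ξ : P → ℤ} (hn : n % 2 = 0) (hn0 : 0 ≤ n) (hξ : isHom ξ)
    (hU : Dm 0 (n + 2) ⊆ U) (hb : ∀ u v, u ∈ U → v ∉ U → adj2 u v → ξ v ≤ -1) :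
    W n + 2 ≤ Ex (Om U ξ) G2 := by
  have := G2_pos_class hn hn0 hξ.neg hU (fun u v hu hv a => by
    have := hb u v hu hv a; rw [Pi.neg_apply]; omega)
  rw [Ex_negate] at this
  refine this.trans (le_of_eq (Ex_congr fun h _ => ?_))
  simp [G2]

/-- A path of nonzero heights keeps its sign. -/
lemma sign_con {h : P → ℤ} (hh : isHom h) {S : Set P} (hS : ∀ v ∈ S, h v ≠ 0) {u v : P}
    (p : Con adj2 S u v) (hu : 1 ≤ h u) : 1 ≤ h v := by
  refine p.inv (p := fun w => 1 ≤ h w) hu fun a b hab _ hb ih => ?_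
  have := hh.2 a b hab
  have := hS b hb
  omega

/-! ### Explorations and paths of zeros -/

open Classical in
/-- The part of `D` not yet revealed when exploring from `O` through `S`. -/
def Un (r : P → P → Prop) (D : Finset P) (S O : Set P) : Finset P :=
  D.filter fun v => v ∉ Zb r S O

lemma mem_Un {r : P → P → Prop} {D : Finset P} {S O : Set P} {v : P} :
    v ∈ Un r D S O ↔ v ∈ D ∧ v ∉ Zb r S O := by simp [Un]

lemma Un_sub {r : P → P → Prop} {D : Finset P} {S O : Set P} : Un r D S O ⊆ D :=
  fun _ h => (mem_Un.1 h).1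

/-- On the outer boundary of the unrevealed region the exploration has stopped. -/
lemma Un_bdry {r : P → P → Prop} (hr : ∀ a b, adj2 a b → r a b) {D : Finset P} {S O : Set P}
    (hO : ∀ v, v ∉ D → v ∈ O) {u v : P} (hu : u ∈ Un r D S O) (hv : v ∉ Un r D S O)
    (a : adj2 u v) : v ∈ D ∧ v ∉ S ∧ v ∉ O := by
  rw [mem_Un] at hu hv
  have hvZ : v ∉ Zr r S O := fun h => hu.2 (Or.inr ⟨v, h, hr _ _ (adj2_symm a)⟩)
  have hvD : v ∈ D := by
    by_contra h; exact hvZ (sub_Zr (hO v h))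
  have hvb : v ∈ Zb r S O := by
    by_contra h; exact hv ⟨hvD, h⟩
  exact ⟨hvD, Zb_notMem hvb hvZ, fun h => hvZ (sub_Zr h)⟩

/-- Resampling the unrevealed region. -/
lemma Ex_explore (r : P → P → Prop) {D : Finset P} {ξ : P → ℤ} (S : (P → ℤ) → Set P) (O : Set P)
    (hS : ∀ h h' : P → ℤ, ∀ v, h v = h' v → (v ∈ S h ↔ v ∈ S h')) (F : (P → ℤ) → ℝ) :
    Ex (Om D ξ) F = Ex (Om D ξ) (fun h => Ex (Om (Un r D (S h) O) h) F) := by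
  refine Ex_tower (fun h => Om (Un r D (S h) O) h) (fun h hh => self_mem_Om (mem_Om.1 hh).1)
    (fun h hh h' h1 => Om_sub Un_sub hh h1) (fun h hh h' h1 => ?_) F
  have e : Zb r (S h') O = Zb r (S h) O := Zb_congr fun v hv => hS _ _ _
    ((mem_Om.1 h1).2 v fun c => (mem_Un.1 c).2 hv).symm
  have : Un r D (S h') O = Un r D (S h) O := by unfold Un; rw [e]
  rw [this]
  exact Om_eq_of_mem h1

/-- The zero set of a height function outside a small diamond. -/
def Zs (n : ℤ) (h : P → ℤ) : Set P := {v | h v = 0 ∧ v ∉ Dm 0 n}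

/-- No `*`-path of zeros crosses from the complement of `Dm 0 L` to `Dm 0 (n+5)`, stopping at
`Dm 0 n`. -/
def NoZ (L n : ℤ) (h : P → ℤ) : Prop :=
  ∀ v ∈ Dm 0 (n + 5), v ∉ Zr star (Zs n h) {v | v ∉ Dm 0 L}

open Classical in
/-- The class used to compare second moments. -/
def clA (L n : ℤ) (h : P → ℤ) : Finset (P → ℤ) :=
  if NoZ L n h then
    Om ((Dm 0 L).filter fun v => v ∉ Zb star (Zs n h) {v | v ∉ Dm 0 L} ∧
      Con adj2 {v | v ∉ Zr star (Zs n h) {v | v ∉ Dm 0 L}} 0 v) h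
  else absClass (Dm 0 L) (Dm 0 n) xi0 (fun v => |h v|)

lemma star_refl (u : P) : star u u := by unfold star; omega

/-- If no `*`-path of zeros crosses, then the component of the unexplored region around the origin
has an outer boundary without zeros. That boundary lies in a connected set of nonzero heights
(`bdry_connected`), so `h` has constant sign on it, and both second moments are larger by one. -/
lemma NoZ_class {L n : ℤ} (hn : n % 2 = 0) (hn0 : 0 ≤ n) (hnL : n ≤ L) {h : P → ℤ}
    (hh : isHom h) (hN : NoZ L n h) : W n + 2 ≤ Ex (clA L n h) G2 := by
  classical
  unfold clA
  rw [if_pos hN]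
  set O : Set P := {v | v ∉ Dm 0 L} with hO
  set Z := Zr star (Zs n h) O with hZ
  set U := (Dm 0 L).filter fun v => v ∉ Zb star (Zs n h) O ∧ Con adj2 {v | v ∉ Z} 0 v with hU
  have memU : ∀ v, v ∈ U ↔ v ∈ Dm 0 L ∧ v ∉ Zb star (Zs n h) O ∧ Con adj2 {v | v ∉ Z} 0 v := by
    intro v; rw [hU, Finset.mem_filter]
  have core : ∀ v ∈ Dm 0 (n + 3), v ∉ Zb star (Zs n h) O := by
    rintro v hv (h1 | ⟨z, hz, s⟩)
    · refine hN v ?_ h1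
      rw [mem_Dm] at *; omega
    · refine hN z ?_ hz
      rw [mem_Dm] at *
      have := dist1_tri z v 0; have := s.dist1_le; omega
  have coreU : Dm 0 (n + 2) ⊆ U := by
    intro v hv
    have hv3 : v ∈ Dm 0 (n + 3) := by rw [mem_Dm] at *; omega
    rw [memU]
    refine ⟨?_, core v hv3, ?_⟩
    · by_contra hc
      exact core v hv3 (Or.inl (sub_Zr hc))
    · refine (Dm_con (L := n + 3) (by rw [mem_Dm, dist1_self]; omega) hv3).mono (fun _ _ a => a) ?_
      intro w hw hwZ; exact core w hw (Or.inl hwZ)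
  -- the component of the complement of the explored set
  set U0 : Set P := {v | Con adj2 {v | v ∉ Z} 0 v} with hU0
  have zero_nZ : (0 : P) ∉ Z := fun h => core 0 (by rw [mem_Dm, dist1_self]; omega) (Or.inl h)
  have U0Z : ∀ u ∈ U0, u ∉ Z := fun u hu => Con.mem (S := {v | v ∉ Z}) hu zero_nZ
  have U0con : ∀ u ∈ U0, ∀ v ∈ U0, Con adj2 U0 u v := by
    have : ∀ u ∈ U0, Con adj2 U0 0 u ∧ u ∈ U0 := by
      intro u hu
      refine Con.inv (p := fun w => Con adj2 U0 0 w ∧ w ∈ U0) hu ⟨Con.refl _, Con.refl _⟩ ?_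
      intro a b hab ha hb ih
      have hb' : b ∈ U0 := ih.2.trans (Con.single hab ha hb)
      exact ⟨ih.1.trans (Con.single hab ih.2 hb'), hb'⟩
    exact fun u hu v hv => ((this u hu).1.symm adj2_symm).trans (this v hv).1
  have U0cl : ∀ u v, u ∈ U0 → adj2 u v → v ∉ Z → v ∈ U0 := fun u v hu a hv =>
    Con.trans hu (Con.single a (U0Z u hu) hv)
  have Zcon : ∀ u ∈ Z, ∀ v ∈ Z, Con star Z u v := by
    have OZ : O ⊆ Z := sub_Zr
    have toO : ∀ u ∈ Z, ∃ o ∈ O, Con star Z o u := by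
      rintro u ⟨o, ho, p⟩
      refine ⟨o, ho, ?_⟩
      refine (Con.inv (p := fun w => Con star Z o w ∧ w ∈ Z) p ⟨Con.refl _, OZ ho⟩ ?_).1
      intro a b hab ha hb ih
      have hbZ : b ∈ Z := by
        rcases hb with hb | hb
        · exact Zr_step ih.2 hab hb
        · exact OZ hb
      exact ⟨ih.1.trans (Con.single hab ih.2 hbZ), hbZ⟩
    intro u hu v hv
    obtain ⟨o, ho, p⟩ := toO u hu
    obtain ⟨o', ho', pv⟩ := toO v hv
    have := (Dm_compl_con (z := 0) (L := L) (by omega) ho ho').mono (r' := star) (S' := Z)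
      (fun _ _ a => a.star) OZ
    exact (p.symm star_symm).trans (this.trans pv)
  -- outer boundary vertices of `U` lie in the inner boundary of `U0` and carry nonzero heights
  have bd : ∀ u v, u ∈ U → v ∉ U → adj2 u v → v ∈ {w | w ∈ U0 ∧ ∃ z ∈ Z, star z w} := by
    intro u v hu hv a
    rw [memU] at hu hv
    have hvZ : v ∉ Z := fun hc => hu.2.1 (Or.inr ⟨v, hc, (adj2_symm a).star⟩)
    have hvU0 : v ∈ U0 := U0cl u v hu.2.2 a hvZ
    have hvD : v ∈ Dm 0 L := by
      by_contra hc; exact hvZ (sub_Zr hc)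
    refine ⟨hvU0, ?_⟩
    by_contra hc
    refine hv ⟨hvD, ?_, hvU0⟩
    rintro (h1 | h1)
    · exact hvZ h1
    · exact hc h1
  have nz : ∀ v ∈ {w | w ∈ U0 ∧ ∃ z ∈ Z, star z w}, h v ≠ 0 := by
    rintro v ⟨hv, hz⟩ h0
    have hb : v ∈ Zb star (Zs n h) O := Or.inr hz
    exact Zb_notMem hb (U0Z v hv) ⟨h0, fun hc => core v (by rw [mem_Dm] at *; omega) hb⟩
  have lc := fun u v => bdry_connected (u := u) (v := v) Zcon U0con U0Z U0cl
  by_cases hex : ∃ w ∈ {w | w ∈ U0 ∧ ∃ z ∈ Z, star z w}, 1 ≤ h w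
  · obtain ⟨w, hw, hw1⟩ := hex
    exact G2_pos_class hn hn0 hh coreU fun u v hu hv a =>
      sign_con hh nz (lc w v hw (bd u v hu hv a)) hw1
  · refine G2_neg_class hn hn0 hh coreU fun u v hu hv a => ?_
    have b := bd u v hu hv a
    have := nz v b
    have : ¬ 1 ≤ h v := fun hc => hex ⟨v, b, hc⟩
    omega

/-- The classes `clA` partition the height functions on `Dm 0 L`: if no path of
zeros crosses, a class is determined by the part revealed by the exploration, and otherwise by the
absolute values off `Dm 0 n`. -/
lemma clA_tower {L n : ℤ} (F : (P → ℤ) → ℝ) :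
    Ex (Om (Dm 0 L) xi0) F = Ex (Om (Dm 0 L) xi0) (fun h => Ex (clA L n h) F) := by
  classical
  have inv : ∀ h h' : P → ℤ, (∀ v ∈ Zb star (Zs n h) {v | v ∉ Dm 0 L}, v ∈ Zs n h ↔ v ∈ Zs n h') →
      Zr star (Zs n h') {v | v ∉ Dm 0 L} = Zr star (Zs n h) {v | v ∉ Dm 0 L} ∧
      Zb star (Zs n h') {v | v ∉ Dm 0 L} = Zb star (Zs n h) {v | v ∉ Dm 0 L} := fun h h' hv =>
    ⟨Zr_congr hv, Zb_congr hv⟩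
  refine Ex_tower (clA L n) ?_ ?_ ?_ F
  · intro h hh
    unfold clA; split_ifs
    · exact self_mem_Om (mem_Om.1 hh).1
    · exact mem_absClass.2 ⟨hh, fun _ _ => rfl⟩
  · intro h hh
    unfold clA; split_ifs
    · exact fun h' h1 => Om_sub (Finset.filter_subset _ _) hh h1
    · exact Finset.filter_subset _ _
  · intro h hh h' h1
    by_cases hN : NoZ L n h
    · unfold clA at h1 ⊢
      rw [if_pos hN] at h1 ⊢
      obtain ⟨e1, e2⟩ := inv h h' fun v hv => by
        have : h' v = h v := (mem_Om.1 h1).2 v fun c => (Finset.mem_filter.1 c).2.1 hv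
        simp only [Zs, Set.mem_ofPred_eq, this]
      have hN' : NoZ L n h' := by unfold NoZ at *; rw [e1]; exact hN
      rw [if_pos hN', e1, e2]
      exact Om_eq_of_mem h1
    · unfold clA at h1 ⊢
      rw [if_neg hN] at h1 ⊢
      have habs := (mem_absClass.1 h1).2
      have es : Zs n h' = Zs n h := by
        ext v; simp only [Zs, Set.mem_ofPred_eq]
        refine and_congr_left fun hv => ?_
        have := habs v hv
        rw [← abs_eq_zero, this, abs_eq_zero]
      have hN' : ¬ NoZ L n h' := by unfold NoZ at *; rw [es]; exact hN
      rw [if_neg hN']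
      ext g; simp only [mem_absClass]
      refine and_congr_right fun _ => forall₂_congr fun v hv => by rw [habs v hv]

/-- The probability that no `*`-path of zeros crosses is controlled by the growth of `W`. -/
lemma NoZ_prob {L n : ℤ} (hn : n % 2 = 0) (hn0 : 0 ≤ n) (hnL : n ≤ L) :
    W n + 2 * Ex (Om (Dm 0 L) xi0) (fun h => ind (NoZ L n h)) ≤ W L := by
  have : Ex (Om (Dm 0 L) xi0) (fun h => W n + 2 * ind (NoZ L n h)) ≤ W L := by
    have e : W L = Ex (Om (Dm 0 L) xi0) (fun h => Ex (clA L n h) G2) := clA_tower G2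
    rw [e]
    refine Ex_mono fun h hh => ?_
    by_cases hN : NoZ L n h
    · rw [ind_true hN]
      have := NoZ_class hn hn0 hnL (mem_Om.1 hh).1 hN
      linarith
    · rw [ind_false hN]
      unfold clA; rw [if_neg hN]
      have := abs_SD (D := Dm 0 n) (D' := Dm 0 n) (U := Dm 0 L) (ξ := xi0) (η := fun v => |h v|)
        (Dm_even (by simp [hn])) subset_rfl (Dm_mono (by rw [dist1_self]; omega)) xi0_nonneg
        (mem_Om.2 ⟨(mem_Om.1 hh).1.abs, fun v hv => by
          rw [(mem_Om.1 hh).2 v hv, abs_of_nonneg (xi0_nonneg v)]⟩) (fun v => abs_nonneg _)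
        G2 (fun a b h => G2_mono h)
      unfold W; linarith
  rwa [Ex_add, Ex_const (Om_nonempty xi0_isHom), Ex_mul] at this

lemma W_mono {n L : ℤ} (hn : n % 2 = 0) (hnL : n ≤ L) : W n ≤ W L :=
  abs_SD' (Dm_even (by simp [hn])) (Dm_mono (by rw [dist1_self]; omega)) xi0_isHom xi0_nonneg _
    fun _ _ h => G2_mono h

lemma W_le {C : ℝ} (hC : Loc C) {L : ℤ} (hL : L % 2 = 0) : W L ≤ 4 * C + 4 := by
  have h1 := hC.all (D := Dm 0 L) (Dm_even (by simp [hL])) 0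
  have h2 := hC.all (D := Dm 0 L) (Dm_even (by simp [hL])) (1, 0)
  unfold W G2
  rw [Ex_add]; linarith

/-- Zeros percolate: uniformly in the domain, a large diamond is joined to the complement of the
domain by a `*`-path of zeros. -/
lemma NoZ_small {C : ℝ} (hC : Loc C) {ε : ℝ} (hε : 0 < ε) : ∃ n : ℤ, n % 2 = 0 ∧ 0 ≤ n ∧
    ∀ L, L % 2 = 0 → n ≤ L → Ex (Om (Dm 0 L) xi0) (fun h => ind (NoZ L n h)) ≤ ε := by
  set A : Set ℝ := {w | ∃ L : ℤ, L % 2 = 0 ∧ 0 ≤ L ∧ w = W L} with hA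
  have bdd : BddAbove A := ⟨4 * C + 4, by rintro w ⟨L, h1, -, rfl⟩; exact W_le hC h1⟩
  obtain ⟨w, ⟨n, h1, h2, rfl⟩, h3⟩ := exists_lt_of_lt_csSup
    (⟨W 0, 0, by norm_num, le_rfl, rfl⟩ : A.Nonempty) (sub_lt_self (sSup A) hε)
  refine ⟨n, h1, h2, fun L hL hnL => ?_⟩
  have := NoZ_prob h1 h2 hnL
  have := le_csSup bdd ⟨L, hL, by omega, rfl⟩
  linarith [Ex_nonneg (s := Om (Dm 0 L) xi0) (F := fun h => ind (NoZ L n h)) fun h _ => ind_nonneg _]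

/-! ### Counting trifurcations -/

/-- The component of `p` in `V \ I` touches `I`. -/
def Touch (V I : Set P) (p : P) : Prop :=
  ∃ c u, Con adj2 (V \ I) p c ∧ adj2 c u ∧ u ∈ I

lemma Con.avoid {V I I' : Set P} {a b : P} (h : Con adj2 (V \ I) a b)
    (ha : ∀ w ∈ I', ¬ Con adj2 (V \ I) a w) : Con adj2 (V \ I') a b := by
  refine (Con.inv (p := fun w => Con adj2 (V \ I') a w ∧ Con adj2 (V \ I) a w) h
    ⟨Con.refl _, Con.refl _⟩ ?_).1
  intro x y a1 hx hy ih
  have hy' : Con adj2 (V \ I) a y := ih.2.trans (Con.single a1 hx hy)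
  exact ⟨ih.1.trans (Con.single a1 ⟨hx.1, fun c => ha x c ih.2⟩ ⟨hy.1, fun c => ha y c hy'⟩), hy'⟩

/-- A branch of `V \ I` that avoids `I'` reaches, off `I'`, all of the connected set `I`. -/
lemma Touch.hit {V I I' : Set P} {q : P} (h : Touch V I q) (hI : I ⊆ V)
    (hq : q ∈ V \ I) (dis : ∀ w ∈ I, w ∉ I')
    (ha : ∀ w ∈ I', ¬ Con adj2 (V \ I) q w) (hc : ∀ u ∈ I, ∀ v ∈ I, Con adj2 I u v) :
    ∀ u ∈ I, Con adj2 (V \ I') q u := by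
  obtain ⟨c, u, h1, h2, h3⟩ := h
  intro u' hu'
  have hcV : c ∈ V \ I := h1.mem hq
  have hc' : c ∈ V \ I' := ⟨hcV.1, fun hc => ha c hc h1⟩
  have hu : u ∈ V \ I' := ⟨hI h3, dis u h3⟩
  have sub : I ⊆ V \ I' := fun w hw => ⟨hI hw, dis w hw⟩
  refine (h1.avoid ha).trans ((Con.single h2 hc' hu).trans ?_)
  exact (hc u h3 u' hu').mono (fun _ _ a => a) sub

/-- The data attached to a trifurcation: `p` is the largest boundary point of its branch, and two
other branches contain larger boundary points. -/
structure Tri (V I Y : Set P) (p q1 q2 : P) : Prop where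
  hp : p ∈ V \ I
  h1 : q1 ∈ V \ I
  h2 : q2 ∈ V \ I
  y1 : q1 ∈ Y
  y2 : q2 ∈ Y
  lt1 : toLex p < toLex q1
  lt2 : toLex p < toLex q2
  max : ∀ y ∈ Y, Con adj2 (V \ I) p y → toLex y ≤ toLex p
  tp : Touch V I p
  t1 : Touch V I q1
  t2 : Touch V I q2
  sep : ¬ Con adj2 (V \ I) q1 q2

/-- The connected set `I'` meets at most one of the branches of `q1` and `q2`, so the other one
stays off `I'` and joins a boundary point larger than `p` to `I`. -/
lemma Tri.aux {V I I' Y : Set P} {p q1 q2 : P} (h : Tri V I Y p q1 q2)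
    (hI : I ⊆ V) (hI' : I' ⊆ V) (dis : ∀ w ∈ I, w ∉ I')
    (hc : ∀ u ∈ I, ∀ v ∈ I, Con adj2 I u v) (hc' : ∀ u ∈ I', ∀ v ∈ I', Con adj2 I' u v) :
    ∃ q ∈ Y, toLex p < toLex q ∧ ∀ u ∈ I, Con adj2 (V \ I') q u := by
  by_cases m1 : ∃ w ∈ I', Con adj2 (V \ I) q1 w
  · obtain ⟨w, hw, p1⟩ := m1
    refine ⟨q2, h.y2, h.lt2, h.t2.hit hI h.h2 dis ?_ hc⟩
    intro w' hw' p2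
    have sub : I' ⊆ V \ I := fun x hx => ⟨hI' hx, fun c => dis x c hx⟩
    exact h.sep (p1.trans (((hc' w hw w' hw').mono (fun _ _ a => a) sub).trans
      (p2.symm adj2_symm)))
  · push Not at m1
    exact ⟨q1, h.y1, h.lt1, h.t1.hit hI h.h1 dis m1 hc⟩

/-- Disjoint trifurcations have distinct points `p`. This injects the trifurcations into the
boundary, which bounds their number. -/
lemma Tri.inj {V I I' Y : Set P} {p q1 q2 q1' q2' : P} (h : Tri V I Y p q1 q2)
    (h' : Tri V I' Y p q1' q2') (hI : I ⊆ V) (hI' : I' ⊆ V) (dis : ∀ w ∈ I, w ∉ I')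
    (hc : ∀ u ∈ I, ∀ v ∈ I, Con adj2 I u v) (hc' : ∀ u ∈ I', ∀ v ∈ I', Con adj2 I' u v) : False := by
  obtain ⟨q, hq, hlt, hcon⟩ := h.aux hI hI' dis hc hc'
  -- `p` cannot reach `I` off `I'`, since it would then reach `q`
  have no : ∀ u ∈ I, ¬ Con adj2 (V \ I') p u := fun u hu pu =>
    absurd (h'.max q hq (pu.trans ((hcon u hu).symm adj2_symm))) (not_le.2 hlt)
  obtain ⟨q', hq', hlt', hcon'⟩ := h'.aux hI' hI (fun w h1 h2 => dis w h2 h1) hc' hc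
  have no' : ∀ u ∈ I', ¬ Con adj2 (V \ I) p u := fun u hu pu =>
    absurd (h.max q' hq' (pu.trans ((hcon' u hu).symm adj2_symm))) (not_le.2 hlt')
  obtain ⟨c, u, -, -, hu⟩ := id h.tp
  exact no u hu (h.tp.hit hI h.hp dis no' hc u hu)

lemma Touch.congr {V I : Set P} {p q : P} (h : Touch V I p) (pq : Con adj2 (V \ I) p q) :
    Touch V I q := by
  obtain ⟨c, u, h1, h2, h3⟩ := h
  exact ⟨c, u, (pq.symm adj2_symm).trans h1, h2, h3⟩

open Classical in
/-- Each of the three branches has a largest boundary point; `p` is the smallest of the three. -/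
lemma exists_Tri {V I : Set P} (Y : Finset P) (y : Fin 3 → P) (hy : ∀ i, y i ∈ Y ∧ y i ∈ V \ I)
    (t : ∀ i, Touch V I (y i)) (sep : ∀ i j, i ≠ j → ¬ Con adj2 (V \ I) (y i) (y j)) :
    ∃ p q1 q2, p ∈ Y ∧ Tri V I (Y : Set P) p q1 q2 := by
  have mx : ∀ i, ∃ q ∈ Y, Con adj2 (V \ I) (y i) q ∧
      ∀ x ∈ Y, Con adj2 (V \ I) (y i) x → toLex x ≤ toLex q := by
    intro i
    obtain ⟨q, hq, hm⟩ := Finset.exists_max_image (Y.filter fun x => Con adj2 (V \ I) (y i) x)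
      (fun x => toLex x) ⟨y i, Finset.mem_filter.2 ⟨(hy i).1, Con.refl _⟩⟩
    rw [Finset.mem_filter] at hq
    exact ⟨q, hq.1, hq.2, fun x hx hc => hm x (Finset.mem_filter.2 ⟨hx, hc⟩)⟩
  choose q hqY hq hm using mx
  have qsep : ∀ i j, i ≠ j → ¬ Con adj2 (V \ I) (q i) (q j) := fun i j hij hc =>
    sep i j hij ((hq i).trans (hc.trans ((hq j).symm adj2_symm)))
  obtain ⟨i, -, hi⟩ := Finset.exists_min_image (Finset.univ : Finset (Fin 3))
    (fun i => toLex (q i)) ⟨0, Finset.mem_univ _⟩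
  obtain ⟨j, k, hij, hik, hjk⟩ : ∃ j k : Fin 3, i ≠ j ∧ i ≠ k ∧ j ≠ k := by
    fin_cases i
    · exact ⟨1, 2, by decide⟩
    · exact ⟨0, 2, by decide⟩
    · exact ⟨0, 1, by decide⟩
  have lt : ∀ j, i ≠ j → toLex (q i) < toLex (q j) := fun j hij =>
    lt_of_le_of_ne (hi j (Finset.mem_univ _)) fun e => qsep i j hij (by
      rw [toLex.injective e]; exact Con.refl _)
  exact ⟨q i, q j, q k, hqY i,
    { hp := (hq i).mem (hy i).2
      h1 := (hq j).mem (hy j).2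
      h2 := (hq k).mem (hy k).2
      y1 := hqY j
      y2 := hqY k
      lt1 := lt j hij
      lt2 := lt k hik
      max := fun x hx hc => hm i x hx ((hq i).trans hc)
      tp := (t i).congr (hq i)
      t1 := (t j).congr (hq j)
      t2 := (t k).congr (hq k)
      sep := qsep j k hjk }⟩

/-- The number of disjoint trifurcations is at most the number of boundary points. -/
theorem card_trifurcation (V : Set P) (Y Z : Finset P) (I : P → Set P)
    (hI : ∀ z ∈ Z, I z ⊆ V) (hc : ∀ z ∈ Z, ∀ u ∈ I z, ∀ v ∈ I z, Con adj2 (I z) u v)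
    (dis : ∀ z ∈ Z, ∀ z' ∈ Z, z ≠ z' → ∀ w ∈ I z, w ∉ I z')
    (tri : ∀ z ∈ Z, ∃ y : Fin 3 → P, (∀ i, y i ∈ Y ∧ y i ∈ V \ I z) ∧
      (∀ i, Touch V (I z) (y i)) ∧ ∀ i j, i ≠ j → ¬ Con adj2 (V \ I z) (y i) (y j)) :
    Z.card ≤ Y.card := by
  have : ∀ z, ∃ p q1 q2, z ∈ Z → p ∈ Y ∧ Tri V (I z) (Y : Set P) p q1 q2 := by
    intro z
    by_cases hz : z ∈ Z
    · obtain ⟨y, h1, h2, h3⟩ := tri z hz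
      obtain ⟨p, q1, q2, h⟩ := exists_Tri Y y h1 h2 h3
      exact ⟨p, q1, q2, fun _ => h⟩
    · exact ⟨0, 0, 0, fun h => absurd h hz⟩
  choose p q1 q2 h using this
  refine Finset.card_le_card_of_injOn p (fun z hz => (h z hz).1) ?_
  intro z hz z' hz' e
  by_contra hne
  have a := (h z hz).2
  have b := (h z' hz').2
  rw [← e] at b
  exact a.inj b (hI z hz) (hI z' hz') (dis z hz z' hz' hne) (hc z hz) (hc z' hz')

/-! ### Crossings of a rectangle -/

/-- The rectangle `[l,r] × [b,t]`. -/
def Rect (l r b t : ℤ) : Set P := {v | (l ≤ v.1 ∧ v.1 ≤ r) ∧ (b ≤ v.2 ∧ v.2 ≤ t)}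

open Classical in
/-- One if `v` lies in column `x` strictly below height `y`. -/
def below (v : P) (x y : ℤ) : ZMod 2 := if v.1 = x ∧ v.2 < y then 1 else 0

open Classical in
/-- The crossing parity of a `*`-path: `g x y` counts, modulo two, the steps of the path between the
columns `x` and `x+1` that pass below height `y`. -/
lemma crossing_parity {l r b t : ℤ} {B : Set P} (hB : B ⊆ Rect l r b t) {e w : P}
    (p : Con star B e w) :
    ∃ g : ℤ → ℤ → ZMod 2, (∀ x y, (x, y) ∉ B → (x, y + 1) ∉ B → g x (y + 1) = g x y) ∧
      (∀ x y, (x + 1, y) ∉ B → g (x + 1) y = g x y + below e (x + 1) y + below w (x + 1) y) ∧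
      ∀ x y, x < l ∨ r ≤ x ∨ y ≤ b → g x y = 0 := by
  induction p with
  | refl =>
    refine ⟨fun _ _ => 0, fun _ _ _ _ => rfl, fun x y _ => ?_, fun _ _ _ => rfl⟩
    rw [zero_add, CharTwo.add_self_eq_zero]
  | @tail u v _ h ih =>
    obtain ⟨g, h1, h2, h3⟩ := ih
    obtain ⟨⟨s1, s2⟩, hu, hv⟩ := h
    have bu := hB hu
    have bv := hB hv
    obtain ⟨u1, u2⟩ := u
    obtain ⟨v1, v2⟩ := v
    simp only [Rect, Set.mem_ofPred_eq] at bu bv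
    dsimp only at s1 s2
    let d : ℤ → ℤ → ZMod 2 := fun x y =>
      if x = min u1 v1 ∧ u1 ≠ v1 ∧ u2 + v2 < 2 * y then 1 else 0
    have ne : ∀ x y, (x, y) ∉ B → ¬ (x = u1 ∧ y = u2) ∧ ¬ (x = v1 ∧ y = v2) := by
      intro x y hxy
      exact ⟨by rintro ⟨rfl, rfl⟩; exact hxy hu, by rintro ⟨rfl, rfl⟩; exact hxy hv⟩
    refine ⟨fun x y => g x y + d x y, fun x y hx hy => ?_, fun x y hx => ?_, fun x y hx => ?_⟩
    · have a := ne _ _ hx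
      have b := ne _ _ hy
      have : d x (y + 1) = d x y := by
        simp only [d]
        refine if_congr ?_ rfl rfl
        rcases lt_trichotomy u1 v1 with c | c | c
        · rw [min_eq_left c.le]; omega
        · omega
        · rw [min_eq_right c.le]; omega
      change g x (y + 1) + d x (y + 1) = g x y + d x y
      rw [h1 x y hx hy, this]
    · have a := ne _ _ hx
      change g (x + 1) y + d (x + 1) y = g x y + d x y + below e (x + 1) y + below (v1, v2) (x + 1) y
      rw [h2 x y hx]
      have key : d (x + 1) y = d x y + below (u1, u2) (x + 1) y + below (v1, v2) (x + 1) y := by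
        have two : (1 : ZMod 2) + 1 = 0 := by decide
        simp only [d, below]
        rcases lt_trichotomy u1 v1 with c | c | c
        · rw [min_eq_left c.le]
          by_cases q1 : x + 1 = u1
          · rw [if_neg (show ¬ (x = u1 ∧ _) by omega), if_neg (show ¬ (v1 = x + 1 ∧ _) by omega),
              zero_add, add_zero]
            exact if_congr (by omega) rfl rfl
          · rw [if_neg (show ¬ (x + 1 = u1 ∧ _) by omega),
              if_neg (show ¬ (u1 = x + 1 ∧ _) by omega), add_zero,
              if_congr (show (v1 = x + 1 ∧ v2 < y) ↔ (x = u1 ∧ u1 ≠ v1 ∧ u2 + v2 < 2 * y) by omega)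
              rfl rfl, CharTwo.add_self_eq_zero]
        · rw [if_neg (by omega), if_neg (by omega), zero_add,
            if_congr (show (v1 = x + 1 ∧ v2 < y) ↔ (u1 = x + 1 ∧ u2 < y) by omega) rfl rfl,
            CharTwo.add_self_eq_zero]
        · rw [min_eq_right c.le]
          by_cases q1 : x + 1 = v1
          · rw [if_neg (show ¬ (x = v1 ∧ _) by omega), if_neg (show ¬ (u1 = x + 1 ∧ _) by omega),
              zero_add, zero_add]
            exact if_congr (by omega) rfl rfl
          · rw [if_neg (show ¬ (x + 1 = v1 ∧ _) by omega),
              if_neg (show ¬ (v1 = x + 1 ∧ _) by omega), add_zero,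
              if_congr (show (u1 = x + 1 ∧ u2 < y) ↔ (x = v1 ∧ u1 ≠ v1 ∧ u2 + v2 < 2 * y) by omega)
              rfl rfl, CharTwo.add_self_eq_zero]
      rw [key]
      have := CharTwo.add_self_eq_zero (below (u1, u2) (x + 1) y)
      linear_combination this
    · have : d x y = 0 := by
        refine if_neg ?_
        rcases lt_trichotomy u1 v1 with c | c | c
        · rw [min_eq_left c.le]; omega
        · omega
        · rw [min_eq_right c.le]; omega
      simp only [h3 x y hx, this, add_zero]

/-- A `*`-path from the top side to the left side of a rectangle separates the part of the left
side above its endpoint from the right and bottom sides. -/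
theorem crossing_sep {l r b t : ℤ} {B : Set P} (hB : B ⊆ Rect l r b t) {e1 e2 : P}
    (ht : e1.2 = t) (hl : e2.1 = l) (p : Con star B e2 e1) {a c : P}
    (ha : a ∈ Rect l r b t \ B) (hal : a.1 = l) (hae : e2.2 < a.2) (hc : c.1 = r ∨ c.2 = b)
    (q : Con adj2 (Rect l r b t \ B) a c) : False := by
  obtain ⟨g, h1, h2, h3⟩ := crossing_parity hB p
  have inv : g c.1 c.2 = g a.1 a.2 := by
    have H : ∀ x y, (x, y) ∈ Rect l r b t \ B → (x + 1, y) ∈ Rect l r b t \ B →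
        g (x + 1) y = g x y := by
      intro x y hx hy
      have hx' := hx.1; have hy' := hy.1
      simp only [Rect, Set.mem_ofPred_eq] at hx' hy'
      have z1 : below e2 (x + 1) y = 0 := if_neg (by omega)
      have z2 : below e1 (x + 1) y = 0 := if_neg (by omega)
      rw [h2 x y hy.2, z1, z2, add_zero, add_zero]
    refine q.inv (p := fun w => g w.1 w.2 = g a.1 a.2) rfl ?_
    rintro ⟨x, y⟩ ⟨x', y'⟩ a hx hy ih
    rw [adj2_iff] at a
    dsimp only at a ih ⊢
    rw [← ih]
    rcases a with ⟨rfl, rfl | rfl⟩ | ⟨rfl, rfl | rfl⟩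
    · exact (h1 _ _ hy.2 hx.2).symm
    · exact h1 _ _ hx.2 hy.2
    · exact (H _ _ hy hx).symm
    · exact H _ _ hx hy
  have g0 : g c.1 c.2 = 0 := h3 _ _ (by omega)
  have g1 : g a.1 a.2 = 1 := by
    have ha1 := ha.1
    simp only [Rect, Set.mem_ofPred_eq] at ha1
    have := h2 (l - 1) a.2 (by rw [sub_add_cancel, ← hal]; exact ha.2)
    have z1 : below e2 (l - 1 + 1) a.2 = 1 := if_pos (by omega)
    have z2 : below e1 (l - 1 + 1) a.2 = 0 := if_neg (by omega)
    rw [z1, z2, h3 (l - 1) _ (Or.inl (by omega)), sub_add_cancel] at this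
    rw [hal, this]; decide
  rw [g0, g1] at inv
  exact absurd inv (by decide)

/-- The mirror image of `crossing_sep`. -/
theorem crossing_sep' {l r b t : ℤ} {B : Set P} (hB : B ⊆ Rect l r b t) {e1 e2 : P}
    (ht : e1.2 = t) (hl : e2.1 = r) (p : Con star B e2 e1) {a c : P}
    (ha : a ∈ Rect l r b t \ B) (hal : a.1 = r) (hae : e2.2 < a.2) (hc : c.1 = l ∨ c.2 = b)
    (q : Con adj2 (Rect l r b t \ B) a c) : False := by
  let m : P → P := fun v => (-v.1, v.2)
  have mm : ∀ v, m (m v) = v := fun v => by simp [m]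
  have mR : ∀ v, m v ∈ Rect (-r) (-l) b t ↔ v ∈ Rect l r b t := by
    intro v; simp only [m, Rect, Set.mem_ofPred_eq]; omega
  have map : ∀ (ρ : P → P → Prop) (S : Set P), (∀ u v, ρ u v → ρ (m u) (m v)) → ∀ u v,
      Con ρ S u v → Con ρ {w | m w ∈ S} (m u) (m v) := by
    intro ρ S hρ u v h
    induction h with
    | refl => exact Con.refl _
    | tail _ h ih =>
      exact ih.trans (Con.single (hρ _ _ h.1) (by simpa [mm] using h.2.1) (by simpa [mm] using h.2.2))
  refine crossing_sep (l := -r) (r := -l) (b := b) (t := t) (B := {w | m w ∈ B}) (e1 := m e1)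
    (e2 := m e2) (a := m a) (c := m c) ?_ ht (by simp [m, hl])
    (map star B (fun u v h => ?_) _ _ p) ?_ (by simp [m, hal]) hae ?_ ?_
  · intro w hw; have := hB hw; rwa [← mR, mm] at this
  · simp only [m, star] at *; omega
  · exact ⟨(mR a).2 ha.1, by simpa [mm] using ha.2⟩
  · simp only [m]; omega
  · refine (map adj2 _ (fun u v h => ?_) _ _ q).mono (fun _ _ a => a) ?_
    · rw [adj2_iff] at *; simp only [m]; omega
    · intro w hw
      exact ⟨by rw [← mm w]; exact (mR (m w)).2 hw.1, hw.2⟩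

/-! ### Boxes, arms and six alternating arms -/

/-- The sup-norm box of radius `K` about `z`. -/
def Bx (z : P) (K : ℤ) : Set P := Rect (z.1 - K) (z.1 + K) (z.2 - K) (z.2 + K)

lemma mem_Bx {z v : P} {K : ℤ} : v ∈ Bx z K ↔
    (z.1 - K ≤ v.1 ∧ v.1 ≤ z.1 + K) ∧ (z.2 - K ≤ v.2 ∧ v.2 ≤ z.2 + K) := Iff.rfl

lemma Bx_mono {z z' : P} {K K' : ℤ} (h1 : |z.1 - z'.1| + K ≤ K') (h2 : |z.2 - z'.2| + K ≤ K') :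
    Bx z K ⊆ Bx z' K' := by
  intro v hv
  rw [mem_Bx] at *
  have := abs_le.1 (le_refl |z.1 - z'.1|)
  have := abs_le.1 (le_refl |z.2 - z'.2|)
  omega

lemma Bx_con {z u v : P} {K : ℤ} (hu : u ∈ Bx z K) (hv : v ∈ Bx z K) : Con adj2 (Bx z K) u v := by
  rw [mem_Bx] at hu hv
  have a : Con adj2 (Bx z K) (u.1, u.2) (v.1, u.2) := Con.hseg' fun x h1 h2 => by
    rw [mem_Bx]; dsimp only; omega
  have b : Con adj2 (Bx z K) (v.1, u.2) (v.1, v.2) := Con.vseg' fun x h1 h2 => by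
    rw [mem_Bx]; dsimp only; omega
  exact a.trans b

/-- The eight half-sides of `Bx z K`: `σ` chooses the side, `τ` the half, and `κ` tells horizontal
sides from vertical ones. -/
def Hf (z : P) (K : ℤ) (κ : Bool) (σ τ : ℤ) : Set P :=
  if κ then {v | σ * (v.2 - z.2) = K ∧ 0 ≤ τ * (v.1 - z.1) ∧ τ * (v.1 - z.1) ≤ K}
  else {v | σ * (v.1 - z.1) = K ∧ 0 ≤ τ * (v.2 - z.2) ∧ τ * (v.2 - z.2) ≤ K}

/-- An arm: an `r`-path of `S`-vertices from the core `Bx z n` to `side`, inside `Bx z K`. Vertices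
of the core are free. -/
def Arm (r : P → P → Prop) (S : Set P) (z : P) (n K : ℤ) (side : Set P) : Prop :=
  ∃ u ∈ Bx z n, ∃ v ∈ side, Con r (S ∩ Bx z K ∪ Bx z n) u v

lemma Arm.mono {r : P → P → Prop} {S S' : Set P} {z : P} {n K : ℤ} {side : Set P}
    (h : Arm r S z n K side) (hS : S ∩ Bx z K ⊆ S') : Arm r S' z n K side := by
  obtain ⟨u, hu, v, hv, p⟩ := h
  exact ⟨u, hu, v, hv, p.mono (fun _ _ a => a)
    (Set.union_subset_union_left _ (Set.subset_inter hS Set.inter_subset_right))⟩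

/-- Six arms that make `z` a trifurcation after a local change. -/
def Six (A B : Set P) (z : P) (n K : ℤ) : Prop :=
  (Arm adj2 A z n K (Hf z K false (-1) 1) ∧ Arm adj2 A z n K (Hf z K false 1 1) ∧
    Arm adj2 A z n K (Hf z K true (-1) 1)) ∧
  Arm star B z n K (Hf z K true 1 1) ∧ Arm star B z n K (Hf z K false (-1) (-1)) ∧
    Arm star B z n K (Hf z K false 1 (-1))

lemma Con.last_exit {r : P → P → Prop} {S I : Set P} {u v : P} (h : Con r S u v) (hu : u ∈ I)
    (hv : v ∉ I) : ∃ c x, c ∈ I ∧ r c x ∧ x ∈ S \ I ∧ Con r (S \ I) x v := by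
  have : v ∈ I ∨ ∃ c x, c ∈ I ∧ r c x ∧ x ∈ S \ I ∧ Con r (S \ I) x v := by
    induction h with
    | refl => exact Or.inl hu
    | @tail w w' _ h ih =>
      by_cases hw' : w' ∈ I
      · exact Or.inl hw'
      right
      by_cases hw : w ∈ I
      · exact ⟨w, w', hw, h.1, ⟨h.2.2, hw'⟩, Con.refl _⟩
      · obtain ⟨c, x, h1, h2, h3, h4⟩ := (ih hw).resolve_left hw
        exact ⟨c, x, h1, h2, h3, h4.trans (Con.single h.1 ⟨h.2.1, hw⟩ ⟨h.2.2, hw'⟩)⟩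
  exact this.resolve_left hv

lemma Con.first_hit {S : Set P} {z u v : P} {N : ℤ} (h : Con adj2 S u v) (hu : u ∈ Bx z N)
    (hv : v ∉ Bx z (N - 1)) : ∃ y, y ∈ Bx z N ∧ y ∉ Bx z (N - 1) ∧ Con adj2 (S ∩ Bx z N) u y := by
  have : (v ∈ Bx z N ∧ Con adj2 (S ∩ Bx z N) u v) ∨
      ∃ y, y ∈ Bx z N ∧ y ∉ Bx z (N - 1) ∧ Con adj2 (S ∩ Bx z N) u y := by
    clear hv
    induction h with
    | refl => exact Or.inl ⟨hu, Con.refl _⟩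
    | @tail w w' _ h ih =>
      by_cases hw : w ∈ Bx z (N - 1)
      · have hwN : w ∈ Bx z N := by rw [mem_Bx] at *; omega
        rcases ih with ih | ih
        · left
          have : w' ∈ Bx z N := by
            have := h.1; rw [adj2_iff] at this; rw [mem_Bx] at *; omega
          exact ⟨this, ih.2.trans (Con.single h.1 ⟨h.2.1, hwN⟩ ⟨h.2.2, this⟩)⟩
        · exact Or.inr ih
      · rcases ih with ih | ih
        · exact Or.inr ⟨w, ih.1, hw, ih.2⟩
        · exact Or.inr ih
  rcases this with h | h
  · exact ⟨v, h.1, hv, h.2⟩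
  · exact h

lemma star_Bx_con {S : Set P} {z : P} {n : ℤ} {u v : P} (hu : u ∈ Bx z n) (hv : v ∈ Bx z n) :
    Con star (S ∪ Bx z n) u v :=
  (Bx_con hu hv).mono (fun _ _ a => adj2.star a) (Set.subset_union_right)

/-- Star arms to the top side and to the lower halves of the left and right sides separate
disjoint arms ending in the upper left, the upper right and the bottom. -/
lemma Six.sep {B : Set P} {z : P} {n K : ℤ} (hn : n < K)
    (bT : Arm star B z n K (Hf z K true 1 1)) (bL : Arm star B z n K (Hf z K false (-1) (-1)))
    (bR : Arm star B z n K (Hf z K false 1 (-1))) (v : Fin 3 → P)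
    (hB : ∀ i, v i ∈ Bx z K \ (B ∩ Bx z K ∪ Bx z n))
    (h0 : v 0 ∈ Hf z K false (-1) 1) (h1 : v 1 ∈ Hf z K false 1 1) (h2 : v 2 ∈ Hf z K true (-1) 1) :
    ∀ i j, i ≠ j → ¬ Con adj2 (Bx z K \ (B ∩ Bx z K ∪ Bx z n)) (v i) (v j) := by
  obtain ⟨t, ht, e1, he1, p1⟩ := bT
  obtain ⟨l, hl, e2, he2, p2⟩ := bL
  obtain ⟨r, hr, e3, he3, p3⟩ := bR
  set B' := B ∩ Bx z K ∪ Bx z n with hB'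
  have sub : B' ⊆ Bx z K := by
    rintro w (hw | hw)
    · exact hw.2
    · rw [mem_Bx] at *; omega
  have m2 : e2 ∈ B' := p2.mem (Or.inr hl)
  have m3 : e3 ∈ B' := p3.mem (Or.inr hr)
  have q2 : Con star B' e2 e1 :=
    (p2.symm star_symm).trans ((star_Bx_con hl ht).trans p1)
  have q3 : Con star B' e3 e1 :=
    (p3.symm star_symm).trans ((star_Bx_con hr ht).trans p1)
  simp only [Hf, if_true, Set.mem_ofPred_eq, Bool.false_eq_true, if_false] at h0 h1 h2 he1 he2 he3
  have n2 : v 0 ≠ e2 := fun e => (hB 0).2 (e ▸ m2)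
  have n3 : v 1 ≠ e3 := fun e => (hB 1).2 (e ▸ m3)
  have l2 : e2.2 < (v 0).2 := by
    refine lt_of_le_of_ne (by omega) fun e => n2 (Prod.ext (by omega) e.symm)
  have l3 : e3.2 < (v 1).2 := by
    refine lt_of_le_of_ne (by omega) fun e => n3 (Prod.ext (by omega) e.symm)
  have c01 : ¬ Con adj2 (Bx z K \ B') (v 0) (v 1) := fun q =>
    crossing_sep sub (by omega) (by omega) q2 (hB 0) (by omega) l2 (Or.inl (by omega)) q
  have c02 : ¬ Con adj2 (Bx z K \ B') (v 0) (v 2) := fun q =>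
    crossing_sep sub (by omega) (by omega) q2 (hB 0) (by omega) l2 (Or.inr (by omega)) q
  have c12 : ¬ Con adj2 (Bx z K \ B') (v 1) (v 2) := fun q =>
    crossing_sep' sub (by omega) (by omega) q3 (hB 1) (by omega) l3 (Or.inr (by omega)) q
  intro i j hij q
  fin_cases i <;> fin_cases j <;> first
    | exact hij rfl | exact c01 q | exact c02 q | exact c12 q
    | exact c01 (q.symm adj2_symm) | exact c02 (q.symm adj2_symm) | exact c12 (q.symm adj2_symm)

/-- The conclusion about `z`: removing `I` from the set `V` leaves three branches that touch `I` and
reach `Y`. -/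
def Trif (V I : Set P) (Y : Finset P) : Prop :=
  ∃ y : Fin 3 → P, (∀ i, y i ∈ Y ∧ y i ∈ V \ I) ∧ (∀ i, Touch V I (y i)) ∧
    ∀ i j, i ≠ j → ¬ Con adj2 (V \ I) (y i) (y j)

open Classical in
/-- The sites of `Bx 0 N` next to its complement. -/
def BdN (N : ℤ) : Finset P :=
  ((Finset.Icc (-N) N) ×ˢ (Finset.Icc (-N) N)).filter fun v => v ∉ Bx 0 (N - 1)

lemma mem_BdN {N : ℤ} {v : P} : v ∈ BdN N ↔ v ∈ Bx 0 N ∧ v ∉ Bx 0 (N - 1) := by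
  unfold BdN
  simp only [Finset.mem_filter, Finset.mem_product, Finset.mem_Icc]
  refine and_congr_left fun _ => ?_
  rw [mem_Bx]
  simp only [Prod.fst_zero, Prod.snd_zero, zero_sub, zero_add]

lemma card_BdN {N : ℤ} (hN : 1 ≤ N) : ((BdN N).card : ℝ) ≤ 8 * N := by
  classical
  have e : BdN N ⊆ ((Finset.Icc (-N) N) ×ˢ (Finset.Icc (-N) N)) \
      ((Finset.Icc (-(N-1)) (N-1)) ×ˢ (Finset.Icc (-(N-1)) (N-1))) := by
    intro v hv
    rw [mem_BdN, mem_Bx, mem_Bx] at hv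
    simp only [Prod.fst_zero, Prod.snd_zero] at hv
    simp only [Finset.mem_sdiff, Finset.mem_product, Finset.mem_Icc]
    omega
  have h1 := Finset.card_le_card e
  rw [Finset.card_sdiff_of_subset (Finset.product_subset_product
      (Finset.Icc_subset_Icc (by omega) (by omega)) (Finset.Icc_subset_Icc (by omega) (by omega))),
    Finset.card_product, Finset.card_product, Int.card_Icc, Int.card_Icc] at h1
  obtain ⟨m, rfl⟩ := Int.le.dest hN
  have e1 : (1 + (m:ℤ) + 1 - -(1 + (m:ℤ))).toNat = 2 * m + 3 := by omega
  have e2 : (1 + (m:ℤ) - 1 + 1 - -(1 + (m:ℤ) - 1)).toNat = 2 * m + 1 := by omega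
  rw [e1, e2] at h1
  have : (2 * m + 3) * (2 * m + 3) - (2 * m + 1) * (2 * m + 1) = 8 * (m + 1) := by
    refine Nat.sub_eq_of_eq_add ?_
    ring
  rw [this] at h1
  have : ((BdN (1 + m)).card : ℝ) ≤ ((8 * (m + 1) : ℕ) : ℝ) := by exact_mod_cast h1
  push_cast at this ⊢
  linarith

/-- Six arms for `(A, B)` yield a trifurcation for a modification `A'` of `A` near `z`. -/
lemma Six.trif {A B A' I : Set P} {z : P} {n K N : ℤ} (h : Six A B z n K) (hn : n < K)
    (dis : ∀ v ∈ A, v ∉ B) (hA : A ⊆ A') (hI : I ⊆ A') (hIN : I ⊆ Bx 0 (N - 1))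
    (hK : Bx 0 N ⊆ Bx z K) (hKN : ∀ v ∈ Bx 0 (N - 1), v ∈ Bx z (K - 1))
    (core : Bx z n ⊆ I) (new : ∀ v ∈ A', v ∉ A → v ∈ I) :
    Trif (A' ∩ Bx 0 N) I (BdN N) := by
  obtain ⟨⟨a0, a1, a2⟩, bT, bL, bR⟩ := h
  -- one branch per arm
  have arm : ∀ side : Set P, Arm adj2 A z n K side → (∀ v ∈ side, v ∈ Bx z K ∧ v ∉ Bx z (K - 1)) →
      ∃ v ∈ side, v ∈ (A' ∩ Bx z K) \ I ∧ ∃ y, (y ∈ BdN N ∧ y ∈ (A' ∩ Bx 0 N) \ I) ∧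
        Touch (A' ∩ Bx 0 N) I y ∧ Con adj2 ((A' ∩ Bx z K) \ I) v y := by
    rintro side ⟨u, hu, v, hv, p⟩ hs
    have hvI : v ∉ I := fun c => (hs v hv).2 (hKN v (hIN c))
    have p' : Con adj2 (A' ∩ Bx z K) u v := p.mono (fun _ _ a => a) (by
      rintro w (hw | hw)
      · exact ⟨hA hw.1, hw.2⟩
      · refine ⟨hI (core hw), ?_⟩
        rw [mem_Bx] at *; omega)
    obtain ⟨c, x, hc, hcx, hx, q⟩ := p'.last_exit (core hu) hvI
    have hxN : x ∈ Bx 0 N := by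
      have := hIN hc; rw [adj2_iff] at hcx; rw [mem_Bx] at *; omega
    obtain ⟨y, hy, hy', q'⟩ := q.first_hit hxN fun c => (hs v hv).2 (hKN v c)
    have sub : (A' ∩ Bx z K) \ I ∩ Bx 0 N ⊆ (A' ∩ Bx 0 N) \ I := fun w hw =>
      ⟨⟨hw.1.1.1, hw.2⟩, hw.1.2⟩
    have q2 : Con adj2 ((A' ∩ Bx 0 N) \ I) x y := q'.mono (fun _ _ a => a) sub
    refine ⟨v, hv, q.mem hx, y, ⟨mem_BdN.2 ⟨hy, hy'⟩, q2.mem ⟨⟨hx.1.1, hxN⟩, hx.2⟩⟩,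
      ⟨x, c, q2.symm adj2_symm, adj2_symm hcx, hc⟩,
      (q.symm adj2_symm).trans (q'.mono (fun _ _ a => a) Set.inter_subset_left)⟩
  have side : ∀ κ, ∀ σ τ : ℤ, (σ = 1 ∨ σ = -1) → (τ = 1 ∨ τ = -1) →
      ∀ v ∈ Hf z K κ σ τ, v ∈ Bx z K ∧ v ∉ Bx z (K - 1) := by
    intro κ σ τ hσ hτ v hv
    rw [mem_Bx, mem_Bx]
    cases κ <;> rcases hσ with rfl | rfl <;> rcases hτ with rfl | rfl <;>
      simp only [Hf, if_true, Set.mem_ofPred_eq, Bool.false_eq_true, if_false] at hv <;> omega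
  obtain ⟨v0, h0, k0, y0, hy0, t0, c0⟩ := arm _ a0 (side _ _ _ (by simp) (by simp))
  obtain ⟨v1, h1, k1, y1, hy1, t1, c1⟩ := arm _ a1 (side _ _ _ (by simp) (by simp))
  obtain ⟨v2, h2, k2, y2, hy2, t2, c2⟩ := arm _ a2 (side _ _ _ (by simp) (by simp))
  have sub : (A' ∩ Bx z K) \ I ⊆ Bx z K \ (B ∩ Bx z K ∪ Bx z n) := by
    rintro w ⟨⟨hw, hwK⟩, hwI⟩
    refine ⟨hwK, ?_⟩
    rintro (c | c)
    · exact dis w (by_contra fun hA => hwI (new w hw hA)) c.1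
    · exact hwI (core c)
  have S := Six.sep hn bT bL bR ![v0, v1, v2] (by
    intro i; fin_cases i
    · exact sub k0
    · exact sub k1
    · exact sub k2) h0 h1 h2
  have cc : ∀ i, Con adj2 ((A' ∩ Bx z K) \ I) (![v0, v1, v2] i) (![y0, y1, y2] i) := by
    intro i; fin_cases i
    · exact c0
    · exact c1
    · exact c2
  refine ⟨![y0, y1, y2], ?_, ?_, ?_⟩
  · intro i; fin_cases i
    · exact hy0
    · exact hy1
    · exact hy2
  · intro i; fin_cases i
    · exact t0
    · exact t1
    · exact t2
  · intro i j hij q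
    have sub2 : (A' ∩ Bx 0 N) \ I ⊆ (A' ∩ Bx z K) \ I := by
      rintro w ⟨⟨hw, hwN⟩, hwI⟩
      exact ⟨⟨hw, hK hwN⟩, hwI⟩
    refine S i j hij (Con.mono (fun _ _ a => a) sub ?_)
    exact (cc i).trans ((q.mono (fun _ _ a => a) sub2).trans ((cc j).symm adj2_symm))

/-! ### Finite energy -/

/-- The cone of height `c` and slope one with apex `z`. -/
def cone (c : ℤ) (z v : P) : ℤ := c - dist1 v z

lemma cone_isHom {c : ℤ} {z : P} (h : (c + z.1 + z.2) % 2 = 0) : isHom (cone c z) := by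
  refine ⟨fun v => ?_, fun u v a => ?_⟩
  · have := dist1_parity v z; unfold cone; omega
  · have := dist1_tri v u z
    rw [dist1_comm v u, dist1_adj a] at this
    unfold cone; omega

/-- `h` raised to the cone inside the diamond of radius `ρ`. -/
def raise (c ρ : ℤ) (z : P) (h : P → ℤ) : P → ℤ := glue (Dm z ρ) (h ⊔ cone c z) h

lemma raise_mem {c ρ : ℤ} {z : P} {h : P → ℤ} (hh : isHom h) (hc : (c + z.1 + z.2) % 2 = 0)
    (good : ∀ v, dist1 v z = ρ → c - ρ ≤ h v) : raise c ρ z h ∈ Om (Dm z ρ) h := by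
  refine mem_Om.2 ⟨glue_isHom (hh.sup (cone_isHom hc)) hh fun u v hu hv a => ?_, fun v hv => ?_⟩
  · have := dist1_tri v u z
    rw [dist1_comm v u, dist1_adj a] at this
    rw [mem_Dm] at hu hv
    have e : dist1 v z = ρ := by omega
    have := good v e
    simp only [Pi.sup_apply, cone, e]; omega
  · simp [raise, glue, hv]

lemma le_raise {c ρ : ℤ} {z : P} {h : P → ℤ} (v : P) : h v ≤ raise c ρ z h v := by
  unfold raise glue; split_ifs <;> simp

lemma cone_le_raise {c ρ : ℤ} {z : P} {h : P → ℤ} {v : P} (hv : v ∈ Dm z ρ) :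
    cone c z v ≤ raise c ρ z h v := by
  unfold raise glue; rw [if_pos hv]; simp

/-- The super-level set of a sum of two heights. -/
def SA (h1 h2 : P → ℤ) : Set P := {v | 1 ≤ h1 v + h2 v}

/-- The complementary sub-level set. -/
def SB (h1 h2 : P → ℤ) : Set P := {v | h1 v + h2 v ≤ 0}

/-- The part of the super-level set inside the diamond of radius `ρ` connected to its centre. -/
def Ic (ρ : ℤ) (z : P) (A : Set P) : Set P := {w | Con adj2 (A ∩ {v | v ∈ Dm z ρ}) z w}

/-- Along a shortest path to `z` the cone increases by one in each step, whereas `h2` decreases by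
at most one. The sum therefore stays at least `1`. -/
lemma cone_con {c ρ : ℤ} {z : P} {h1 h2 : P → ℤ} (hh2 : isHom h2) {v : P} (hv : v ∈ Dm z ρ)
    (h : 1 ≤ cone c z v + h2 v) :
    Con adj2 (SA (raise c ρ z h1) h2 ∩ {v | v ∈ Dm z ρ}) v z := by
  generalize hn : (dist1 v z).toNat = n
  have mem : ∀ {v}, v ∈ Dm z ρ → 1 ≤ cone c z v + h2 v →
      v ∈ SA (raise c ρ z h1) h2 ∩ {v | v ∈ Dm z ρ} := fun {v} hv h =>
    ⟨by have := cone_le_raise (c := c) (h := h1) hv; simp only [SA, Set.mem_ofPred_eq]; omega, hv⟩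
  induction n generalizing v with
  | zero =>
    have : v = z := dist1_eq_zero (by omega)
    rw [this]; exact Con.refl _
  | succ n ih =>
    have ne : v ≠ z := by rintro rfl; rw [dist1_self] at hn; simp at hn
    obtain ⟨w, a, hw⟩ := dist1_step ne
    have hwD : w ∈ Dm z ρ := by rw [mem_Dm] at *; omega
    have := hh2.2 v w a
    have hwc : 1 ≤ cone c z w + h2 w := by unfold cone at *; omega
    exact (Con.single a (mem hv h) (mem hwD hwc)).trans (ih hwD hwc (by omega))

/-- The local condition under which raising `h1` to a cone creates a trifurcation. -/
def Good (n b : ℤ) (z : P) (h1 h2 : P → ℤ) : Prop :=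
  (∀ v, dist1 v z = 2 * (2 * n + 2 + b) → -(2 * n + 2 + b) ≤ h1 v) ∧ ∀ v ∈ Bx z n, -b ≤ h2 v

lemma Bx_Dm {z v : P} {n : ℤ} (h : v ∈ Bx z n) : dist1 v z ≤ 2 * n := by
  rw [mem_Bx] at h
  unfold dist1
  have : |v.1 - z.1| ≤ n := abs_le.2 (by omega)
  have : |v.2 - z.2| ≤ n := abs_le.2 (by omega)
  omega

lemma Dm_Bx {z v : P} {n : ℤ} (h : v ∈ Dm z (n + 1)) : v ∈ Bx z n := by
  rw [mem_Dm] at h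
  unfold dist1 at h
  rw [mem_Bx]
  have := abs_nonneg (v.1 - z.1)
  have := abs_nonneg (v.2 - z.2)
  have := abs_le.1 (le_refl |v.1 - z.1|)
  have := abs_le.1 (le_refl |v.2 - z.2|)
  omega

/-- Raising `h1` to a cone with apex at `z` places the core in the super-level set. Everything
added to that set is joined to `z` by `cone_con`, and the six arms outside the core then make the
added cluster a trifurcation. -/
lemma raise_trif {n b ρ K N : ℤ} {z : P} {h1 h2 : P → ℤ} (hh1 : isHom h1) (hh2 : isHom h2)
    (hz : (z.1 + z.2) % 2 = 0) (hb : 0 ≤ b) (hb2 : b % 2 = 0) (hn : 0 ≤ n) (hnK : n < K)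
    (hρ : ρ = 2 * (2 * n + 2 + b))
    (good : Good n b z h1 h2) (six : Six (SA h1 h2) (SB h1 h2) z n K)
    (hN : Bx z ρ ⊆ Bx 0 N) (hK : Bx 0 N ⊆ Bx z K) (hK1 : Bx 0 (N - 1) ⊆ Bx z (K - 1)) :
    ∃ h1' ∈ Om (Dm z ρ) h1, z ∈ SA h1' h2 ∧
      Trif (SA h1' h2 ∩ Bx 0 N) (Ic ρ z (SA h1' h2)) (BdN N) := by
  set c := 2 * n + 2 + b with hc
  have hmem : raise c ρ z h1 ∈ Om (Dm z ρ) h1 := by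
    refine raise_mem hh1 (by omega) fun v hv => ?_
    have := good.1 v (by rw [hv, hρ]); omega
  refine ⟨_, hmem, ?_⟩
  have zD : z ∈ Dm z ρ := by rw [mem_Dm, dist1_self]; omega
  have core : ∀ v ∈ Bx z n, v ∈ Dm z ρ ∧ 1 ≤ cone c z v + h2 v := by
    intro v hv
    have a := Bx_Dm hv
    have b := good.2 v hv
    rw [mem_Dm]; unfold cone; omega
  have zz : z ∈ Bx z n := by rw [mem_Bx]; omega
  have zA : z ∈ SA (raise c ρ z h1) h2 ∩ {v | v ∈ Dm z ρ} := by
    refine ⟨?_, zD⟩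
    have := (core z zz).2
    have := cone_le_raise (c := c) (h := h1) zD
    simp only [SA, Set.mem_ofPred_eq]; omega
  have sub : Ic ρ z (SA (raise c ρ z h1) h2) ⊆ SA (raise c ρ z h1) h2 ∩ {v | v ∈ Dm z ρ} :=
    fun w hw => hw.mem zA
  refine ⟨zA.1, ?_⟩
  refine six.trif (K := K) (N := N) hnK (fun v h h' => ?_) (fun v hv => ?_)
    (fun v hv => (sub hv).1) (fun v hv => ?_) hK hK1 (fun v hv => ?_) (fun v hv hv' => ?_)
  · simp only [SA, SB, Set.mem_ofPred_eq] at h h'; omega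
  · have := le_raise (c := c) (ρ := ρ) (z := z) (h := h1) v
    simp only [SA, Set.mem_ofPred_eq] at hv ⊢; omega
  · have h3 : v ∈ Bx z (ρ - 1) := Dm_Bx (by have := (sub hv).2; simpa using this)
    -- the box `Bx z ρ` lies in `Bx 0 N`, so the smaller one lies in `Bx 0 (N - 1)`
    have e1 : (z.1 + ρ, z.2 + ρ) ∈ Bx 0 N := hN (by rw [mem_Bx]; dsimp only; omega)
    have e2 : (z.1 - ρ, z.2 - ρ) ∈ Bx 0 N := hN (by rw [mem_Bx]; dsimp only; omega)
    rw [mem_Bx] at *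
    simp only [Prod.fst_zero, Prod.snd_zero] at *
    omega
  · have := core v hv
    exact (cone_con hh2 this.1 this.2).symm adj2_symm
  · have hD : v ∈ Dm z ρ := by
      by_contra hD
      refine hv' ?_
      simp only [SA, Set.mem_ofPred_eq] at hv ⊢
      rwa [(mem_Om.1 hmem).2 v hD] at hv
    refine (cone_con hh2 hD ?_).symm adj2_symm
    simp only [SA, Set.mem_ofPred_eq, not_le] at hv hv'
    have e : raise c ρ z h1 v = max (h1 v) (cone c z v) := by simp [raise, glue, hD]
    rw [e] at hv
    omega

lemma Ic_con {ρ : ℤ} {z : P} {A : Set P} {u v : P} (hu : u ∈ Ic ρ z A) (hv : v ∈ Ic ρ z A) :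
    Con adj2 (Ic ρ z A) u v := by
  have H : ∀ u ∈ Ic ρ z A, Con adj2 (Ic ρ z A) z u := fun u hu =>
    (Con.inv (p := fun w => w ∈ Ic ρ z A ∧ Con adj2 (Ic ρ z A) z w) hu ⟨Con.refl _, Con.refl _⟩
      fun x y a hx hy ih => by
        have hy' : y ∈ Ic ρ z A := Con.trans ih.1 (Con.single a hx hy)
        exact ⟨hy', ih.2.trans (Con.single a ih.1 hy')⟩).2
  exact ((H u hu).symm adj2_symm).trans (H v hv)

lemma card_Om_Dm_le {z : P} (hz : (z.1 + z.2) % 2 = 0) {ρ : ℤ} {M : ℕ}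
    (hM : ∀ ξ, (Om (Dm 0 ρ) ξ).card ≤ M) (ξ : P → ℤ) : (Om (Dm z ρ) ξ).card ≤ M := by
  refine le_trans ?_ (hM fun v => ξ (v + z))
  refine Finset.card_le_card_of_injOn (fun h v => h (v + z)) ?_ ?_
  · intro h hh
    obtain ⟨h1, h2⟩ := mem_Om.1 hh
    refine mem_Om.2 ⟨⟨fun v => ?_, fun u v a => ?_⟩, fun v hv => h2 _ ?_⟩
    · have := h1.1 (v + z)
      simp only [Prod.fst_add, Prod.snd_add] at this; dsimp only; omega
    · refine h1.2 _ _ ?_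
      rw [adj2_iff] at *
      simp only [Prod.fst_add, Prod.snd_add]; omega
    · rw [mem_Dm] at *
      simpa [dist1] using hv
  · intro h _ g _ e
    funext v
    simpa using congrFun e (v - z)

/-- Changing the configuration inside a diamond costs at most a constant factor. -/
lemma finite_energy {U D : Finset P} (hU : U ⊆ D) {ξ : P → ℤ} {M : ℕ}
    (hM : ∀ ξ, (Om U ξ).card ≤ M) (p q : (P → ℤ) → Prop)
    (h : ∀ g, isHom g → p g → ∃ g' ∈ Om U g, q g') :
    Ex (Om D ξ) (fun g => ind (p g)) ≤ M * Ex (Om D ξ) (fun g => ind (q g)) := by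
  have tw := fun F => Ex_tower (s := Om D ξ) (fun g => Om U g)
    (fun g hg => self_mem_Om (mem_Om.1 hg).1) (fun g hg g' h1 => Om_sub hU hg h1)
    (fun g hg g' h1 => Om_eq_of_mem h1) F
  rw [tw, tw (fun g => ind (q g)), ← Ex_mul]
  refine Ex_mono fun g hg => ?_
  have hne : (Om U g).Nonempty := Om_nonempty (mem_Om.1 hg).1
  by_cases c : ∃ g' ∈ Om U g, p g'
  · obtain ⟨g', hg', hp⟩ := c
    obtain ⟨g2, hg2, hq⟩ := h g' (mem_Om.1 hg').1 hp
    rw [Om_eq_of_mem hg'] at hg2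
    refine (Ex_le_const hne fun a _ => ind_le_one _).trans ?_
    have pos : (0:ℝ) < (Om U g).card := by exact_mod_cast hne.card_pos
    have h1 : (1:ℝ) ≤ ∑ a ∈ Om U g, ind (q a) := by
      rw [← ind_true hq]
      exact Finset.single_le_sum (f := fun a => ind (q a)) (fun a _ => ind_nonneg _) hg2
    have h2 : ((Om U g).card : ℝ) ≤ M := by exact_mod_cast hM g
    unfold Ex
    rw [← mul_div_assoc, le_div_iff₀ pos]
    nlinarith
  · push Not at c
    rw [Ex_congr (G := fun _ => 0) fun a ha => ind_false (c a ha), Ex_const hne]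
    exact mul_nonneg (by positivity) (Ex_nonneg fun _ _ => ind_nonneg _)

lemma Ex_cheb {s : Finset (P → ℤ)} {v : P} {a C : ℝ} (ha : 0 < a)
    (h : Ex s (fun h => (h v : ℝ) ^ 2) ≤ C) : Ex s (fun h => ind (a ≤ |(h v : ℝ)|)) ≤ C / a ^ 2 := by
  rw [le_div_iff₀ (by positivity), mul_comm, ← Ex_mul]
  refine (Ex_mono fun g _ => ?_).trans h
  by_cases c : a ≤ |(g v : ℝ)|
  · rw [ind_true c, mul_one, ← sq_abs (g v : ℝ)]; gcongr
  · rw [ind_false c, mul_zero]; positivity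

lemma ind_exists_le {β : Type*} (I : Finset β) (p : β → Prop) :
    ind (∃ i ∈ I, p i) ≤ ∑ i ∈ I, ind (p i) := by
  by_cases c : ∃ i ∈ I, p i
  · obtain ⟨i, hi, hp⟩ := id c
    rw [ind_true c, ← ind_true hp]
    exact Finset.single_le_sum (f := fun i => ind (p i)) (fun a _ => ind_nonneg _) hi
  · rw [ind_false c]; exact Finset.sum_nonneg fun _ _ => ind_nonneg _

/-- Chebyshev and a union bound. -/
lemma Ex_cheb_union {s : Finset (P → ℤ)} (I : Finset P) {a C m : ℝ} (ha : 0 < a) (hC : 0 ≤ C)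
    (hI : (I.card : ℝ) ≤ m)
    (h : ∀ v ∈ I, Ex s (fun h => (h v : ℝ) ^ 2) ≤ C) :
    Ex s (fun h => ind (∃ v ∈ I, a ≤ |(h v : ℝ)|)) ≤ m * (C / a ^ 2) := by
  refine (Ex_mono fun g _ => ind_exists_le I _).trans ?_
  rw [Ex_sum]
  refine (Finset.sum_le_sum fun v hv => Ex_cheb ha (h v hv)).trans ?_
  rw [Finset.sum_const, nsmul_eq_mul]
  gcongr

/-! ### Too many trifurcations -/

open Classical in
lemma exists_sphere (z : P) {ρ : ℤ} (hρ : 0 ≤ ρ) : ∃ S : Finset P,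
    (∀ v, v ∈ S ↔ dist1 v z = ρ) ∧ (S.card : ℝ) ≤ 4 * ρ + 2 := by
  let up : ℤ → P := fun x => (z.1 + x, z.2 + (ρ - |x|))
  let dn : ℤ → P := fun x => (z.1 + x, z.2 - (ρ - |x|))
  have hsub : ∀ v, dist1 v z = ρ → v ∈ (Finset.Icc (-ρ) ρ).image up ∪ (Finset.Icc (-ρ) ρ).image dn := by
    intro v hv
    unfold dist1 at hv
    have h1 : -ρ ≤ v.1 - z.1 ∧ v.1 - z.1 ≤ ρ := abs_le.1 (by have := abs_nonneg (v.2 - z.2); omega)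
    rw [Finset.mem_union, Finset.mem_image, Finset.mem_image]
    rcases abs_cases (v.2 - z.2) with h | h
    · exact Or.inl ⟨v.1 - z.1, Finset.mem_Icc.2 h1, Prod.ext (by simp [up]) (by simp only [up]; omega)⟩
    · exact Or.inr ⟨v.1 - z.1, Finset.mem_Icc.2 h1, Prod.ext (by simp [dn]) (by simp only [dn]; omega)⟩
  refine ⟨((Finset.Icc (-ρ) ρ).image up ∪ (Finset.Icc (-ρ) ρ).image dn).filter
    fun v => dist1 v z = ρ, fun v => ?_, ?_⟩
  · rw [Finset.mem_filter]; exact ⟨fun h => h.2, fun h => ⟨hsub v h, h⟩⟩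
  · have h1 := Finset.card_filter_le ((Finset.Icc (-ρ) ρ).image up ∪ (Finset.Icc (-ρ) ρ).image dn)
      (fun v => dist1 v z = ρ)
    have h2 := Finset.card_union_le ((Finset.Icc (-ρ) ρ).image up) ((Finset.Icc (-ρ) ρ).image dn)
    have h3 := Finset.card_image_le (s := Finset.Icc (-ρ) ρ) (f := up)
    have h4 := Finset.card_image_le (s := Finset.Icc (-ρ) ρ) (f := dn)
    rw [Int.card_Icc] at h3 h4
    have : ((4 * ρ + 2 : ℤ) : ℝ) = 4 * ρ + 2 := by push_cast; ring
    rw [← this]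
    have h5 := h1.trans (h2.trans (add_le_add h3 h4))
    have h6 : (_ : ℤ) ≤ _ := Int.ofNat_le.2 h5
    have h7 : (((ρ + 1 - -ρ).toNat + (ρ + 1 - -ρ).toNat : ℕ) : ℤ) = 4 * ρ + 2 := by omega
    rw [h7] at h6
    exact_mod_cast h6

open Classical in
lemma exists_box (z : P) {n : ℤ} (hn : 0 ≤ n) : ∃ S : Finset P,
    (∀ v, v ∈ S ↔ v ∈ Bx z n) ∧ (S.card : ℝ) = (2 * n + 1) ^ 2 := by
  refine ⟨Finset.Icc (z.1 - n) (z.1 + n) ×ˢ Finset.Icc (z.2 - n) (z.2 + n), fun v => ?_, ?_⟩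
  · rw [Finset.mem_product, Finset.mem_Icc, Finset.mem_Icc]; rfl
  · rw [Finset.card_product, Int.card_Icc, Int.card_Icc]
    have e1 : (z.1 + n + 1 - (z.1 - n)).toNat = (2 * n + 1).toNat := by congr 1; ring
    have e2 : (z.2 + n + 1 - (z.2 - n)).toNat = (2 * n + 1).toNat := by congr 1; ring
    have e3 : ((2 * n + 1).toNat : ℝ) = 2 * n + 1 := by
      have : (((2 * n + 1).toNat : ℤ) : ℝ) = ((2 * n + 1 : ℤ) : ℝ) := by
        rw [Int.toNat_of_nonneg (by omega)]
      push_cast at this; exact this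
    rw [e1, e2, Nat.cast_mul, e3]; ring

/-- The local condition holds with high probability. -/
lemma not_Good_le {n b : ℤ} (hn : 0 ≤ n) (hb : 1 ≤ b) {z : P} {s t : Finset (P → ℤ)} {C' : ℝ}
    (hC : 0 ≤ C') (hs : s.Nonempty) (ht : t.Nonempty)
    (h1 : ∀ v, dist1 v z = 2 * (2 * n + 2 + b) → Ex s (fun h => (h v : ℝ) ^ 2) ≤ C')
    (h2 : ∀ v ∈ Bx z n, Ex t (fun h => (h v : ℝ) ^ 2) ≤ C') :
    Ex s (fun h1 => Ex t fun h2 => ind (¬ Good n b z h1 h2)) ≤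
      (10 + (2 * n + 1) ^ 2) * C' / b := by
  obtain ⟨S, hS, cS⟩ := exists_sphere z (ρ := 2 * (2 * n + 2 + b)) (by omega)
  obtain ⟨B, hB, cB⟩ := exists_box z hn
  have hn' : (0:ℝ) ≤ n := by exact_mod_cast hn
  have hb' : (1:ℝ) ≤ b := by exact_mod_cast hb
  have p1 := Ex_cheb_union S (a := 2 * n + 2 + b) (C := C') (m := 10 * (2 * n + 2 + b))
    (by positivity) hC (cS.trans (by push_cast; linarith)) fun v hv => h1 v ((hS v).1 hv)
  have p2 := Ex_cheb_union B (a := b) (C := C') (m := (2 * n + 1) ^ 2)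
    (by positivity) hC cB.le fun v hv => h2 v ((hB v).1 hv)
  have key : Ex s (fun h1 => Ex t fun h2 => ind (¬ Good n b z h1 h2)) ≤
      Ex s (fun h1 => Ex t fun h2 => (ind (∃ v ∈ S, (2 * n + 2 + b : ℝ) ≤ |(h1 v : ℝ)|) +
        ind (∃ v ∈ B, (b : ℝ) ≤ |(h2 v : ℝ)|))) := by
    refine Ex_mono fun g1 _ => Ex_mono fun g2 _ => le_trans (ind_mono fun hG => ?_) (ind_or_le _ _)
    by_contra c
    push Not at c
    refine hG ⟨fun v hv => ?_, fun v hv => ?_⟩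
    · have := neg_le_of_abs_le (c.1 v ((hS v).2 hv)).le
      have : ((-(2 * n + 2 + b) : ℤ) : ℝ) ≤ (g1 v : ℝ) := by push_cast; linarith
      exact_mod_cast this
    · have := neg_le_of_abs_le (c.2 v ((hB v).2 hv)).le
      have : ((-b : ℤ) : ℝ) ≤ (g2 v : ℝ) := by push_cast; linarith
      exact_mod_cast this
  refine key.trans ?_
  have e : ∀ g1 : P → ℤ, Ex t (fun h2 => (ind (∃ v ∈ S, (2 * n + 2 + b : ℝ) ≤ |(g1 v : ℝ)|) +
        ind (∃ v ∈ B, (b : ℝ) ≤ |(h2 v : ℝ)|))) = ind (∃ v ∈ S, (2 * n + 2 + b : ℝ) ≤ |(g1 v : ℝ)|) +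
        Ex t (fun h2 => ind (∃ v ∈ B, (b : ℝ) ≤ |(h2 v : ℝ)|)) := by
    intro g1; rw [Ex_add, Ex_const ht]
  simp only [e]
  rw [Ex_add, Ex_const hs]
  refine (add_le_add p1 p2).trans ?_
  have q1 : 10 * (2 * (n:ℝ) + 2 + b) * (C' / (2 * n + 2 + b) ^ 2) ≤ 10 * C' / b := by
    have : 10 * (2 * (n:ℝ) + 2 + b) * (C' / (2 * n + 2 + b) ^ 2) = 10 * C' / (2 * n + 2 + b) := by
      field_simp
    rw [this]
    gcongr
    linarith
  have q2 : (2 * (n:ℝ) + 1) ^ 2 * (C' / b ^ 2) ≤ (2 * n + 1) ^ 2 * C' / b := by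
    rw [mul_div_assoc]
    gcongr
    nlinarith
  calc _ ≤ 10 * C' / b + (2 * n + 1) ^ 2 * C' / b := add_le_add q1 q2
    _ = _ := by ring

/-- Six arms cannot have probability bounded below at all even sites of a large box. -/
theorem no_six {C' p0 : ℝ} {n : ℤ} (hC : 0 ≤ C') (hp : 0 < p0) (hn : 0 ≤ n) :
    ∃ N : ℤ, n < N ∧ ∀ K, 2 * N ≤ K → ∀ (D1 D2 : Finset P) (ξ1 ξ2 : P → ℤ), isHom ξ1 → isHom ξ2 →
      (∀ v ∈ Bx 0 N, v ∈ D1) →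
      (∀ v ∈ Bx 0 N, Ex (Om D1 ξ1) (fun h => (h v : ℝ) ^ 2) ≤ C') →
      (∀ v ∈ Bx 0 N, Ex (Om D2 ξ2) (fun h => (h v : ℝ) ^ 2) ≤ C') →
      (∀ z ∈ Bx 0 N, (z.1 + z.2) % 2 = 0 → p0 ≤ Ex (Om D1 ξ1) fun h1 => Ex (Om D2 ξ2) fun h2 =>
        ind (Six (SA h1 h2) (SB h1 h2) z n K)) → False := by
  obtain ⟨b', hb'⟩ := exists_nat_gt ((10 + (2 * n + 1) ^ 2) * C' * 2 / p0)
  set b : ℤ := 2 * b' + 2 with hb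
  have hbR : (10 + (2 * (n:ℝ) + 1) ^ 2) * C' / b ≤ p0 / 2 := by
    have e : (b : ℝ) = 2 * b' + 2 := by rw [hb]; push_cast; ring
    have : (0:ℝ) ≤ b' := by positivity
    rw [div_lt_iff₀ hp] at hb'
    rw [div_le_iff₀ (by rw [e]; positivity), e]
    nlinarith
  set ρ : ℤ := 2 * (2 * n + 2 + b) with hρ
  obtain ⟨M, hM⟩ := exists_card_Om_le (Dm 0 ρ)
  obtain ⟨m', hm'⟩ := exists_nat_gt ((M * (16 * ρ) : ℝ) * 2 / p0)
  set m := m' + 1 with hm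
  have hmR : (M * (16 * ρ) : ℝ) < p0 / 2 * m := by
    rw [div_lt_iff₀ hp] at hm'
    rw [hm]; push_cast; nlinarith
  set N : ℤ := 2 * ρ * m with hN
  have hρ0 : 0 < ρ := by omega
  have hNρ : 2 * ρ ≤ N := by rw [hN, hm]; push_cast; nlinarith
  refine ⟨N, by omega, ?_⟩
  intro K hK D1 D2 ξ1 ξ2 hξ1 hξ2 hD v1 v2 hsix
  let zz : ℕ × ℕ → P := fun q => (2 * ρ * q.1, 2 * ρ * q.2)
  let G : Finset (ℕ × ℕ) := Finset.range m ×ˢ Finset.range m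
  have zinj : ∀ q q' : ℕ × ℕ, q ≠ q' → 2 * ρ ≤ dist1 (zz q) (zz q') := by
    intro q q' hne
    simp only [zz, dist1]
    rw [← mul_sub, ← mul_sub, abs_mul (2 * ρ), abs_mul (2 * ρ), ← mul_add, abs_of_pos (by omega : 0 < 2 * ρ)]
    have : 1 ≤ |(q.1 : ℤ) - q'.1| + |(q.2 : ℤ) - q'.2| := by
      rcases abs_cases ((q.1 : ℤ) - q'.1) with h | h <;> rcases abs_cases ((q.2 : ℤ) - q'.2) with h' | h' <;>
        (by_contra c; exact hne (Prod.ext (by omega) (by omega)))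
    nlinarith
  have zb : ∀ q ∈ G, (0 ≤ (zz q).1 ∧ (zz q).1 + 2 * ρ ≤ N) ∧ (0 ≤ (zz q).2 ∧ (zz q).2 + 2 * ρ ≤ N) := by
    intro q hq
    rw [Finset.mem_product, Finset.mem_range, Finset.mem_range] at hq
    have a1 : (q.1 : ℤ) + 1 ≤ m := by omega
    have a2 : (q.2 : ℤ) + 1 ≤ m := by omega
    simp only [zz, hN]
    refine ⟨⟨by positivity, by nlinarith⟩, by positivity, by nlinarith⟩
  have zev : ∀ q, ((zz q).1 + (zz q).2) % 2 = 0 := by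
    intro q; simp only [zz, mul_assoc]; omega
  have bxN : ∀ q ∈ G, Bx (zz q) ρ ⊆ Bx 0 N := by
    intro q hq v hv
    have := zb q hq
    rw [mem_Bx] at *; simp only [Prod.fst_zero, Prod.snd_zero]; omega
  have ne1 : (Om D1 ξ1).Nonempty := Om_nonempty hξ1
  have ne2 : (Om D2 ξ2).Nonempty := Om_nonempty hξ2
  -- lower bound at each grid point
  have low : ∀ q ∈ G, p0 / 2 ≤ M * Ex (Om D1 ξ1) fun h1 => Ex (Om D2 ξ2) fun h2 =>
      ind (zz q ∈ SA h1 h2 ∧ Trif (SA h1 h2 ∩ Bx 0 N) (Ic ρ (zz q) (SA h1 h2)) (BdN N)) := by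
    intro q hq
    have hzb := zb q hq
    have hzN : zz q ∈ Bx 0 N := bxN q hq (by rw [mem_Bx]; omega)
    have h1 := hsix _ hzN (zev q)
    have h2 := not_Good_le (b := b) hn (by omega) (z := zz q) hC ne1 ne2
      (fun v hv => v1 v (bxN q hq (Dm_Bx (by rw [mem_Dm]; omega))))
      (fun v hv => v2 v (bxN q hq (by rw [mem_Bx] at *; omega)))
    have h3 : (Ex (Om D1 ξ1) fun h1 => Ex (Om D2 ξ2) fun h2 =>
        ind (Six (SA h1 h2) (SB h1 h2) (zz q) n K)) ≤
        (Ex (Om D1 ξ1) fun h1 => Ex (Om D2 ξ2) fun h2 =>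
          ind (Good n b (zz q) h1 h2 ∧ Six (SA h1 h2) (SB h1 h2) (zz q) n K)) +
        Ex (Om D1 ξ1) fun h1 => Ex (Om D2 ξ2) fun h2 => ind (¬ Good n b (zz q) h1 h2) := by
      rw [← Ex_add]
      refine Ex_mono fun g1 _ => ?_
      rw [← Ex_add]
      refine Ex_mono fun g2 _ => le_trans (ind_mono fun h => ?_) (ind_or_le _ _)
      tauto
    have h4 : (Ex (Om D1 ξ1) fun h1 => Ex (Om D2 ξ2) fun h2 =>
          ind (Good n b (zz q) h1 h2 ∧ Six (SA h1 h2) (SB h1 h2) (zz q) n K)) ≤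
        M * Ex (Om D1 ξ1) fun h1 => Ex (Om D2 ξ2) fun h2 =>
          ind (zz q ∈ SA h1 h2 ∧
            Trif (SA h1 h2 ∩ Bx 0 N) (Ic ρ (zz q) (SA h1 h2)) (BdN N)) := by
      rw [Ex_comm, Ex_comm (s := Om D1 ξ1), ← Ex_mul]
      refine Ex_mono fun g2 hg2 => ?_
      refine finite_energy (U := Dm (zz q) ρ) (fun v hv => ?_)
        (card_Om_Dm_le (zev q) hM) _ _ fun g hg hp => ?_
      · refine hD v (bxN q hq ?_)
        have := Dm_Bx (z := zz q) (v := v) (n := ρ - 1) (by simpa using hv)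
        rw [mem_Bx] at *; omega
      · refine raise_trif (b := b) hg (mem_Om.1 hg2).1 (zev q) (by omega) (by omega) hn (by omega)
          hρ hp.1 hp.2 (bxN q hq) ?_ ?_
        · intro v hv; rw [mem_Bx] at *; simp only [Prod.fst_zero, Prod.snd_zero] at hv; omega
        · intro v hv; rw [mem_Bx] at *; simp only [Prod.fst_zero, Prod.snd_zero] at hv; omega
    linarith
  have up : ∀ h1 h2 : P → ℤ, ∑ q ∈ G, ind (zz q ∈ SA h1 h2 ∧
      Trif (SA h1 h2 ∩ Bx 0 N) (Ic ρ (zz q) (SA h1 h2)) (BdN N)) ≤ 8 * N := by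
    classical
    intro h1 h2
    have e : ∑ q ∈ G, ind (zz q ∈ SA h1 h2 ∧
      Trif (SA h1 h2 ∩ Bx 0 N) (Ic ρ (zz q) (SA h1 h2)) (BdN N)) =
      ((((G.filter fun q => zz q ∈ SA h1 h2 ∧
        Trif (SA h1 h2 ∩ Bx 0 N) (Ic ρ (zz q) (SA h1 h2)) (BdN N)).image zz).card : ℕ) : ℝ) := by
      rw [Finset.card_image_of_injOn, Finset.card_filter]
      · push_cast
        refine Finset.sum_congr rfl fun q _ => ?_
        unfold ind; congr
      · intro q _ q' _ h
        by_contra hne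
        have := zinj q q' hne
        rw [show zz q = zz q' from h, dist1_self] at this; omega
    rw [e]
    refine le_trans ?_ (card_BdN (by omega : 1 ≤ N))
    have key := fun z hz hp => card_trifurcation (SA h1 h2 ∩ Bx 0 N) (BdN N)
      ((G.filter fun q => zz q ∈ SA h1 h2 ∧
        Trif (SA h1 h2 ∩ Bx 0 N) (Ic ρ (zz q) (SA h1 h2)) (BdN N)).image zz)
      (fun z => Ic ρ z (SA h1 h2)) z hz hp
    have icsub : ∀ z, z ∈ SA h1 h2 → ∀ w ∈ Ic ρ z (SA h1 h2), w ∈ SA h1 h2 ∧ w ∈ Dm z ρ :=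
      fun z hz w hw => Con.mem hw ⟨hz, by rw [Set.mem_ofPred_eq, mem_Dm, dist1_self]; exact hρ0⟩
    refine Nat.cast_le.2 (key ?_ ?_ ?_ ?_)
    · intro z hz w hw
      obtain ⟨q, hq, rfl⟩ := Finset.mem_image.1 hz
      rw [Finset.mem_filter] at hq
      have := icsub _ hq.2.1 w hw
      have h3 := Dm_Bx (z := zz q) (v := w) (n := ρ - 1) (by simpa using this.2)
      exact ⟨this.1, bxN q hq.1 (by rw [mem_Bx] at *; omega)⟩
    · intro z hz u hu v hv; exact Ic_con hu hv
    · intro z hz z' hz' hne w hw hw'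
      obtain ⟨q, hq, rfl⟩ := Finset.mem_image.1 hz
      obtain ⟨q', hq', rfl⟩ := Finset.mem_image.1 hz'
      rw [Finset.mem_filter] at hq hq'
      have a := (icsub _ hq.2.1 w hw).2
      have b := (icsub _ hq'.2.1 w hw').2
      rw [mem_Dm] at a b
      have := zinj q q' (fun e => hne (by rw [e]))
      have := dist1_tri (zz q) w (zz q')
      rw [dist1_comm (zz q) w] at this
      omega
    · intro z hz
      obtain ⟨q, hq, rfl⟩ := Finset.mem_image.1 hz
      rw [Finset.mem_filter] at hq
      exact hq.2.2
  have tot : ∑ q ∈ G, p0 / 2 ≤ M * (8 * N) := by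
    refine (Finset.sum_le_sum low).trans ?_
    rw [← Finset.mul_sum]
    refine mul_le_mul_of_nonneg_left ?_ (by positivity)
    rw [← Ex_sum]
    refine Ex_le_const ne1 fun g1 _ => ?_
    rw [← Ex_sum]
    exact Ex_le_const ne2 fun g2 _ => up g1 g2
  rw [Finset.sum_const, nsmul_eq_mul, Finset.card_product, Finset.card_range, hN] at tot
  push_cast at tot hmR
  have hm0 : (0:ℝ) < m := by rw [hm]; positivity
  nlinarith

/-! ### Dihedral symmetry and the square-root trick -/

/-- The map of the dihedral group about `z` that sends the half-side `Hf z K true 1 1` to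
`Hf z K κ σ τ`. -/
def sy (z : P) (κ : Bool) (σ τ : ℤ) (v : P) : P :=
  if κ then (z.1 + τ * (v.1 - z.1), z.2 + σ * (v.2 - z.2))
  else (z.1 + σ * (v.2 - z.2), z.2 + τ * (v.1 - z.1))

lemma sign_cases {σ : ℤ} (h : σ * σ = 1) : σ = 1 ∨ σ = -1 := mul_self_eq_one_iff.1 h

/-- `sy` as a permutation. -/
def syE (z : P) (κ : Bool) (σ τ : ℤ) (hσ : σ * σ = 1) (hτ : τ * τ = 1) : P ≃ P where
  toFun := sy z κ σ τ
  invFun := if κ then sy z κ σ τ else sy z κ τ σ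
  left_inv := by
    intro v
    rcases sign_cases hσ with rfl | rfl <;> rcases sign_cases hτ with rfl | rfl <;> cases κ <;>
      simp [sy]
  right_inv := by
    intro v
    rcases sign_cases hσ with rfl | rfl <;> rcases sign_cases hτ with rfl | rfl <;> cases κ <;>
      simp [sy]

section
variable {z : P} {κ : Bool} {σ τ : ℤ}

lemma sy_adj (hσ : σ * σ = 1) (hτ : τ * τ = 1) (u v : P) : adj2 (sy z κ σ τ u) (sy z κ σ τ v) ↔ adj2 u v := by
  rcases sign_cases hσ with rfl | rfl <;> rcases sign_cases hτ with rfl | rfl <;> cases κ <;>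
    simp only [adj2_iff, sy, if_true, Bool.false_eq_true, if_false] <;> omega

lemma sy_star (hσ : σ * σ = 1) (hτ : τ * τ = 1) (u v : P) : star (sy z κ σ τ u) (sy z κ σ τ v) ↔ star u v := by
  rcases sign_cases hσ with rfl | rfl <;> rcases sign_cases hτ with rfl | rfl <;> cases κ <;>
    simp only [star, sy, if_true, Bool.false_eq_true, if_false] <;> omega

lemma sy_Bx (hσ : σ * σ = 1) (hτ : τ * τ = 1) (k : ℤ) (v : P) : sy z κ σ τ v ∈ Bx z k ↔ v ∈ Bx z k := by
  rcases sign_cases hσ with rfl | rfl <;> rcases sign_cases hτ with rfl | rfl <;> cases κ <;>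
    simp only [mem_Bx, sy, if_true, Bool.false_eq_true, if_false] <;> omega

lemma sy_dist (hσ : σ * σ = 1) (hτ : τ * τ = 1) (v : P) : dist1 (sy z κ σ τ v) z = dist1 v z := by
  rcases sign_cases hσ with rfl | rfl <;> rcases sign_cases hτ with rfl | rfl <;> cases κ <;>
    simp only [dist1, sy, if_true, Bool.false_eq_true, if_false] <;> simp <;>
    simp only [abs_sub_comm] <;> omega

lemma sy_parity (hσ : σ * σ = 1) (hτ : τ * τ = 1) (v : P) : ((sy z κ σ τ v).1 + (sy z κ σ τ v).2 + v.1 + v.2) % 2 = 0 := by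
  rcases sign_cases hσ with rfl | rfl <;> rcases sign_cases hτ with rfl | rfl <;> cases κ <;>
    simp only [sy, if_true, Bool.false_eq_true, if_false] <;> omega

lemma sy_Hf (hσ : σ * σ = 1) (hτ : τ * τ = 1) (K : ℤ) (v : P) : sy z κ σ τ v ∈ Hf z K κ σ τ ↔ v ∈ Hf z K true 1 1 := by
  rcases sign_cases hσ with rfl | rfl <;> rcases sign_cases hτ with rfl | rfl <;> cases κ <;>
    simp only [Hf, sy, if_true, Bool.false_eq_true, if_false, Set.mem_ofPred_eq] <;> omega

/-- An arm towards any half-side is the image under `sy` of an arm towards the reference half-side. -/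
lemma sy_Arm (hσ : σ * σ = 1) (hτ : τ * τ = 1) {r : P → P → Prop}
    (hr : ∀ u v, r (sy z κ σ τ u) (sy z κ σ τ v) ↔ r u v)
    (S : Set P) (n K : ℤ) :
    Arm r (sy z κ σ τ ⁻¹' S) z n K (Hf z K true 1 1) ↔ Arm r S z n K (Hf z K κ σ τ) := by
  constructor
  · rintro ⟨u, hu, v, hv, p⟩
    refine ⟨sy z κ σ τ u, (sy_Bx hσ hτ _ _).2 hu, sy z κ σ τ v, (sy_Hf hσ hτ _ _).2 hv, ?_⟩
    refine Relation.ReflTransGen.lift (sy z κ σ τ) ?_ _ _ p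
    rintro a b ⟨h1, h2, h3⟩
    refine ⟨(hr _ _).2 h1, ?_, ?_⟩
    · exact h2.imp (fun h => ⟨h.1, (sy_Bx hσ hτ _ _).2 h.2⟩) fun h => (sy_Bx hσ hτ _ _).2 h
    · exact h3.imp (fun h => ⟨h.1, (sy_Bx hσ hτ _ _).2 h.2⟩) fun h => (sy_Bx hσ hτ _ _).2 h
  · rintro ⟨u, hu, v, hv, p⟩
    set e := syE z κ σ τ hσ hτ with he
    have es : ∀ w, sy z κ σ τ (e.symm w) = w := fun w => e.apply_symm_apply w
    have bx : ∀ {w k}, w ∈ Bx z k → e.symm w ∈ Bx z k := fun {w k} hw => by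
      rw [← sy_Bx hσ hτ, es]; exact hw
    refine ⟨e.symm u, bx hu, e.symm v, ?_, ?_⟩
    · rw [← sy_Hf hσ hτ, es]; exact hv
    refine Relation.ReflTransGen.lift e.symm ?_ _ _ p
    rintro a b ⟨h1, h2, h3⟩
    refine ⟨?_, ?_, ?_⟩
    · rw [← hr, es, es]; exact h1
    · refine h2.imp (fun h => ⟨?_, bx h.2⟩) bx
      rw [Set.mem_preimage, es]; exact h.1
    · refine h3.imp (fun h => ⟨?_, bx h.2⟩) bx
      rw [Set.mem_preimage, es]; exact h.1

/-- Diamonds with boundary values `xi0` are invariant under the dihedral group. -/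
lemma Ex_sy (hσ : σ * σ = 1) (hτ : τ * τ = 1) (L : ℤ) (F : (P → ℤ) → ℝ) :
    Ex (Om (Dm z L) xi0) F = Ex (Om (Dm z L) xi0) (fun h => F (fun v => h (sy z κ σ τ v))) := by
  have key : ∀ u v, adj2 (sy z κ σ τ u) (sy z κ σ τ v) ↔ adj2 u v := sy_adj hσ hτ
  rw [Ex_symm (D := Dm z L) (D' := Dm z L) (ξ := xi0) (ξ' := xi0) (syE z κ σ τ hσ hτ) 0 1
    (by norm_num) (fun u v h => (key u v).2 h) ?_ ?_ ?_ ?_ F]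
  · simp [syE]
  · intro u v h
    have es : ∀ w, sy z κ σ τ ((syE z κ σ τ hσ hτ).symm w) = w := fun w =>
      (syE z κ σ τ hσ hτ).apply_symm_apply w
    rw [← key, es, es]; exact h
  · intro v
    have := sy_parity hσ hτ (z := z) (κ := κ) v
    simp only [syE, Equiv.coe_fn_mk]; omega
  · intro v
    simp only [syE, Equiv.coe_fn_mk, mem_Dm, sy_dist hσ hτ]
  · intro v _
    have := sy_parity hσ hτ (z := z) (κ := κ) v
    simp only [syE, Equiv.coe_fn_mk, xi0]; omega

end

/-- The sign encoded by a Boolean. -/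
def sg (b : Bool) : ℤ := if b then 1 else -1

lemma sg_sq (b : Bool) : sg b * sg b = 1 := by cases b <;> simp [sg]

lemma exists_sg {σ : ℤ} (h : σ * σ = 1) : ∃ b, σ = sg b := by
  rcases sign_cases h with rfl | rfl
  · exact ⟨true, rfl⟩
  · exact ⟨false, rfl⟩

/-- The half-side with index `i`. -/
def Hi (z : P) (K : ℤ) (i : Bool × Bool × Bool) : Set P := Hf z K i.1 (sg i.2.1) (sg i.2.2)

/-- Eight positively associated events of equal probability `q` occur simultaneously with
probability at least `q ^ 8`. -/
lemma root8 {α : Type*} {s : Finset α} {r : α → α → Prop} (hs : s.Nonempty) (h : PA s r)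
    (X : Bool × Bool × Bool → α → Prop)
    (mX : (∀ i a b, r a b → X i a → X i b) ∨ (∀ i a b, r a b → X i b → X i a)) {q ε : ℝ}
    (hq : ∀ i, Ex s (fun a => ind (X i a)) = q)
    (hε : 0 ≤ ε) (hX : Ex s (fun a => ind (∀ i, X i a)) ≤ ε ^ 8) : q ≤ ε := by
  have e : ∀ a, ∏ i, ind (X i a) = ind (∀ i, X i a) := by
    intro a
    by_cases hc : ∀ i, X i a
    · rw [ind_true hc]; exact Finset.prod_eq_one fun i _ => ind_true (hc i)
    · rw [ind_false hc]
      push Not at hc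
      obtain ⟨i, hi⟩ := hc
      exact Finset.prod_eq_zero (Finset.mem_univ i) (ind_false hi)
  have : q ^ 8 ≤ ε ^ 8 := by
    refine le_trans ?_ hX
    have : ∏ i, Ex s (fun a => ind (X i a)) ≤ Ex s (fun a => ∏ i, ind (X i a)) := by
      rcases mX with mX | mX
      · exact h.prod_inc hs _ (fun i a => ind (X i a)) (fun i a => ind_nonneg _)
          fun i a b hab => ind_mono (mX i a b hab)
      · exact h.prod_dec hs _ (fun i a => ind (X i a)) (fun i a => ⟨ind_nonneg _, ind_le_one _⟩)
          fun i a b hab => ind_mono (mX i a b hab)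
    simp only [e, hq, Finset.prod_const, Finset.card_univ] at this
    simpa using this
  exact le_of_pow_le_pow_left₀ (by norm_num) hε this

lemma mem_Hi {z v : P} {K : ℤ} (hv : v ∈ Bx z K) (hv' : v ∉ Bx z (K - 1)) :
    ∃ i, v ∈ Hi z K i := by
  rw [mem_Bx] at *
  have : (v.2 = z.2 + K ∨ v.2 = z.2 - K) ∨ (v.1 = z.1 + K ∨ v.1 = z.1 - K) := by omega
  by_cases h1 : 0 ≤ v.1 - z.1 <;> by_cases h2 : 0 ≤ v.2 - z.2 <;>
  rcases this with (h | h) | (h | h)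
  all_goals first
    | refine ⟨(true, true, true), ?_⟩; simp [Hi, Hf, sg]; omega
    | refine ⟨(true, true, false), ?_⟩; simp [Hi, Hf, sg]; omega
    | refine ⟨(true, false, true), ?_⟩; simp [Hi, Hf, sg]; omega
    | refine ⟨(true, false, false), ?_⟩; simp [Hi, Hf, sg]; omega
    | refine ⟨(false, true, true), ?_⟩; simp [Hi, Hf, sg]; omega
    | refine ⟨(false, true, false), ?_⟩; simp [Hi, Hf, sg]; omega
    | refine ⟨(false, false, true), ?_⟩; simp [Hi, Hf, sg]; omega
    | refine ⟨(false, false, false), ?_⟩; simp [Hi, Hf, sg]; omega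

/-- A path that leaves the box hits a half-side. -/
lemma exit_arm {r : P → P → Prop} (hr : ∀ a b, r a b → star a b) {S : Set P} {z u o : P} {n K : ℤ}
    (h : Con r S u o) (hu : u ∈ Bx z n) (hn : n < K) (ho : o ∉ Bx z (K - 1)) :
    ∃ i, Arm r S z n K (Hi z K i) := by
  have key : (∃ i, Arm r S z n K (Hi z K i)) ∨
      (o ∈ Bx z (K - 1) ∧ Con r (S ∩ Bx z K ∪ Bx z n) u o) := by
    clear ho
    induction h with
    | refl =>
      refine Or.inr ⟨?_, Con.refl _⟩
      rw [mem_Bx] at *; omega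
    | @tail w w' _ h ih =>
      rcases ih with hex | ⟨hw, p⟩
      · exact Or.inl hex
      have s := hr _ _ h.1
      have hwK : w ∈ Bx z K := by rw [mem_Bx] at *; omega
      have hwK' : w' ∈ Bx z K := by unfold star at s; rw [mem_Bx] at *; omega
      have p' : Con r (S ∩ Bx z K ∪ Bx z n) u w' :=
        p.trans (Con.single h.1 (Or.inl ⟨h.2.1, hwK⟩) (Or.inl ⟨h.2.2, hwK'⟩))
      by_cases hw' : w' ∈ Bx z (K - 1)
      · exact Or.inr ⟨hw', p'⟩
      left
      obtain ⟨i, hi⟩ := mem_Hi hwK' hw'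
      exact ⟨i, u, hu, w', hi, p'⟩
  exact key.resolve_right fun hc => ho hc.1

lemma Hi_cases {p : Set P → Prop} {z : P} {K : ℤ} (h : ∀ i, p (Hi z K i)) {κ : Bool} {σ τ : ℤ}
    (hσ : σ * σ = 1) (hτ : τ * τ = 1) : p (Hf z K κ σ τ) := by
  obtain ⟨b, rfl⟩ := exists_sg hσ
  obtain ⟨c, rfl⟩ := exists_sg hτ
  exact h (κ, b, c)

/-! ### Zero arms -/

/-- A zero `*`-arm towards any half-side exists with high probability, uniformly in the even domain,
the even centre and the outer scale. -/
lemma zero_arms {C : ℝ} (hC : Loc C) {ε : ℝ} (hε : 0 < ε) : ∃ m : ℤ, 0 ≤ m ∧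
    ∀ K, m < K → ∀ D : Finset P, EvenDom D → ∀ z : P, (z.1 + z.2) % 2 = 0 → ∀ i,
      Ex (Om D xi0) (fun h => ind (¬ Arm star {v | h v = 0} z m K (Hi z K i))) ≤ ε := by
  obtain ⟨n, hn2, hn, H⟩ := NoZ_small hC (pow_pos hε 8)
  refine ⟨n + 5, by omega, fun K hK D hD z hz i => ?_⟩
  obtain ⟨L0, hL0, hL2, hDL⟩ := exists_Dm_supset D z
  set L := L0 + 2 * K with hL
  have hmono : ∀ i, ∀ a b : P → ℤ, absle a b → ¬ Arm star {v | a v = 0} z (n + 5) K (Hi z K i) →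
      ¬ Arm star {v | b v = 0} z (n + 5) K (Hi z K i) := by
    intro i a b hab h1 h2
    refine h1 (h2.mono ?_)
    rintro v ⟨hv, -⟩
    have := hab v
    simp only [Set.mem_ofPred_eq] at hv ⊢
    rw [hv, abs_zero] at this
    exact abs_eq_zero.1 (le_antisymm this (abs_nonneg _))
  have hsub : D ⊆ Dm z L := hDL.trans (Dm_mono (by rw [dist1_self]; omega))
  refine le_trans (abs_SD' hD hsub xi0_isHom xi0_nonneg _ fun a b hab => ind_mono (hmono i a b hab)) ?_
  refine root8 (s := Om (Dm z L) xi0) (Om_nonempty xi0_isHom) (abs_PA xi0_isHom xi0_nonneg)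
    (fun i h => ¬ Arm star {v | h v = 0} z (n + 5) K (Hi z K i)) (Or.inl hmono)
    (q := Ex (Om (Dm z L) xi0) (fun h => ind (¬ Arm star {v | h v = 0} z (n + 5) K (Hi z K i))))
    ?_ hε.le ?_
  · have : ∀ i, Ex (Om (Dm z L) xi0) (fun h => ind (¬ Arm star {v | h v = 0} z (n + 5) K (Hi z K i)))
        = Ex (Om (Dm z L) xi0)
          (fun h => ind (¬ Arm star {v | h v = 0} z (n + 5) K (Hf z K true 1 1))) := by
      rintro ⟨κ, σ, τ⟩
      symm
      rw [Ex_sy (κ := κ) (sg_sq σ) (sg_sq τ)]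
      refine Ex_congr fun h _ => ?_
      congr 2
      exact propext (sy_Arm (sg_sq σ) (sg_sq τ) (sy_star (sg_sq σ) (sg_sq τ)) {v | h v = 0} _ _)
    intro j
    rw [this, this]
  · rw [Ex_translate (D := Dm 0 L) (-z) (by simp; omega)
      (fun v => by rw [mem_Dm, mem_Dm]; simp only [dist1]; simp [sub_eq_add_neg])]
    refine le_trans (Ex_mono fun h hh => ind_mono ?_) (H L (by omega) (by omega))
    intro hfail v hv ⟨o, ho, p⟩
    have hvB : v ∈ Bx 0 (n + 5) := by
      have := Dm_Bx (n := n + 4) (by convert hv using 2; ring)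
      rw [mem_Bx] at *; omega
    have p' : Con star {w | w + -z ∈ Zs n h ∪ {v | v ∉ Dm 0 L}} (v + z) (o + z) := by
      refine Relation.ReflTransGen.lift (· + z) ?_ _ _ (p.symm star_symm)
      rintro a b ⟨h1, h2, h3⟩
      refine ⟨?_, ?_, ?_⟩
      · unfold star at *; simp only [Prod.fst_add, Prod.snd_add]; omega
      · simpa using h2
      · simpa using h3
    obtain ⟨j, hj⟩ := exit_arm (fun _ _ a => a) (z := z) (n := n + 5) (K := K) p' (by
      rw [mem_Bx] at *; simp at *; omega) hK (by
      intro hc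
      refine ho (mem_Dm.2 ?_)
      have : o ∈ Bx 0 (K - 1) := by rw [mem_Bx] at *; simp at *; omega
      have := Bx_Dm this
      omega)
    refine hfail j (hj.mono ?_)
    rintro w ⟨hw, hwK⟩
    rcases hw with hw | hw
    · exact hw.1
    · refine absurd (mem_Dm.2 ?_) hw
      have : w + -z ∈ Bx 0 K := by rw [mem_Bx] at *; simp at *; omega
      have := Bx_Dm this
      omega

/-! ### Nonzero clusters are confined -/

/-- Nonzero arm from the point `z` to the half-side `i`. -/
def NA (z : P) (K : ℤ) (i : Bool × Bool × Bool) (h : P → ℤ) : Prop :=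
  h z ≠ 0 ∧ Arm adj2 {v | h v ≠ 0} z 0 K (Hi z K i)

lemma NA.mono {z : P} {K : ℤ} {i : Bool × Bool × Bool} {a b : P → ℤ} (hab : absle a b)
    (h : NA z K i a) : NA z K i b := by
  have : ∀ v, a v ≠ 0 → b v ≠ 0 := fun v hv hb => by
    have := hab v
    rw [hb, abs_zero] at this
    exact hv (abs_eq_zero.1 (le_antisymm this (abs_nonneg _)))
  exact ⟨this z h.1, h.2.mono fun v hv => this v hv.1⟩

lemma mem_Bx_zero {z v : P} : v ∈ Bx z 0 ↔ v = z := by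
  rw [mem_Bx, Prod.ext_iff]; omega

lemma sy_self {z : P} {κ : Bool} {σ τ : ℤ} : sy z κ σ τ z = z := by cases κ <;> simp [sy]

/-- By dihedral symmetry of the diamond, all eight half-sides are equally likely to be reached. -/
lemma NA_sy (z : P) (L K : ℤ) (i j : Bool × Bool × Bool) :
    Ex (Om (Dm z L) xi0) (fun h => ind (NA z K i h))
      = Ex (Om (Dm z L) xi0) (fun h => ind (NA z K j h)) := by
  have : ∀ i, Ex (Om (Dm z L) xi0) (fun h => ind (NA z K i h))
      = Ex (Om (Dm z L) xi0)
        (fun h => ind (h z ≠ 0 ∧ Arm adj2 {v | h v ≠ 0} z 0 K (Hf z K true 1 1))) := by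
    rintro ⟨κ, σ, τ⟩
    symm
    rw [Ex_sy (κ := κ) (sg_sq σ) (sg_sq τ)]
    refine Ex_congr fun h _ => ?_
    beta_reduce
    rw [sy_self]
    congr 2
    exact propext (sy_Arm (sg_sq σ) (sg_sq τ) (sy_adj (sg_sq σ) (sg_sq τ)) {v | h v ≠ 0} _ _)
  rw [this, this]

lemma mem_Hi_add {z a v : P} {K : ℤ} {i : Bool × Bool × Bool} :
    v + a ∈ Hi (z + a) K i ↔ v ∈ Hi z K i := by
  obtain ⟨κ, σ, τ⟩ := i
  cases κ <;> simp [Hi, Hf]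

lemma Arm_shift {S : Set P} {z a : P} {n K : ℤ} {i : Bool × Bool × Bool}
    (h : Arm adj2 {v | v + a ∈ S} z n K (Hi z K i)) : Arm adj2 S (z + a) n K (Hi (z + a) K i) := by
  obtain ⟨u, hu, v, hv, p⟩ := h
  have bx : ∀ {w k}, w ∈ Bx z k → w + a ∈ Bx (z + a) k := by
    intro w k hw; rw [mem_Bx] at *; simp only [Prod.fst_add, Prod.snd_add]; omega
  refine ⟨u + a, bx hu, v + a, mem_Hi_add.2 hv, ?_⟩
  refine Relation.ReflTransGen.lift (· + a) ?_ _ _ p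
  rintro b c ⟨h1, h2, h3⟩
  refine ⟨?_, h2.imp (fun h => ⟨h.1, bx h.2⟩) bx, h3.imp (fun h => ⟨h.1, bx h.2⟩) bx⟩
  rw [adj2_iff] at *; simp only [Prod.fst_add, Prod.snd_add]; omega

/-- Nonzero arm probabilities in a diamond do not depend on its (even) centre. -/
lemma NA_shift {z z' : P} (hz : (z.1 + z.2) % 2 = 0) (hz' : (z'.1 + z'.2) % 2 = 0) (L K : ℤ)
    (i : Bool × Bool × Bool) : Ex (Om (Dm z L) xi0) (fun h => ind (NA z K i h))
      ≤ Ex (Om (Dm z' L) xi0) (fun h => ind (NA z' K i h)) := by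
  rw [Ex_translate (D := Dm z' L) (D' := Dm z L) (z' - z) (by simp; omega)
    (fun v => by rw [mem_Dm, mem_Dm]; simp only [dist1]; simp; ring_nf)]
  refine Ex_mono fun h _ => ind_mono ?_
  rintro ⟨h1, h2⟩
  have := Arm_shift (S := {v | h v ≠ 0}) (a := z' - z) h2
  beta_reduce at h1
  rw [add_sub_cancel] at this h1
  exact ⟨h1, this⟩

/-- Positively associated events. -/
lemma PA.all_inc {α : Type*} {s : Finset α} {r : α → α → Prop} (hs : s.Nonempty) (h : PA s r)
    {β : Type*} (I : Finset β) (X : β → α → Prop) (mX : ∀ i a b, r a b → X i a → X i b) {p : ℝ}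
    (hp : 0 ≤ p) (hX : ∀ i ∈ I, p ≤ Ex s (fun a => ind (X i a))) :
    p ^ I.card ≤ Ex s (fun a => ind (∀ i ∈ I, X i a)) := by
  have e : ∀ a, ∏ i ∈ I, ind (X i a) = ind (∀ i ∈ I, X i a) := by
    intro a
    by_cases hc : ∀ i ∈ I, X i a
    · rw [ind_true hc]; exact Finset.prod_eq_one fun i hi => ind_true (hc i hi)
    · rw [ind_false hc]
      push Not at hc
      obtain ⟨i, hi, hx⟩ := hc
      exact Finset.prod_eq_zero hi (ind_false hx)
  simp only [← e]
  refine le_trans ?_ (h.prod_inc hs I (fun i a => ind (X i a)) (fun i a => ind_nonneg _)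
          fun i a b hab => ind_mono (mX i a b hab))
  rw [← Finset.prod_const]
  exact Finset.prod_le_prod (fun _ _ => hp) hX

/-- An event about `|h|` on which `h z ≠ 0` splits evenly according to the sign of `h z`. -/
lemma sign_half {D : Finset P} (hD : EvenDom D) {z : P} (hz : (z.1 + z.2) % 2 = 0)
    (X : (P → ℤ) → Prop) (hX : ∀ a b, absle a b → X a → X b) (h0 : ∀ h, X h → h z ≠ 0) :
    Ex (Om D xi0) (fun h => ind (X h)) = 2 * Ex (Om D xi0) (fun h => ind (X h ∧ 1 ≤ h z)) := by
  have e1 : Ex (Om D xi0) (fun h => ind (X h ∧ h z < 0)) =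
      Ex (Om D xi0) (fun h => ind (X h ∧ 1 ≤ h z)) := by
    rw [Ex_neg xi0_isHom (even_xi0_bdry hD)]
    refine Ex_congr fun h hh => ?_
    congr 1
    have ab : ∀ v, |glue D (-h) xi0 v| = |h v| := by
      intro v
      by_cases hv : v ∈ D
      · simp [glue, hv]
      · simp [glue, hv, (mem_Om.1 hh).2 v hv]
    have hx : X (glue D (-h) xi0) ↔ X h :=
      ⟨hX _ _ fun v => (ab v).le, hX _ _ fun v => (ab v).ge⟩
    refine propext ?_
    rw [hx]
    refine and_congr_right fun hXh => ?_
    have hzD : z ∈ D := by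
      by_contra hc
      refine h0 h hXh ?_
      rw [(mem_Om.1 hh).2 z hc]; exact hz
    have := h0 h hXh
    simp only [glue, hzD, if_true, Pi.neg_apply]
    omega
  have e2 : Ex (Om D xi0) (fun h => ind (X h)) = Ex (Om D xi0)
      (fun h => ind (X h ∧ 1 ≤ h z) + ind (X h ∧ h z < 0)) := by
    refine Ex_congr fun h hh => ?_
    by_cases hx : X h
    · rcases lt_or_gt_of_ne (h0 h hx) with h1 | h1
      · rw [ind_true hx, ind_false (by omega), ind_true ⟨hx, h1⟩]; norm_num
      · rw [ind_true hx, ind_true ⟨hx, by omega⟩, ind_false (by omega)]; norm_num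
    · rw [ind_false hx, ind_false (by tauto), ind_false (by tauto)]; norm_num
  rw [e2, Ex_add, e1]; ring

/-- Along a path of nonzero heights the sign is constant. -/
lemma NA.pos {z : P} {K m : ℤ} (hm : 0 ≤ m) {i : Bool × Bool × Bool} {h : P → ℤ} (hh : isHom h)
    (hN : NA z K i h) (hz : 1 ≤ h z) : Arm adj2 {v | 1 ≤ h v} z m K (Hi z K i) := by
  obtain ⟨-, u, hu, v, hv, p⟩ := hN
  rw [mem_Bx_zero] at hu
  subst hu
  have zB : u ∈ Bx u m := by rw [mem_Bx]; omega
  refine ⟨u, zB, v, hv, ?_⟩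
  refine (p.inv (p := fun w => Con adj2 ({v | 1 ≤ h v} ∩ Bx u K ∪ Bx u m) u w ∧ 1 ≤ h w)
    ⟨Con.refl _, hz⟩ ?_).1
  rintro a b hab ha hb ⟨ih1, ih2⟩
  have hb1 : 1 ≤ h b := by
    rcases hb with hb | hb
    · have := hh.2 a b hab; have : h b ≠ 0 := hb.1; omega
    · rw [mem_Bx_zero.1 hb]; exact hz
  have hin : ∀ w, 1 ≤ h w → (w ∈ {v | h v ≠ 0} ∩ Bx u K ∪ Bx u 0) →
      w ∈ {v | 1 ≤ h v} ∩ Bx u K ∪ Bx u m := by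
    rintro w h1 (hw | hw)
    · exact Or.inl ⟨h1, hw.2⟩
    · rw [mem_Bx_zero.1 hw]; exact Or.inr zB
  exact ⟨ih1.trans (Con.single hab (hin a ih2 ha) (hin b hb1 hb)), hb1⟩

/-- `x` is joined within `S` to distance at least `K`. -/
def Far (S : Set P) (x : P) (K : ℤ) : Prop := x ∈ S ∧ ∃ o ∉ Bx x (K - 1), Con adj2 S x o

/-- A nonzero path leaving a box leaves it through one of the eight half-sides. -/
lemma Far.NA {h : P → ℤ} {z : P} {K : ℤ} (hK : 0 < K) (hF : Far {v | h v ≠ 0} z K) :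
    ∃ i, NA z K i h := by
  obtain ⟨h1, o, ho, p⟩ := hF
  obtain ⟨i, hi⟩ := exit_arm (fun _ _ a => a.star) p (mem_Bx_zero.2 rfl) hK ho
  exact ⟨i, h1, hi⟩

/-- Nonzero clusters have uniformly small reach. -/
lemma far_small_even {C : ℝ} (hC : Loc C) {θ : ℝ} (hθ : 0 < θ) : ∃ K : ℤ, 0 < K ∧
    ∀ D : Finset P, EvenDom D → ∀ z : P, (z.1 + z.2) % 2 = 0 →
      Ex (Om D xi0) (fun h => ind (Far {v | h v ≠ 0} z K)) ≤ θ := by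
  set p : ℝ := θ / 8 with hp
  have hp0 : 0 < p := by positivity
  obtain ⟨m, hm, HZ⟩ := zero_arms hC (ε := p ^ 3 / 12) (by positivity)
  obtain ⟨N, hN, H⟩ := no_six (C' := 2 * C + 2) (p0 := p ^ 3 / 4) (n := m)
    (by linarith [hC.nonneg]) (by positivity) hm
  refine ⟨2 * N, by omega, fun D hD z hz => ?_⟩
  by_contra! hlt
  set K := 2 * N with hK
  obtain ⟨L, hL0, hL2, hDL⟩ := exists_Dm_supset D z
  have hna : ∀ i, p ≤ Ex (Om (Dm z L) xi0) (fun h => ind (NA z K i h)) := by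
    have h1 : θ ≤ ∑ i, Ex (Om D xi0) (fun h => ind (NA z K i h)) := by
      rw [← Ex_sum]
      refine hlt.le.trans (Ex_mono fun h _ => ?_)
      refine le_trans (ind_mono fun hF => ?_) (ind_exists_le Finset.univ fun i => NA z K i h)
      obtain ⟨i, hi⟩ := hF.NA (by omega)
      exact ⟨i, Finset.mem_univ _, hi⟩
    have h2 : ∀ i, Ex (Om D xi0) (fun h => ind (NA z K i h)) ≤
        Ex (Om (Dm z L) xi0) (fun h => ind (NA z K i h)) := fun i =>
      abs_SD' hD hDL xi0_isHom xi0_nonneg _ fun a b hab => ind_mono (NA.mono hab)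
    intro j
    have h3 := h1.trans (Finset.sum_le_sum fun i _ => h2 i)
    rw [Finset.sum_congr rfl fun i _ => NA_sy z L K i j] at h3
    simp only [Finset.sum_const, Finset.card_univ] at h3
    norm_num at h3
    rw [hp]; linarith
  set D1 := Dm 0 (L + 2 * N) with hD1
  have hev : EvenDom D1 := Dm_even (by simp; omega)
  refine H K le_rfl D1 ∅ xi0 xi0 xi0_isHom xi0_isHom ?_ (fun v _ => hC.all hev v)
    (fun v _ => hC.all (fun u v hu => absurd hu (Finset.notMem_empty u)) v) ?_
  · intro v hv
    have := Bx_Dm hv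
    rw [hD1, mem_Dm]; omega
  intro z' hz'B hz'
  have hna' : ∀ i, p ≤ Ex (Om D1 xi0) (fun h => ind (NA z' K i h)) := by
    intro i
    refine (hna i).trans ((NA_shift hz hz' L K i).trans ?_)
    refine abs_SD' (Dm_even (by omega)) ?_ xi0_isHom xi0_nonneg _ fun a b hab => ind_mono (NA.mono hab)
    refine Dm_mono ?_
    have := Bx_Dm hz'B
    omega
  set I : Finset (Bool × Bool × Bool) :=
    {(false, false, true), (false, true, true), (true, false, true)} with hI
  have hIc : I.card = 3 := by rw [hI]; rfl
  set X : (P → ℤ) → Prop := fun h => ∀ i ∈ I, NA z' K i h with hX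
  have h3 : p ^ 3 ≤ Ex (Om D1 xi0) (fun h => ind (X h)) := by
    rw [← hIc]
    exact PA.all_inc (Om_nonempty xi0_isHom) (abs_PA xi0_isHom xi0_nonneg) I
      (fun i h => NA z' K i h) (fun i a b hab => NA.mono hab) hp0.le fun i _ => hna' i
  rw [sign_half hev hz' X (fun a b hab hx i hi => (hx i hi).mono hab)
    (fun h hx => (hx (true, false, true) (by simp [hI])).1)] at h3
  have hz3 := fun i => HZ K (by omega) D1 hev z' hz' i
  have main : Ex (Om D1 xi0) (fun h => ind (X h ∧ 1 ≤ h z')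
      - (ind (¬ Arm star {v | h v = 0} z' m K (Hi z' K (true, true, true)))
      + ind (¬ Arm star {v | h v = 0} z' m K (Hi z' K (false, false, false)))
      + ind (¬ Arm star {v | h v = 0} z' m K (Hi z' K (false, true, false)))))
      ≤ Ex (Om D1 xi0) fun h1 => Ex (Om ∅ xi0) fun h2 =>
        ind (Six (SA h1 h2) (SB h1 h2) z' m K) := by
    refine Ex_mono fun h hh => ?_
    refine const_le_Ex (Om_nonempty xi0_isHom) fun h2 hh2 => ?_
    have e2 : h2 = xi0 := funext fun v => (mem_Om.1 hh2).2 v (Finset.notMem_empty v)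
    have hhom := (mem_Om.1 hh).1
    have n1 := ind_nonneg (¬ Arm star {v | h v = 0} z' m K (Hi z' K (true, true, true)))
    have n2 := ind_nonneg (¬ Arm star {v | h v = 0} z' m K (Hi z' K (false, false, false)))
    have n3 := ind_nonneg (¬ Arm star {v | h v = 0} z' m K (Hi z' K (false, true, false)))
    have n4 := ind_nonneg (Six (SA h h2) (SB h h2) z' m K)
    have n5 := ind_le_one (X h ∧ 1 ≤ h z')
    by_cases b1 : Arm star {v | h v = 0} z' m K (Hi z' K (true, true, true))
    swap
    · rw [ind_true b1]; linarith
    by_cases b2 : Arm star {v | h v = 0} z' m K (Hi z' K (false, false, false))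
    swap
    · rw [ind_true b2]; linarith
    by_cases b3 : Arm star {v | h v = 0} z' m K (Hi z' K (false, true, false))
    swap
    · rw [ind_true b3]; linarith
    by_cases b4 : X h ∧ 1 ≤ h z'
    swap
    · rw [ind_false b4]; linarith
    have hA : ∀ i ∈ I, Arm adj2 (SA h h2) z' m K (Hi z' K i) := fun i hi =>
      ((b4.1 i hi).pos hm hhom b4.2).mono fun v hv => by
        have h1 : 1 ≤ h v := hv.1
        have := xi0_nonneg v
        simp only [SA, e2, Set.mem_ofPred_eq]; omega
    have hB : ∀ {i}, Arm star {v | h v = 0} z' m K (Hi z' K i) →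
        Arm star (SB h h2) z' m K (Hi z' K i) := fun hb => hb.mono fun v hv => by
      have h1 : h v = 0 := hv.1
      have := hhom.1 v
      simp only [SB, e2, Set.mem_ofPred_eq, xi0]; omega
    have : Six (SA h h2) (SB h h2) z' m K :=
      ⟨⟨hA (false, false, true) (by simp [hI]), hA (false, true, true) (by simp [hI]),
        hA (true, false, true) (by simp [hI])⟩, hB b1, hB b2, hB b3⟩
    rw [ind_true this]; linarith
  rw [Ex_sub, Ex_add, Ex_add] at main
  have a1 := hz3 (true, true, true)
  have a2 := hz3 (false, false, false)
  have a3 := hz3 (false, true, false)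
  linarith

/-! ### Decorrelation -/

/-- The core `Bx x n` is joined through `S` to distance at least `K`. -/
def Out (S : Set P) (x : P) (n K : ℤ) : Prop :=
  ∃ u ∈ Bx x n, ∃ o ∉ Bx x (K - 1), Con adj2 (S ∪ Bx x n) u o

lemma adj2.bx {u v z : P} {k : ℤ} (a : adj2 u v) (hu : u ∈ Bx z k) : v ∈ Bx z (k + 1) := by
  rw [adj2_iff] at a; rw [mem_Bx] at *; omega

/-- Among the first two vertices of the path after its last visit to the core, one is even; the
nonzero cluster of that vertex reaches far. The margin `n + 5` accounts for the change of centre. -/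
lemma Out.far {S : Set P} {x : P} {n K : ℤ} (h : Out S x n (K + n + 5)) (hK : 0 < K) :
    ∃ y ∈ Bx x (n + 2), (y.1 + y.2) % 2 = 0 ∧ Far S y K := by
  obtain ⟨u, hu, o, ho, p⟩ := h
  obtain ⟨c, w, hc, hcw, hw, p⟩ := p.last_exit hu (fun hc => ho (by rw [mem_Bx] at *; omega))
  have sub : (S ∪ Bx x n) \ Bx x n ⊆ S := fun v hv => hv.1.resolve_right hv.2
  have hw1 := hcw.bx hc
  have fin : ∀ y ∈ Bx x (n + 2), o ∉ Bx y (K - 1) := by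
    intro y hy hoy
    refine ho ?_
    rw [mem_Bx] at *; omega
  by_cases hpar : (w.1 + w.2) % 2 = 0
  · have hw2 : w ∈ Bx x (n + 2) := by rw [mem_Bx] at *; omega
    exact ⟨w, hw2, hpar, sub hw, o, fin w hw2, p.mono (fun _ _ a => a) sub⟩
  · rcases Relation.ReflTransGen.cases_head p with e | ⟨y, ⟨h1, -, h3⟩, q⟩
    · exact absurd (by rw [mem_Bx] at *; rw [← e]; omega) ho
    · have hy : y ∈ Bx x (n + 2) := by
        have := h1.bx hw1; convert this using 1; ring_nf
      refine ⟨y, hy, ?_, sub h3, o, fin y hy, Con.mono (fun _ _ a => a) sub q⟩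
      rw [adj2_iff] at h1; omega

/-- The bound of `far_small_even` for a core of any size, by a union bound over its even vertices. -/
lemma far_small {C : ℝ} (hC : Loc C) {θ : ℝ} (hθ : 0 < θ) {n : ℤ} (hn : 0 ≤ n) :
    ∃ K : ℤ, n < K ∧ ∀ D : Finset P, EvenDom D → ∀ x : P,
      Ex (Om D xi0) (fun h => ind (Out {v | h v ≠ 0} x n K)) ≤ θ := by
  classical
  have hpos : (0:ℝ) < (2 * ((n + 2 : ℤ) : ℝ) + 1) ^ 2 := by
    have : (0:ℝ) ≤ n := by exact_mod_cast hn
    push_cast; positivity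
  obtain ⟨K, hK, H⟩ := far_small_even hC (θ := θ / (2 * ((n + 2 : ℤ) : ℝ) + 1) ^ 2) (by positivity)
  refine ⟨K + n + 5, by omega, fun D hD x => ?_⟩
  obtain ⟨S, hS, hSc⟩ := exists_box x (n := n + 2) (by omega)
  set I := S.filter (fun y => (y.1 + y.2) % 2 = 0) with hI
  have h1 : Ex (Om D xi0) (fun h => ind (Out {v | h v ≠ 0} x n (K + n + 5))) ≤
      ∑ y ∈ I, Ex (Om D xi0) (fun h => ind (Far {v | h v ≠ 0} y K)) := by
    rw [← Ex_sum]
    refine Ex_mono fun h _ => le_trans (ind_mono fun ho => ?_)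
      (ind_exists_le I fun y => Far {v | h v ≠ 0} y K)
    obtain ⟨y, hy, hy2, hf⟩ := ho.far hK
    exact ⟨y, by rw [hI, Finset.mem_filter]; exact ⟨(hS y).2 hy, hy2⟩, hf⟩
  refine h1.trans ?_
  refine (Finset.sum_le_card_nsmul I _ (θ / (2 * ((n + 2 : ℤ) : ℝ) + 1) ^ 2) fun y hy =>
    H D hD y (Finset.mem_filter.1 hy).2).trans ?_
  have hc : (I.card : ℝ) ≤ (2 * ((n + 2 : ℤ) : ℝ) + 1) ^ 2 := by
    rw [← hSc]; exact_mod_cast Finset.card_filter_le _ _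
  rw [nsmul_eq_mul]
  calc (I.card : ℝ) * (θ / (2 * ((n + 2 : ℤ) : ℝ) + 1) ^ 2)
      ≤ (2 * ((n + 2 : ℤ) : ℝ) + 1) ^ 2 * (θ / (2 * ((n + 2 : ℤ) : ℝ) + 1) ^ 2) := by gcongr
    _ = θ := by field_simp

lemma abs_Ex_le {α : Type*} {s : Finset α} (F : α → ℝ) : |Ex s F| ≤ Ex s (fun a => |F a|) := by
  unfold Ex
  rw [abs_div, Nat.abs_cast]
  exact div_le_div_of_nonneg_right (Finset.abs_sum_le_sum_abs _ _) (by positivity)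

lemma ind_sq (p : Prop) : ind p ^ 2 = ind p := by unfold ind; split_ifs <;> norm_num

/-- The height at `z` is nearly uncorrelated with anything measurable with respect to the heights
away from `z`: given the nonzero clusters of the far region, its sign is symmetric unless `z`
belongs to one of them. -/
lemma corr_small {C : ℝ} (hC : Loc C) {D : Finset P} (hD : EvenDom D) {z : P} {n : ℤ}
    (hn : 1 ≤ n) (hB : ∀ v ∈ Bx z n, v ∈ D) (G : (P → ℤ) → ℝ) (G0 : ∀ h, 0 ≤ G h) (G1 : ∀ h, G h ≤ 1)
    (hG : ∀ h h' : P → ℤ, (∀ v, v ∉ Bx z n → h v = h' v) → G h = G h') :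
    |Ex (Om D xi0) (fun h => (h z : ℝ) * G h)| ≤
      √((2 * C + 2) * Ex (Om D xi0) (fun h => ind (Out {v | h v ≠ 0} z 0 n))) := by
  set O : Set P := {v | v ∉ Bx z n} with hO
  have hz : z ∈ D := hB z (by rw [mem_Bx]; omega)
  refine Real.abs_le_sqrt ?_
  -- only configurations where `z` is reached contribute
  have e1 : |Ex (Om D xi0) (fun h => (h z : ℝ) * G h)| ≤
      Ex (Om D xi0) (fun h => |(h z : ℝ)| * ind (Out {v | h v ≠ 0} z 0 n)) := by
    rw [Ex_explore adj2 (fun h => {v | h v ≠ 0}) O (fun h h' v e => by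
      simp only [Set.mem_ofPred_eq, e])]
    refine le_trans (abs_Ex_le _) (Ex_mono fun h hh => ?_)
    have hhom := (mem_Om.1 hh).1
    set U := Un adj2 D {v | h v ≠ 0} O with hU
    have UB : ∀ v, v ∉ Bx z n → v ∉ U := fun v hv hvU =>
      (mem_Un.1 hvU).2 (Or.inl (sub_Zr hv))
    have e : Ex (Om U h) (fun g => (g z : ℝ) * G g) = Ex (Om U h) (fun g => G h * (g z : ℝ)) := by
      refine Ex_congr fun g hg => ?_
      rw [hG g h fun v hv => (mem_Om.1 hg).2 v (UB v hv)]; ring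
    rw [e, Ex_mul]
    by_cases hzU : z ∈ U
    · rw [Ex_zero hhom (fun u v hu hv a => ?_) hzU, mul_zero, abs_zero]
      · exact mul_nonneg (abs_nonneg _) (ind_nonneg _)
      · have := (Un_bdry (fun _ _ a => a) (fun v hv hvB => hv (hB v hvB)) hu hv a).2.1
        simpa using this
    · have e2 : Ex (Om U h) (fun g => (g z : ℝ)) = h z := by
        rw [← Ex_const (Om_nonempty (D := U) hhom) (h z : ℝ)]
        exact Ex_congr fun g hg => by rw [(mem_Om.1 hg).2 z hzU]
      rw [e2, abs_mul, abs_of_nonneg (G0 h), mul_comm]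
      refine le_trans (mul_le_of_le_one_right (abs_nonneg _) (G1 h)) ?_
      by_cases h0 : h z = 0
      · simp [h0]
      rw [ind_true, mul_one]
      -- `z` lies in the explored region
      have hzb : z ∈ Zb adj2 {v | h v ≠ 0} O := by
        by_contra hc; exact hzU (mem_Un.2 ⟨hz, hc⟩)
      have hzr : z ∈ Zr adj2 {v | h v ≠ 0} O := by
        by_contra hc; exact Zb_notMem hzb hc h0
      obtain ⟨o, ho, p⟩ := hzr
      replace p := p.symm adj2_symm
      have zB : z ∈ Bx z (n - 1) := by rw [mem_Bx]; omega
      have key : Out {v | h v ≠ 0} z 0 n ∨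
          (o ∈ Bx z (n - 1) ∧ h o ≠ 0 ∧ Con adj2 {v | h v ≠ 0} z o) := by
        clear ho
        induction p with
        | refl => exact Or.inr ⟨zB, h0, Con.refl _⟩
        | @tail a b _ hab ih =>
          rcases ih with ih | ⟨h1, h2, h3⟩
          · exact Or.inl ih
          have hbn : b ∈ Bx z n := by have := hab.1.bx h1; rwa [sub_add_cancel] at this
          have hb0 : h b ≠ 0 := by
            rcases hab.2.2 with hb | hb
            · exact hb
            · exact absurd hbn hb
          have h3' := h3.trans (Con.single hab.1 h2 hb0)
          by_cases hb : b ∈ Bx z (n - 1)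
          · exact Or.inr ⟨hb, hb0, h3'⟩
          · exact Or.inl ⟨z, by rw [mem_Bx]; omega, b, hb,
              h3'.mono (fun _ _ a => a) Set.subset_union_left⟩
      exact key.resolve_right fun hc => ho (by
        have := hc.1; rw [mem_Bx] at *; omega)
  have e3 := Ex_cs (s := Om D xi0) (fun h => |(h z : ℝ)|) (fun h => ind (Out {v | h v ≠ 0} z 0 n))
  simp only [sq_abs, ind_sq] at e3
  refine le_trans (sq_le_sq' ?_ ?_) (e3.trans ?_)
  · linarith [neg_abs_le (Ex (Om D xi0) (fun h => (h z : ℝ) * G h))]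
  · exact (le_abs_self _).trans e1
  · exact mul_le_mul_of_nonneg_right (hC.all hD z) (Ex_nonneg fun _ _ => ind_nonneg _)

/-! ### Pairs of height functions -/

/-- Simultaneous resampling of two independent height functions after exploring a set that depends
locally on both. -/
lemma pair_explore {D1 D2 : Finset P} {ξ1 ξ2 : P → ℤ} (S : (P → ℤ) × (P → ℤ) → Set P) (O : Set P)
    (hS : ∀ a b : (P → ℤ) × (P → ℤ), ∀ v, a.1 v = b.1 v → a.2 v = b.2 v → (v ∈ S a ↔ v ∈ S b))
    (F : (P → ℤ) × (P → ℤ) → ℝ) :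
    Ex (Om D1 ξ1 ×ˢ Om D2 ξ2) F = Ex (Om D1 ξ1 ×ˢ Om D2 ξ2) (fun a =>
      Ex (Om (Un adj2 (D1 ∩ D2) (S a) O) a.1 ×ˢ Om (Un adj2 (D1 ∩ D2) (S a) O) a.2) F) := by
  refine Ex_tower (fun a => Om (Un adj2 (D1 ∩ D2) (S a) O) a.1 ×ˢ
    Om (Un adj2 (D1 ∩ D2) (S a) O) a.2) (fun a ha => ?_) (fun a ha b hb => ?_)
    (fun a ha b hb => ?_) F
  · rw [Finset.mem_product] at *
    exact ⟨self_mem_Om (mem_Om.1 ha.1).1, self_mem_Om (mem_Om.1 ha.2).1⟩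
  · rw [Finset.mem_product] at *
    exact ⟨Om_sub (Un_sub.trans Finset.inter_subset_left) ha.1 hb.1,
      Om_sub (Un_sub.trans Finset.inter_subset_right) ha.2 hb.2⟩
  · rw [Finset.mem_product] at hb
    have e : Zb adj2 (S b) O = Zb adj2 (S a) O := Zb_congr fun v hv => by
      have hU : v ∉ Un adj2 (D1 ∩ D2) (S a) O := fun h => (mem_Un.1 h).2 hv
      exact hS _ _ _ ((mem_Om.1 hb.1).2 v hU).symm ((mem_Om.1 hb.2).2 v hU).symm
    have : Un adj2 (D1 ∩ D2) (S b) O = Un adj2 (D1 ∩ D2) (S a) O := by unfold Un; rw [e]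
    rw [this, Om_eq_of_mem hb.1, Om_eq_of_mem hb.2]

/-- No path of `S` from outside `D` reaches the box `Bx z (n + 1)`, where the part of `S` inside
`Bx z n` is disregarded. -/
def NoP (S : Set P) (D : Finset P) (z : P) (n : ℤ) : Prop :=
  ∀ v ∈ Bx z (n + 1), v ∉ Zr adj2 (S \ Bx z n) {v | v ∉ D}

/-- The vertices on the outer boundary of the unrevealed region are not in `S`: they lie outside the
core, which the exploration never came near, and the exploration stopped at them. -/
lemma NoP.bdry {S : Set P} {D : Finset P} {z : P} {n : ℤ} (h : NoP S D z n) {u v : P}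
    (hu : u ∈ Un adj2 D (S \ Bx z n) {v | v ∉ D}) (hv : v ∉ Un adj2 D (S \ Bx z n) {v | v ∉ D})
    (a : adj2 u v) : v ∉ S := by
  obtain ⟨h1, h2, -⟩ := Un_bdry (fun _ _ a => a) (fun v hv => hv) hu hv a
  intro hS
  have hB : v ∈ Bx z n := by
    by_contra hB; exact h2 ⟨hS, hB⟩
  refine hv (mem_Un.2 ⟨h1, ?_⟩)
  rintro (hz | ⟨w, hw, hwv⟩)
  · exact h v (by rw [mem_Bx] at *; omega) hz
  · exact h w ((adj2_symm hwv).bx hB) hw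

lemma NoP.center {S : Set P} {D : Finset P} {z : P} {n : ℤ} (h : NoP S D z n) (hn : 0 ≤ n)
    (hB : ∀ v ∈ Bx z n, v ∈ D) : z ∈ Un adj2 D (S \ Bx z n) {v | v ∉ D} := by
  refine mem_Un.2 ⟨hB z (by rw [mem_Bx]; omega), ?_⟩
  rintro (hz | ⟨w, hw, hwv⟩)
  · exact h z (by rw [mem_Bx]; omega) hz
  · exact h w ((adj2_symm hwv).bx (by rw [mem_Bx]; omega)) hw

lemma NoP_congr {S S' : Set P} {D : Finset P} {z : P} {n : ℤ}
    (h : ∀ v, v ∉ Bx z n → (v ∈ S ↔ v ∈ S')) : NoP S D z n ↔ NoP S' D z n := by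
  have : S \ Bx z n = S' \ Bx z n := by
    ext v; simp only [Set.mem_sdiff]
    exact ⟨fun a => ⟨(h v a.2).1 a.1, a.2⟩, fun a => ⟨(h v a.2).2 a.1, a.2⟩⟩
  unfold NoP; rw [this]

lemma mem_Bx_rho {v z : P} {n : ℤ} : rho v ∈ Bx (rho z) n ↔ v ∈ Bx z n := by
  simp only [mem_Bx, rho, Equiv.coe_fn_mk]; omega

/-- The counterpart of `corr_small` for odd domains, where the mean height is `1`. -/
lemma corr_small_odd {C : ℝ} (hC : Loc C) {D : Finset P} (hD : OddDom D) {z : P} {n : ℤ}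
    (hn : 1 ≤ n) (hB : ∀ v ∈ Bx z n, v ∈ D) (G : (P → ℤ) → ℝ) (G0 : ∀ h, 0 ≤ G h) (G1 : ∀ h, G h ≤ 1)
    (hG : ∀ h h' : P → ℤ, (∀ v, v ∉ Bx z n → h v = h' v) → G h = G h') :
    |Ex (Om D xi0) (fun h => ((h z : ℝ) - 1) * G h)| ≤
      √((2 * C + 2) * Ex (Om (rhoD D) xi0) (fun h => ind (Out {v | h v ≠ 0} (rho z) 0 n))) := by
  have key := corr_small hC (rhoD_even hD) (z := rho z) hn (fun v hv => by
    rw [mem_rhoD]; refine hB _ ?_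
    rw [← mem_Bx_rho, rho_rho]; exact hv) (fun h => G (fun v => 1 - h (rho v)))
    (fun h => G0 _) (fun h => G1 _) (fun h h' e => hG _ _ fun v hv => by
      rw [e]; rwa [mem_Bx_rho])
  rw [Ex_tau (D := rhoD D) (D' := D) (fun v => by rw [mem_rhoD, rho_rho])]
  have e : (fun h : P → ℤ => (((1 - h (rho z) : ℤ) : ℝ) - 1) * G (fun v => 1 - h (rho v))) =
      fun h => (-1 : ℝ) * ((h (rho z) : ℝ) * G (fun v => 1 - h (rho v))) := by
    funext h; push_cast; ring
  rw [e, Ex_mul, abs_mul]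
  simpa using key

/-- In a pair of independent height functions with boundary values `1` and `0`, the symmetry of the
sum about `1` forces paths of large and of small sums to reach the center. -/
lemma pair_small {C : ℝ} (hC : Loc C) {ε : ℝ} (hε : 0 < ε) :
    ∃ n : ℤ, 1 ≤ n ∧ ∀ D1 D2 : Finset P, OddDom D1 → EvenDom D2 → ∀ z : P,
      (∀ v ∈ Bx z n, v ∈ D1 ∩ D2) →
      Ex (Om D1 xi0 ×ˢ Om D2 xi0) (fun a => ind (NoP (SA a.1 a.2) (D1 ∩ D2) z n)) ≤ ε ∧
      Ex (Om D1 xi0 ×ˢ Om D2 xi0) (fun a => ind (NoP (SB a.1 a.2) (D1 ∩ D2) z n)) ≤ ε := by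
  have hC0 := hC.nonneg
  obtain ⟨n, hn, hf⟩ := far_small hC (θ := (ε / 2) ^ 2 / (2 * C + 2)) (by positivity) (n := 0) le_rfl
  refine ⟨n, by omega, fun D1 D2 h1 h2 z hB => ?_⟩
  have sq : ∀ t : ℝ, t ≤ (ε / 2) ^ 2 / (2 * C + 2) → √((2 * C + 2) * t) ≤ ε / 2 := fun t ht => by
    refine Real.sqrt_le_iff.2 ⟨by positivity, ?_⟩
    rw [le_div_iff₀ (by positivity)] at ht; linarith
  have b2 := sq _ (hf D2 h2 z)
  have b1 := sq _ (hf (rhoD D1) (rhoD_even h1) (rho z))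
  have hc : ∀ S : (P → ℤ) → (P → ℤ) → Set P,
      (∀ a b a' b' : P → ℤ, ∀ v, a v = a' v → b v = b' v → (v ∈ S a b ↔ v ∈ S a' b')) →
      |Ex (Om D1 xi0 ×ˢ Om D2 xi0) (fun a => ((a.1 z : ℝ) + a.2 z - 1) *
        ind (NoP (S a.1 a.2) (D1 ∩ D2) z n))| ≤ ε := by
    intro S hS
    have e : (fun a : (P → ℤ) × (P → ℤ) => ((a.1 z : ℝ) + a.2 z - 1) *
        ind (NoP (S a.1 a.2) (D1 ∩ D2) z n)) = fun a =>
        ((a.1 z : ℝ) - 1) * ind (NoP (S a.1 a.2) (D1 ∩ D2) z n) +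
        (a.2 z : ℝ) * ind (NoP (S a.1 a.2) (D1 ∩ D2) z n) := by funext a; ring
    rw [e, Ex_add]
    have i1 : |Ex (Om D1 xi0 ×ˢ Om D2 xi0) (fun a => ((a.1 z : ℝ) - 1) *
        ind (NoP (S a.1 a.2) (D1 ∩ D2) z n))| ≤ ε / 2 := by
      rw [Ex_prod, Ex_comm]
      refine le_trans (abs_Ex_le _) (Ex_le_const (Om_nonempty xi0_isHom) fun b _ => ?_)
      refine le_trans (corr_small_odd hC h1 (by omega) (fun v hv => (Finset.mem_inter.1 (hB v hv)).1)
        (fun h => ind (NoP (S h b) (D1 ∩ D2) z n)) (fun _ => ind_nonneg _) (fun _ => ind_le_one _)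
        fun h h' e => ?_) b1
      have := NoP_congr (D := D1 ∩ D2) (z := z) (n := n) (S := S h b) (S' := S h' b)
        fun v hv => hS _ _ _ _ _ (e v hv) rfl
      simp only [this]
    have i2 : |Ex (Om D1 xi0 ×ˢ Om D2 xi0) (fun a => (a.2 z : ℝ) *
        ind (NoP (S a.1 a.2) (D1 ∩ D2) z n))| ≤ ε / 2 := by
      rw [Ex_prod]
      refine le_trans (abs_Ex_le _) (Ex_le_const (Om_nonempty xi0_isHom) fun b _ => ?_)
      refine le_trans (corr_small hC h2 (by omega) (fun v hv => (Finset.mem_inter.1 (hB v hv)).2)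
        (fun h => ind (NoP (S b h) (D1 ∩ D2) z n)) (fun _ => ind_nonneg _) (fun _ => ind_le_one _)
        fun h h' e => ?_) b2
      have := NoP_congr (D := D1 ∩ D2) (z := z) (n := n) (S := S b h) (S' := S b h')
        fun v hv => hS _ _ _ _ _ rfl (e v hv)
      simp only [this]
    refine (abs_add_le _ _).trans ?_
    linarith
  -- conditionally on the explored region, the mean of the sum at `z` is controlled
  have cls : ∀ S : (P → ℤ) → (P → ℤ) → Set P,
      (∀ a b a' b' : P → ℤ, ∀ v, a v = a' v → b v = b' v → (v ∈ S a b ↔ v ∈ S a' b')) →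
      ∀ s : ℝ, (∀ a ∈ Om D1 xi0 ×ˢ Om D2 xi0, ∀ U : Finset P, z ∈ U →
        (∀ u v, u ∈ U → v ∉ U → adj2 u v → v ∉ S a.1 a.2) →
        1 ≤ s * Ex (Om U a.1 ×ˢ Om U a.2) (fun g => (g.1 z : ℝ) + g.2 z - 1)) →
      Ex (Om D1 xi0 ×ˢ Om D2 xi0) (fun a => ind (NoP (S a.1 a.2) (D1 ∩ D2) z n)) ≤
      s * Ex (Om D1 xi0 ×ˢ Om D2 xi0) (fun a => ((a.1 z : ℝ) + a.2 z - 1) *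
        ind (NoP (S a.1 a.2) (D1 ∩ D2) z n)) := by
    intro S hS s H
    rw [pair_explore (fun a => S a.1 a.2 \ Bx z n) {v | v ∉ D1 ∩ D2} (fun a b v e1 e2 => by
        simp only [Set.mem_sdiff, hS _ _ _ _ _ e1 e2])
      (fun a => ((a.1 z : ℝ) + a.2 z - 1) * ind (NoP (S a.1 a.2) (D1 ∩ D2) z n)), ← Ex_mul]
    refine Ex_mono fun a ha => ?_
    set U := Un adj2 (D1 ∩ D2) (S a.1 a.2 \ Bx z n) {v | v ∉ D1 ∩ D2} with hU
    have e : Ex (Om U a.1 ×ˢ Om U a.2) (fun g => ((g.1 z : ℝ) + g.2 z - 1) *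
        ind (NoP (S g.1 g.2) (D1 ∩ D2) z n)) = ind (NoP (S a.1 a.2) (D1 ∩ D2) z n) *
        Ex (Om U a.1 ×ˢ Om U a.2) (fun g => (g.1 z : ℝ) + g.2 z - 1) := by
      rw [← Ex_mul]
      refine Ex_congr fun g hg => ?_
      rw [Finset.mem_product] at hg
      have ez : Zb adj2 (S g.1 g.2 \ Bx z n) {v | v ∉ D1 ∩ D2} =
          Zb adj2 (S a.1 a.2 \ Bx z n) {v | v ∉ D1 ∩ D2} := Zb_congr fun v hv => by
        have hvU : v ∉ U := fun h => (mem_Un.1 h).2 hv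
        simp only [Set.mem_sdiff, hS _ _ _ _ v ((mem_Om.1 hg.1).2 v hvU) ((mem_Om.1 hg.2).2 v hvU)]
      have ez' : Zr adj2 (S g.1 g.2 \ Bx z n) {v | v ∉ D1 ∩ D2} =
          Zr adj2 (S a.1 a.2 \ Bx z n) {v | v ∉ D1 ∩ D2} := Zr_congr fun v hv => by
        have hvU : v ∉ U := fun h => (mem_Un.1 h).2 hv
        simp only [Set.mem_sdiff, hS _ _ _ _ v ((mem_Om.1 hg.1).2 v hvU) ((mem_Om.1 hg.2).2 v hvU)]
      have : NoP (S g.1 g.2) (D1 ∩ D2) z n ↔ NoP (S a.1 a.2) (D1 ∩ D2) z n := by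
        unfold NoP; rw [ez']
      rw [show ind (NoP (S g.1 g.2) (D1 ∩ D2) z n) = ind (NoP (S a.1 a.2) (D1 ∩ D2) z n) from
        congrArg ind (propext this)]; ring
    rw [e]
    by_cases hN : NoP (S a.1 a.2) (D1 ∩ D2) z n
    · rw [ind_true hN, one_mul]
      exact H a ha U (hN.center (by omega) hB) fun u v hu hv ad => hN.bdry hu hv ad
    · rw [ind_false hN]; simp
  have lin : ∀ (U : Finset P) (a : (P → ℤ) × (P → ℤ)), isHom a.1 → isHom a.2 →
      Ex (Om U a.1 ×ˢ Om U a.2) (fun g => (g.1 z : ℝ) + g.2 z - 1) =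
      Ex (Om U a.1) (fun h => (h z : ℝ)) + Ex (Om U a.2) (fun h => (h z : ℝ)) - 1 := by
    intro U a ha hb
    rw [Ex_prod]
    have e : ∀ g1 : P → ℤ, Ex (Om U a.2) (fun g2 => (g1 z : ℝ) + g2 z - 1) =
        (g1 z : ℝ) + (Ex (Om U a.2) (fun h => (h z : ℝ)) - 1) := by
      intro g1
      have : (fun g2 : P → ℤ => (g1 z : ℝ) + g2 z - 1) = fun g2 => (g2 z : ℝ) + ((g1 z : ℝ) - 1) := by
        funext g2; ring
      rw [this, Ex_add, Ex_const (Om_nonempty hb)]; ring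
    simp only [e]
    rw [Ex_add, Ex_const (Om_nonempty ha)]; ring
  constructor
  · refine (cls SA (fun a b a' b' v e1 e2 => by simp only [SA, Set.mem_ofPred_eq, e1, e2]) (-1)
      fun a ha U hz hb => ?_).trans ?_
    · rw [Finset.mem_product] at ha
      have p1 := (mem_Om.1 ha.1).1
      have p2 := (mem_Om.1 ha.2).1
      rw [lin U a p1 p2]
      have := Ex_le_bdry (U := U) p1 p2.neg (fun u v hu hv ad => by
        have := hb u v hu hv ad
        simp only [SA, Set.mem_ofPred_eq] at this
        simp only [Pi.neg_apply]; omega) hz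
      rw [Ex_negate] at this
      have e2 : (fun h : P → ℤ => (((-h) z : ℤ) : ℝ)) = fun h => (-1 : ℝ) * (h z : ℝ) := by
        funext h; simp
      rw [e2, Ex_mul] at this
      linarith
    · have := hc SA (fun a b a' b' v e1 e2 => by simp only [SA, Set.mem_ofPred_eq, e1, e2])
      linarith [(abs_le.1 this).1]
  · refine (cls SB (fun a b a' b' v e1 e2 => by simp only [SB, Set.mem_ofPred_eq, e1, e2]) 1
      fun a ha U hz hb => ?_).trans ?_
    · rw [Finset.mem_product] at ha
      have p1 := (mem_Om.1 ha.1).1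
      have p2 := (mem_Om.1 ha.2).1
      rw [lin U a p1 p2]
      set ζ : P → ℤ := fun v => 2 + (-1) * a.2 v with hζ
      have hζh : isHom ζ := by
        refine ⟨fun v => ?_, fun u v ad => ?_⟩
        · have := p2.1 v; simp only [hζ]; omega
        · have := p2.2 v u (adj2_symm ad); simp only [hζ]; omega
      have := Ex_le_bdry (U := U) hζh p1 (fun u v hu hv ad => by
        have := hb u v hu hv ad
        simp only [SB, Set.mem_ofPred_eq] at this
        have q1 := p1.1 v
        have q2 := p2.1 v
        simp only [hζ]; omega) hz
      rw [Ex_symm (D' := U) (D := U) (ξ' := ζ) (ξ := a.2) (Equiv.refl P) 2 (-1) (by norm_num)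
        (fun u v a => a) (fun u v a => a) (fun v => by simp only [Equiv.refl_apply]; omega)
        (fun v => Iff.rfl) (fun v _ => rfl)] at this
      have e2 : (fun h : P → ℤ => ((2 + (-1) * h ((Equiv.refl P) z) : ℤ) : ℝ)) =
          fun h => (-1 : ℝ) * (h z : ℝ) + 2 := by
        funext h; simp; ring
      rw [e2, Ex_add, Ex_mul, Ex_const (Om_nonempty p2)] at this
      linarith
    · have := hc SB (fun a b a' b' v e1 e2 => by simp only [SB, Set.mem_ofPred_eq, e1, e2])
      linarith [(abs_le.1 this).2]

/-! ### Dependence on the domain -/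

/-- No cluster of nonzero heights joins the complement of `Bx z K2` to `Bx z (K + 1)`. -/
def Clr (z : P) (K K2 : ℤ) (h : P → ℤ) : Prop :=
  ∀ v ∈ Bx z (K + 1), v ∉ Zr adj2 {v | h v ≠ 0} {v | v ∉ Bx z K2}

lemma Out_of_not_Clr {z : P} {K K2 : ℤ} {h : P → ℤ} (hK : K + 1 < K2) (hc : ¬ Clr z K K2 h) :
    Out {v | h v ≠ 0} z (K + 1) K2 := by
  unfold Clr at hc
  push Not at hc
  obtain ⟨v, hv, o, ho, p⟩ := hc
  replace p := p.symm adj2_symm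
  have hv' : v ∈ Bx z (K2 - 1) := by rw [mem_Bx] at *; omega
  have key : Out {v | h v ≠ 0} z (K + 1) K2 ∨
      (o ∈ Bx z (K2 - 1) ∧ Con adj2 ({v | h v ≠ 0} ∪ Bx z (K + 1)) v o) := by
    clear ho
    induction p with
    | refl => exact Or.inr ⟨hv', Con.refl _⟩
    | @tail a b _ hab ih =>
      rcases ih with ih | ⟨h1, h3⟩
      · exact Or.inl ih
      have hbn : b ∈ Bx z K2 := by have := hab.1.bx h1; rwa [sub_add_cancel] at this
      have hb0 : b ∈ {v | h v ≠ 0} ∪ Bx z (K + 1) := by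
        rcases hab.2.2 with hb | hb
        · exact Or.inl hb
        · exact absurd hbn hb
      have h3' := h3.trans (Con.single hab.1 (Con.mem h3 (Or.inr hv)) hb0)
      by_cases hb : b ∈ Bx z (K2 - 1)
      · exact Or.inr ⟨hb, h3'⟩
      · exact Or.inl ⟨v, hv, b, hb, h3'⟩
  exact key.resolve_right fun hc => ho (by have := hc.1; rw [mem_Bx] at *; omega)

open Classical in
/-- The conditional expectation of a local observable given the nonzero clusters of the far region,
on the event that they stay far. It is a function of the zero set near `z`. -/
def Psi (z : P) (K K2 : ℤ) (B : Finset P) (F : (P → ℤ) → ℝ) (h : P → ℤ) : ℝ :=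
  ind (Clr z K K2 h) * Ex (Om (Un adj2 B {v | h v ≠ 0} {v | v ∉ Bx z K2}) xi0) F

/-- `Psi` depends on the height function only through its zeros in `Bx z K2`. -/
lemma Psi_congr {z : P} {K K2 : ℤ} {B : Finset P} {F : (P → ℤ) → ℝ} {h h' : P → ℤ}
    (e : ∀ v ∈ Bx z K2, (h v = 0 ↔ h' v = 0)) : Psi z K K2 B F h = Psi z K K2 B F h' := by
  have eu : {v | h v ≠ 0} ∪ {v | v ∉ Bx z K2} = {v | h' v ≠ 0} ∪ {v | v ∉ Bx z K2} := by
    ext v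
    by_cases hv : v ∈ Bx z K2
    · simp [hv, e v hv]
    · simp [hv]
  have ez : Zr adj2 {v | h v ≠ 0} {v | v ∉ Bx z K2} = Zr adj2 {v | h' v ≠ 0} {v | v ∉ Bx z K2} := by
    unfold Zr; rw [eu]
  have eb : Zb adj2 {v | h v ≠ 0} {v | v ∉ Bx z K2} = Zb adj2 {v | h' v ≠ 0} {v | v ∉ Bx z K2} := by
    unfold Zb; rw [ez]
  unfold Psi Un Clr
  rw [ez, eb]

/-- The number of nonzero heights in a finite set. -/
def NZ (B : Finset P) (h : P → ℤ) : ℝ := ∑ v ∈ B, ind (h v ≠ 0)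

lemma ind_ne_mono {h h' : P → ℤ} (e : absle h h') (v : P) : ind (h v ≠ 0) ≤ ind (h' v ≠ 0) :=
  ind_mono fun hv hv' => hv (by have := e v; rw [hv', abs_zero] at this; simpa using this)

lemma NZ_diff {B : Finset P} {h h' : P → ℤ} (e : absle h h') {v : P} (hv : v ∈ B)
    (hd : ¬ (h v = 0 ↔ h' v = 0)) : 1 ≤ NZ B h' - NZ B h := by
  unfold NZ
  rw [← Finset.sum_sub_distrib]
  have h1 : ind (h' v ≠ 0) - ind (h v ≠ 0) = 1 := by
    by_cases a : h v = 0
    · have b : h' v ≠ 0 := fun b => hd ⟨fun _ => b, fun _ => a⟩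
      rw [ind_true b, ind_false (by simpa using a)]; norm_num
    · have b : h' v ≠ 0 := fun b => a (by have := e v; rw [b, abs_zero] at this; simpa using this)
      exact absurd ⟨fun x => absurd x a, fun x => absurd x b⟩ hd
  rw [← h1]
  exact Finset.single_le_sum (f := fun v => ind (h' v ≠ 0) - ind (h v ≠ 0))
    (fun v _ => sub_nonneg.2 (ind_ne_mono e v)) hv

lemma NZ_mono {B : Finset P} {h h' : P → ℤ} (e : absle h h') : NZ B h ≤ NZ B h' :=
  Finset.sum_le_sum fun v _ => ind_ne_mono e v

lemma Psi_mem {z : P} {K K2 : ℤ} {B : Finset P} {F : (P → ℤ) → ℝ} (F0 : ∀ h, 0 ≤ F h)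
    (F1 : ∀ h, F h ≤ 1) (h : P → ℤ) : 0 ≤ Psi z K K2 B F h ∧ Psi z K K2 B F h ≤ 1 :=
  ⟨mul_nonneg (ind_nonneg _) (Ex_nonneg fun _ _ => F0 _),
    mul_le_one₀ (ind_le_one _) (Ex_nonneg fun _ _ => F0 _)
      (Ex_le_const (Om_nonempty xi0_isHom) fun _ _ => F1 _)⟩

/-- Passing from `h` to a function of larger absolute value changes `Psi` only if the number `NZ`
of nonzero heights grows by at least one, and `Psi` takes values in `[0, 1]`. -/
lemma Psi_diff {z : P} {K K2 : ℤ} {B : Finset P} (hB : ∀ v, v ∈ B ↔ v ∈ Bx z K2)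
    {F : (P → ℤ) → ℝ} (F0 : ∀ h, 0 ≤ F h)
    (F1 : ∀ h, F h ≤ 1) {h h' : P → ℤ} (e : absle h h') :
    |Psi z K K2 B F h' - Psi z K K2 B F h| ≤ NZ B h' - NZ B h := by
  by_cases H : ∀ v ∈ Bx z K2, (h v = 0 ↔ h' v = 0)
  · rw [Psi_congr H, sub_self, abs_zero]; linarith [NZ_mono (B := B) e]
  · push Not at H
    obtain ⟨v, hv, hd⟩ := H
    refine le_trans ?_ (NZ_diff e ((hB v).2 hv) (by tauto))
    have a := Psi_mem (z := z) (K := K) (K2 := K2) (B := B) F0 F1 h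
    have b := Psi_mem (z := z) (K := K) (K2 := K2) (B := B) F0 F1 h'
    rw [abs_le]; constructor <;> linarith [a.1, a.2, b.1, b.2]

/-- By `Psi_diff` both `NZ + Psi` and `NZ - Psi` are increasing in the absolute value, so
stochastic domination bounds the effect of enlarging the domain on `Psi` by that on `NZ`. -/
lemma Psi_compare {z : P} {K K2 : ℤ} {B : Finset P} (hB : ∀ v, v ∈ B ↔ v ∈ Bx z K2)
    {F : (P → ℤ) → ℝ} (F0 : ∀ h, 0 ≤ F h) (F1 : ∀ h, F h ≤ 1) {D D' : Finset P}
    (hD : EvenDom D) (hDD : D ⊆ D') :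
    |Ex (Om D' xi0) (Psi z K K2 B F) - Ex (Om D xi0) (Psi z K K2 B F)| ≤
      Ex (Om D' xi0) (NZ B) - Ex (Om D xi0) (NZ B) := by
  have sd := abs_SD' hD hDD xi0_isHom xi0_nonneg
  have h1 := sd (fun h => NZ B h + Psi z K K2 B F h) fun a b hab => by
    have := (abs_le.1 (Psi_diff (K := K) hB F0 F1 hab)).1
    linarith
  have h2 := sd (fun h => NZ B h - Psi z K K2 B F h) fun a b hab => by
    have := (abs_le.1 (Psi_diff (K := K) hB F0 F1 hab)).2
    linarith
  rw [Ex_add, Ex_add] at h1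
  rw [Ex_sub, Ex_sub] at h2
  have e1 : Ex (Om D xi0) (fun h => NZ B h) = Ex (Om D xi0) (NZ B) := rfl
  rw [abs_le]; constructor <;> linarith

/-- Replacing a local observable by its conditional expectation `Psi`. -/
lemma Psi_approx {z : P} {K K2 : ℤ} {B : Finset P} (hB : ∀ v, v ∈ B ↔ v ∈ Bx z K2)
    {F : (P → ℤ) → ℝ} (F0 : ∀ h, 0 ≤ F h) (F1 : ∀ h, F h ≤ 1)
    (hF : ∀ h h' : P → ℤ, (∀ v ∈ Bx z K, h v = h' v) → F h = F h') (hK : K + 1 < K2) {D : Finset P}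
    (hBD : ∀ v ∈ Bx z K2, v ∈ D) :
    |Ex (Om D xi0) F - Ex (Om D xi0) (Psi z K K2 B F)| ≤
      Ex (Om D xi0) (fun h => ind (Out {v | h v ≠ 0} z (K + 1) K2)) := by
  set O : Set P := {v | v ∉ Bx z K2} with hO
  have loc : ∀ h h' : P → ℤ, ∀ v, h v = h' v → (v ∈ {v | h v ≠ 0} ↔ v ∈ {v | h' v ≠ 0}) :=
    fun h h' v e => by simp only [Set.mem_ofPred_eq, e]
  have e : Ex (Om D xi0) (Psi z K K2 B F) =
      Ex (Om D xi0) (fun h => ind (Clr z K K2 h) * F h) := by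
    symm
    rw [Ex_explore adj2 (fun h => {v | h v ≠ 0}) O loc]
    refine Ex_congr fun h hh => ?_
    have hhom := (mem_Om.1 hh).1
    set U := Un adj2 D {v | h v ≠ 0} O with hU
    have eU : Un adj2 B {v | h v ≠ 0} O = U := by
      ext v
      rw [hU, mem_Un, mem_Un]
      refine ⟨fun a => ⟨hBD v ((hB v).1 a.1), a.2⟩, fun a => ⟨(hB v).2 ?_, a.2⟩⟩
      by_contra hc
      exact a.2 (Or.inl (sub_Zr hc))
    have e1 : Ex (Om U h) (fun g => ind (Clr z K K2 g) * F g) =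
        ind (Clr z K K2 h) * Ex (Om U h) F := by
      rw [← Ex_mul]
      refine Ex_congr fun g hg => ?_
      have : Zr adj2 {v | g v ≠ 0} O = Zr adj2 {v | h v ≠ 0} O := Zr_congr fun v hv => by
        have hvU : v ∉ U := fun hc => (mem_Un.1 hc).2 hv
        simp only [Set.mem_ofPred_eq, (mem_Om.1 hg).2 v hvU]
      rw [show ind (Clr z K K2 g) = ind (Clr z K K2 h) from by unfold Clr; rw [this]]
    rw [e1]
    unfold Psi
    rw [eU]
    by_cases hc : Clr z K K2 h
    · congr 1
      refine Ex_bdry xi0_isHom hhom (fun u v hu hv a => ?_) fun g g' hgg => hF _ _ fun v hv => ?_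
      · have h0 := (Un_bdry (fun _ _ a => a) (fun v hv hvB => hv (hBD v hvB)) hu hv a).2.1
        have h0 : h v = 0 := by simpa using h0
        have := hhom.1 v
        rw [h0] at this ⊢
        unfold xi0; omega
      · refine hgg v (mem_Un.2 ⟨hBD v (by rw [mem_Bx] at *; omega), ?_⟩)
        rintro (hz | ⟨w, hw, hwv⟩)
        · exact hc v (by rw [mem_Bx] at *; omega) hz
        · exact hc w ((adj2_symm hwv).bx hv) hw
    · rw [ind_false hc]; simp
  rw [e, ← Ex_sub]
  refine (abs_Ex_le _).trans (Ex_mono fun h _ => ?_)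
  by_cases hc : Clr z K K2 h
  · rw [ind_true hc]; simp [ind_nonneg]
  · rw [ind_false hc, ind_true (Out_of_not_Clr hK hc)]
    rw [zero_mul, sub_zero, abs_of_nonneg (F0 h)]; exact F1 h

lemma NZ_le (B : Finset P) (h : P → ℤ) : NZ B h ≤ B.card := by
  unfold NZ
  refine (Finset.sum_le_card_nsmul B _ 1 fun v _ => ind_le_one _).trans (by simp)

/-- The mean number of nonzero heights near the origin converges along diamonds, being bounded and
increasing. -/
lemma NZ_cauchy (B : Finset P) {δ : ℝ} (hδ : 0 < δ) : ∃ R : ℤ, R % 2 = 0 ∧ ∀ R', R' % 2 = 0 →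
    Ex (Om (Dm 0 R') xi0) (NZ B) ≤ Ex (Om (Dm 0 R) xi0) (NZ B) + δ := by
  set A : Set ℝ := {x | ∃ R : ℤ, R % 2 = 0 ∧ x = Ex (Om (Dm 0 R) xi0) (NZ B)} with hA
  have bdd : BddAbove A := ⟨B.card, by
    rintro x ⟨R, -, rfl⟩
    exact Ex_le_const (Om_nonempty xi0_isHom) fun _ _ => NZ_le _ _⟩
  have ne : A.Nonempty := ⟨_, 0, by norm_num, rfl⟩
  obtain ⟨x, ⟨R, hR, rfl⟩, hx⟩ := exists_lt_of_lt_csSup ne (sub_lt_self _ hδ)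
  exact ⟨R, hR, fun R' hR' => by linarith [le_csSup bdd ⟨R', hR', rfl⟩]⟩

lemma NZ_translate {z : P} (hz : (z.1 + z.2) % 2 = 0) {K R : ℤ} {B B0 : Finset P}
    (hB : ∀ v, v ∈ B ↔ v ∈ Bx z K) (hB0 : ∀ v, v ∈ B0 ↔ v ∈ Bx 0 K) :
    Ex (Om (Dm z R) xi0) (NZ B) = Ex (Om (Dm 0 R) xi0) (NZ B0) := by
  rw [Ex_Dm_translate hz]
  refine Ex_congr fun h _ => ?_
  unfold NZ
  refine Finset.sum_bij' (fun v _ => v - z) (fun v _ => v + z) ?_ ?_ ?_ ?_ ?_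
  · intro v hv; rw [hB] at hv; rw [hB0]; rw [mem_Bx] at *; simp at *; omega
  · intro v hv; rw [hB0] at hv; rw [hB]; rw [mem_Bx] at *; simp at *; omega
  · intro v _; simp
  · intro v _; simp
  · intro v _; rfl

/-- Under bounded variance, the law of the heights near `z` is nearly independent of the even
domain, once the latter contains a large diamond around `z`. -/
lemma close_even {C : ℝ} (hC : Loc C) {δ : ℝ} (hδ : 0 < δ) {K : ℤ} (hK : 0 ≤ K) :
    ∃ R : ℤ, ∀ z : P, (z.1 + z.2) % 2 = 0 → ∀ F : (P → ℤ) → ℝ, (∀ h, 0 ≤ F h) → (∀ h, F h ≤ 1) →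
      (∀ h h' : P → ℤ, (∀ v ∈ Bx z K, h v = h' v) → F h = F h') →
      ∀ D D' : Finset P, EvenDom D → EvenDom D' → Dm z R ⊆ D → Dm z R ⊆ D' →
      |Ex (Om D xi0) F - Ex (Om D' xi0) F| ≤ δ := by
  obtain ⟨K2, hK2, hf⟩ := far_small hC (θ := δ / 6) (by positivity) (n := K + 1) (by omega)
  obtain ⟨B0, hB0, -⟩ := exists_box 0 (n := K2) (by omega)
  obtain ⟨R0, hR0, hR⟩ := NZ_cauchy B0 (δ := δ / 6) (by positivity)
  refine ⟨max R0 (2 * (2 * K2 + 2)), fun z hz F F0 F1 hF => ?_⟩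
  set R := max R0 (2 * (2 * K2 + 2)) with hRd
  have hRe : R % 2 = 0 := by rw [hRd]; rcases max_choice R0 (2 * (2 * K2 + 2)) with h | h <;> omega
  obtain ⟨B, hB, -⟩ := exists_box z (n := K2) (by omega)
  have hRmono : Ex (Om (Dm 0 R0) xi0) (NZ B0) ≤ Ex (Om (Dm 0 R) xi0) (NZ B0) :=
    abs_SD' (Dm_even (by simpa using hR0)) (Dm_mono (by rw [dist1_self]; omega)) xi0_isHom xi0_nonneg
      _ fun a b hab => NZ_mono hab
  -- every admissible domain is compared with the diamond of radius `R`
  have main : ∀ D : Finset P, EvenDom D → Dm z R ⊆ D →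
      |Ex (Om D xi0) F - Ex (Om (Dm z R) xi0) F| ≤ δ / 2 := by
    intro D hD hsub
    have box : ∀ v ∈ Bx z K2, v ∈ Dm z R := fun v hv => mem_Dm.2 (by have := Bx_Dm hv; omega)
    have a1 := (Psi_approx hB F0 F1 hF hK2 fun v hv => hsub (box v hv)).trans (hf D hD z)
    have hE : EvenDom (Dm z R) := Dm_even (by omega)
    have a2 := (Psi_approx hB F0 F1 hF hK2 box).trans (hf (Dm z R) hE z)
    have a3 := Psi_compare (K := K) hB F0 F1 hE hsub
    obtain ⟨L, hL0, hL2, hL⟩ := exists_Dm_supset D z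
    have a4 : Ex (Om D xi0) (NZ B) ≤ Ex (Om (Dm z L) xi0) (NZ B) :=
      abs_SD' hD hL xi0_isHom xi0_nonneg _ fun a b hab => NZ_mono hab
    rw [NZ_translate hz hB hB0] at a4 a3
    have a5 := hR L hL2
    rw [abs_le] at *
    constructor <;> linarith [a1.1, a1.2, a2.1, a2.2, a3.1, a3.2]
  intro D D' hD hD' h1 h2
  have a := main D hD h1
  have b := main D' hD' h2
  rw [abs_le] at *
  constructor <;> linarith [a.1, a.2, b.1, b.2]

/-- The counterpart of `close_even` for odd domains. -/
lemma close_odd {C : ℝ} (hC : Loc C) {δ : ℝ} (hδ : 0 < δ) {K : ℤ} (hK : 0 ≤ K) :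
    ∃ R : ℤ, ∀ z : P, (z.1 + z.2) % 2 = 0 → ∀ F : (P → ℤ) → ℝ, (∀ h, 0 ≤ F h) → (∀ h, F h ≤ 1) →
      (∀ h h' : P → ℤ, (∀ v ∈ Bx z K, h v = h' v) → F h = F h') →
      ∀ D D' : Finset P, OddDom D → OddDom D' → Dm z R ⊆ D → Dm z R ⊆ D' →
      |Ex (Om D xi0) F - Ex (Om D' xi0) F| ≤ δ := by
  obtain ⟨R, H⟩ := close_even hC hδ (K := K + 1) (by omega)
  refine ⟨R + 1, fun z hz F F0 F1 hF D D' hD hD' h1 h2 => ?_⟩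
  have sub : ∀ D : Finset P, Dm z (R + 1) ⊆ D → Dm (rho z + (1, 0)) R ⊆ rhoD D := by
    intro D hD v hv
    rw [mem_rhoD]
    refine hD (mem_Dm.2 ?_)
    rw [mem_Dm] at hv
    unfold dist1 at *
    simp only [rho, Equiv.coe_fn_mk, Prod.fst_add, Prod.snd_add] at *
    rcases abs_cases (v.1 - (1 - z.1 + 1)) with a | a <;>
    rcases abs_cases (v.2 - (-z.2 + 0)) with b | b <;>
    rcases abs_cases (1 - v.1 - z.1) with c | c <;>
    rcases abs_cases (-v.2 - z.2) with d | d <;> omega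
  rw [Ex_tau (D := rhoD D) (D' := D) (fun v => by rw [mem_rhoD, rho_rho]),
    Ex_tau (D := rhoD D') (D' := D') (fun v => by rw [mem_rhoD, rho_rho])]
  refine H (rho z + (1, 0)) (by simp only [rho, Equiv.coe_fn_mk, Prod.fst_add, Prod.snd_add]; omega)
    _ (fun _ => F0 _) (fun _ => F1 _) (fun h h' e => hF _ _ fun v hv => ?_) _ _ (rhoD_even hD)
    (rhoD_even hD') (sub D h1) (sub D' h2)
  rw [e]
  rw [mem_Bx] at *
  simp only [rho, Equiv.coe_fn_mk, Prod.fst_add, Prod.snd_add]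
  omega

/-! ### Six arms in a pair -/

/-- A path of `S` reaching the core from outside `D` contains an arm to one of the eight half-sides. -/
lemma Arm_of_not_NoP {r : P → P → Prop} (hr : ∀ a b, r a b → star a b) (ha : ∀ a b, adj2 a b → r a b)
    {S : Set P} {D : Finset P} {z : P} {n K : ℤ} (hnK : n + 1 < K) (hD : ∀ v ∈ Bx z K, v ∈ D)
    (h : ¬ NoP S D z n) : ∃ i, Arm r S z (n + 1) K (Hi z K i) := by
  unfold NoP at h
  push Not at h
  obtain ⟨v, hv, o, ho, p⟩ := h
  obtain ⟨i, hi⟩ := exit_arm hr ((p.symm adj2_symm).mono ha subset_rfl) hv hnK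
    (fun hc => ho (hD o (by rw [mem_Bx] at *; omega)))
  refine ⟨i, hi.mono ?_⟩
  rintro w ⟨hw, hwK⟩
  rcases hw with hw | hw
  · exact hw.1
  · exact absurd (hD w hwK) hw

/-- By the dihedral symmetry and positive association of a symmetric pair, the `S`-paths reaching
the center do so from every half-side. -/
lemma arms_small {r : P → P → Prop} (hr : ∀ a b, r a b → star a b) (ha : ∀ a b, adj2 a b → r a b)
    {S : (P → ℤ) → (P → ℤ) → Set P}
    (hsy : ∀ (z : P) (κ : Bool) (σ τ : ℤ), σ * σ = 1 → τ * τ = 1 →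
      ∀ u v, r (sy z κ σ τ u) (sy z κ σ τ v) ↔ r u v)
    (hS : ∀ (h1 h2 : P → ℤ) (φ : P → P), S (fun v => h1 (φ v)) (fun v => h2 (φ v)) = φ ⁻¹' S h1 h2)
    (mS : (∀ a b a' b' : P → ℤ, a ≤ a' → b ≤ b' → S a b ⊆ S a' b') ∨
      (∀ a b a' b' : P → ℤ, a ≤ a' → b ≤ b' → S a' b' ⊆ S a b))
    {z : P} {n K R1 R2 : ℤ} (hnK : n + 1 < K) (hD : ∀ v ∈ Bx z K, v ∈ Dm z R1 ∩ Dm z R2) {ε : ℝ}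
    (hε : 0 ≤ ε) (hN : Ex (Om (Dm z R1) xi0 ×ˢ Om (Dm z R2) xi0) (fun a =>
      ind (NoP (S a.1 a.2) (Dm z R1 ∩ Dm z R2) z n)) ≤ ε ^ 8) (i : Bool × Bool × Bool) :
    Ex (Om (Dm z R1) xi0 ×ˢ Om (Dm z R2) xi0) (fun a =>
      ind (¬ Arm r (S a.1 a.2) z (n + 1) K (Hi z K i))) ≤ ε := by
  have hne : (Om (Dm z R1) xi0 ×ˢ Om (Dm z R2) xi0).Nonempty :=
    Finset.Nonempty.product (Om_nonempty xi0_isHom) (Om_nonempty xi0_isHom)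
  refine root8 (s := Om (Dm z R1) xi0 ×ˢ Om (Dm z R2) xi0) hne
    (PA.prod (Om_PA xi0_isHom) (Om_PA xi0_isHom) (fun a => le_refl a) (fun a => le_refl a))
    (fun i a => ¬ Arm r (S a.1 a.2) z (n + 1) K (Hi z K i)) ?_
    (q := Ex (Om (Dm z R1) xi0 ×ˢ Om (Dm z R2) xi0) (fun a =>
      ind (¬ Arm r (S a.1 a.2) z (n + 1) K (Hi z K i)))) ?_ hε ?_
  · rcases mS with mS | mS
    · exact Or.inr fun i a b hab h h' => h (h'.mono (Set.inter_subset_left.trans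
        (mS _ _ _ _ hab.1 hab.2)))
    · exact Or.inl fun i a b hab h h' => h (h'.mono (Set.inter_subset_left.trans
        (mS _ _ _ _ hab.1 hab.2)))
  · have : ∀ i, Ex (Om (Dm z R1) xi0 ×ˢ Om (Dm z R2) xi0) (fun a =>
        ind (¬ Arm r (S a.1 a.2) z (n + 1) K (Hi z K i))) =
        Ex (Om (Dm z R1) xi0 ×ˢ Om (Dm z R2) xi0) (fun a =>
        ind (¬ Arm r (S a.1 a.2) z (n + 1) K (Hf z K true 1 1))) := by
      rintro ⟨κ, σ, τ⟩
      symm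
      rw [Ex_prod, Ex_prod, Ex_sy (κ := κ) (sg_sq σ) (sg_sq τ)]
      refine Ex_congr fun h1 _ => ?_
      rw [Ex_sy (κ := κ) (sg_sq σ) (sg_sq τ)]
      refine Ex_congr fun h2 _ => ?_
      simp only
      rw [hS]
      congr 2
      exact propext (sy_Arm (sg_sq σ) (sg_sq τ) (hsy _ _ _ _ (sg_sq σ) (sg_sq τ)) (S h1 h2) _ _)
    intro j
    rw [this, this]
  · refine le_trans (Ex_mono fun a _ => ind_mono fun h => ?_) hN
    by_contra hc
    obtain ⟨i, hi⟩ := Arm_of_not_NoP hr ha hnK hD hc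
    exact h i hi

lemma Six.congr {A B A' B' : Set P} {z : P} {n K : ℤ} (hA : A ∩ Bx z K ⊆ A') (hB : B ∩ Bx z K ⊆ B')
    (h : Six A B z n K) : Six A' B' z n K :=
  ⟨⟨h.1.1.mono hA, h.1.2.1.mono hA, h.1.2.2.mono hA⟩,
    ⟨h.2.1.mono hB, h.2.2.1.mono hB, h.2.2.2.mono hB⟩⟩

lemma six_of {A B : Set P} {z : P} {n K : ℤ} (hA : ∀ i, Arm adj2 A z n K (Hi z K i))
    (hB : ∀ i, Arm star B z n K (Hi z K i)) : Six A B z n K := by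
  have a := fun {κ σ τ} => Hi_cases (κ := κ) (σ := σ) (τ := τ) (p := Arm adj2 A z n K) hA
  have b := fun {κ σ τ} => Hi_cases (κ := κ) (σ := σ) (τ := τ) (p := Arm star B z n K) hB
  refine ⟨⟨a ?_ ?_, a ?_ ?_, a ?_ ?_⟩, ⟨b ?_ ?_, b ?_ ?_, b ?_ ?_⟩⟩ <;> norm_num

/-- Six alternating arms around `z` have probability at least one half in a symmetric pair. -/
lemma six_sym {C : ℝ} (hC : Loc C) : ∃ n : ℤ, 2 ≤ n ∧ ∀ K, n < K → ∀ z : P, (z.1 + z.2) % 2 = 0 →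
    ∀ R, R % 2 = 0 → 2 * K < R → (1:ℝ) / 2 ≤ Ex (Om (Dm z (R + 1)) xi0) fun h1 =>
      Ex (Om (Dm z R) xi0) fun h2 => ind (Six (SA h1 h2) (SB h1 h2) z n K) := by
  obtain ⟨n, hn, H⟩ := pair_small hC (ε := (1 / 32) ^ 8) (by positivity)
  refine ⟨n + 1, by omega, fun K hK z hz R hR hKR => ?_⟩
  have hbox : ∀ v ∈ Bx z K, v ∈ Dm z (R + 1) ∩ Dm z R := fun v hv => by
    have := Bx_Dm hv
    exact Finset.mem_inter.2 ⟨mem_Dm.2 (by omega), mem_Dm.2 (by omega)⟩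
  obtain ⟨hA, hB⟩ := H (Dm z (R + 1)) (Dm z R) (Dm_odd (by omega)) (Dm_even (by omega)) z
    fun v hv => hbox v (by rw [mem_Bx] at *; omega)
  have a1 := arms_small (S := SA) (r := adj2) (fun _ _ => adj2.star) (fun _ _ a => a)
    (fun z κ σ τ hσ hτ => sy_adj hσ hτ) (fun _ _ _ => rfl) (Or.inl fun a b a' b' h1 h2 v hv => by
      have := h1 v; have := h2 v; simp only [SA, Set.mem_ofPred_eq] at *; omega) hK hbox
    (by norm_num) hA
  have a2 := arms_small (S := SB) (r := star) (fun _ _ a => a) (fun _ _ => adj2.star)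
    (fun z κ σ τ hσ hτ => sy_star hσ hτ) (fun _ _ _ => rfl) (Or.inr fun a b a' b' h1 h2 v hv => by
      have := h1 v; have := h2 v; simp only [SB, Set.mem_ofPred_eq] at *; omega) hK hbox
    (by norm_num) hB
  rw [← Ex_prod (F := fun a => ind (Six (SA a.1 a.2) (SB a.1 a.2) z (n + 1) K))]
  set s := Om (Dm z (R + 1)) xi0 ×ˢ Om (Dm z R) xi0 with hs
  have hne : s.Nonempty :=
    Finset.Nonempty.product (Om_nonempty xi0_isHom) (Om_nonempty xi0_isHom)
  have le : ∀ a ∈ s, 1 - (∑ i : Bool × Bool × Bool,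
      ind (¬ Arm adj2 (SA a.1 a.2) z (n + 1) K (Hi z K i)) + ∑ i : Bool × Bool × Bool,
      ind (¬ Arm star (SB a.1 a.2) z (n + 1) K (Hi z K i))) ≤
      ind (Six (SA a.1 a.2) (SB a.1 a.2) z (n + 1) K) := by
    intro a _
    have nn : ∀ p : Bool × Bool × Bool → Prop, 0 ≤ ∑ i, ind (p i) := fun p =>
      Finset.sum_nonneg fun i _ => ind_nonneg _
    have one : ∀ p : Bool × Bool × Bool → Prop, ¬ (∀ i, p i) → 1 ≤ ∑ i, ind (¬ p i) := by
      intro p hp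
      push Not at hp
      refine le_trans ?_ (ind_exists_le Finset.univ fun i => ¬ p i)
      rw [ind_true]
      obtain ⟨i, hi⟩ := hp
      exact ⟨i, Finset.mem_univ _, hi⟩
    by_cases h1 : ∀ i, Arm adj2 (SA a.1 a.2) z (n + 1) K (Hi z K i)
    · by_cases h2 : ∀ i, Arm star (SB a.1 a.2) z (n + 1) K (Hi z K i)
      · rw [ind_true (six_of h1 h2)]
        linarith [nn fun i => ¬ Arm adj2 (SA a.1 a.2) z (n + 1) K (Hi z K i),
          nn fun i => ¬ Arm star (SB a.1 a.2) z (n + 1) K (Hi z K i)]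
      · refine le_trans ?_ (ind_nonneg _)
        linarith [nn fun i => ¬ Arm adj2 (SA a.1 a.2) z (n + 1) K (Hi z K i), one _ h2]
    · refine le_trans ?_ (ind_nonneg _)
      linarith [nn fun i => ¬ Arm star (SB a.1 a.2) z (n + 1) K (Hi z K i), one _ h1]
  refine le_trans ?_ (Ex_mono le)
  rw [Ex_sub, Ex_const hne, Ex_add, Ex_sum, Ex_sum]
  have b1 := Finset.sum_le_card_nsmul (Finset.univ : Finset (Bool × Bool × Bool)) _ _ fun i _ => a1 i
  have b2 := Finset.sum_le_card_nsmul (Finset.univ : Finset (Bool × Bool × Bool)) _ _ fun i _ => a2 i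
  have hc : (Finset.univ : Finset (Bool × Bool × Bool)).card = 8 := by decide
  rw [hc] at b1 b2
  norm_num at b1 b2 ⊢
  linarith

/-- The variance at the center of diamonds is unbounded. -/
theorem not_Loc (C : ℝ) : ¬ Loc C := by
  intro hC
  have hC0 := hC.nonneg
  obtain ⟨n, hn, H⟩ := six_sym hC
  set C' := 2 * (2 * C + 2) + 2 with hC'
  obtain ⟨N, hN, NS⟩ := no_six (C' := C') (p0 := 1 / 4) (n := n) (by positivity) (by norm_num)
    (by omega)
  set K := 2 * N with hK
  obtain ⟨Ra, ha⟩ := close_odd hC (δ := 1 / 8) (by norm_num) (K := K) (by omega)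
  obtain ⟨Rb, hb⟩ := close_even hC (δ := 1 / 8) (by norm_num) (K := K) (by omega)
  obtain ⟨R, hR, hR1, hR2, hR3⟩ : ∃ R : ℤ, R % 2 = 0 ∧ Ra ≤ R ∧ Rb ≤ R ∧ 2 * K < R :=
    ⟨2 * (|Ra| + |Rb| + K + 1), by omega, by
      have := le_abs_self Ra; have := abs_nonneg Ra; have := abs_nonneg Rb; omega, by
      have := le_abs_self Rb; have := abs_nonneg Rb; have := abs_nonneg Ra; omega, by
      have := abs_nonneg Ra; have := abs_nonneg Rb; omega⟩
  set L := R + 2 * K with hL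
  have hDo : OddDom (Dm 0 (L + 1)) := Dm_odd (by simp; omega)
  have hDe : EvenDom (Dm 0 L) := Dm_even (by simp; omega)
  refine NS K le_rfl (Dm 0 (L + 1)) (Dm 0 L) xi0 xi0 xi0_isHom xi0_isHom ?_ ?_ ?_ ?_
  · intro v hv
    have := Bx_Dm hv
    exact mem_Dm.2 (by omega)
  · intro v _
    have h1 := hC.odd hDo v
    refine le_trans (Ex_mono (G := fun h => 2 * ((h v : ℝ) - 1) ^ 2 + 2) fun h _ => ?_) ?_
    · nlinarith [sq_nonneg ((h v : ℝ) - 2)]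
    · rw [Ex_add, Ex_mul, Ex_const (Om_nonempty xi0_isHom)]; linarith
  · intro v _
    exact (hC.all hDe v).trans (by rw [hC']; linarith)
  · intro z hzB hz
    have hs := H K (by omega) z hz R hR hR3
    have dz : dist1 z 0 ≤ 2 * N := Bx_Dm hzB
    have loc : ∀ h1 h2 h1' h2' : P → ℤ, (∀ v ∈ Bx z K, h1 v = h1' v) → (∀ v ∈ Bx z K, h2 v = h2' v) →
        ind (Six (SA h1 h2) (SB h1 h2) z n K) = ind (Six (SA h1' h2') (SB h1' h2') z n K) := by
      have half : ∀ h1 h2 h1' h2' : P → ℤ, (∀ v ∈ Bx z K, h1 v = h1' v) →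
          (∀ v ∈ Bx z K, h2 v = h2' v) → ind (Six (SA h1 h2) (SB h1 h2) z n K) ≤
          ind (Six (SA h1' h2') (SB h1' h2') z n K) := by
        intro h1 h2 h1' h2' e1 e2
        refine ind_mono fun h => h.congr ?_ ?_ <;>
        · rintro v ⟨hv, hvB⟩
          have := e1 v hvB; have := e2 v hvB
          simp only [SA, SB, Set.mem_ofPred_eq] at *; omega
      intro h1 h2 h1' h2' e1 e2
      exact le_antisymm (half _ _ _ _ e1 e2)
        (half _ _ _ _ (fun v hv => (e1 v hv).symm) fun v hv => (e2 v hv).symm)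
    have s1 := ha z hz (fun h1 => Ex (Om (Dm z R) xi0) fun h2 =>
        ind (Six (SA h1 h2) (SB h1 h2) z n K)) (fun _ => Ex_nonneg fun _ _ => ind_nonneg _)
      (fun _ => Ex_le_const (Om_nonempty xi0_isHom) fun _ _ => ind_le_one _)
      (fun h h' e => Ex_congr fun h2 _ => loc _ _ _ _ e fun _ _ => rfl)
      (Dm z (R + 1)) (Dm 0 (L + 1)) (Dm_odd (by omega)) hDo
      (Dm_mono (by rw [dist1_self]; omega)) (Dm_mono (by omega))
    have s2 : |Ex (Om (Dm 0 (L + 1)) xi0) (fun h1 => Ex (Om (Dm z R) xi0) fun h2 =>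
        ind (Six (SA h1 h2) (SB h1 h2) z n K)) - Ex (Om (Dm 0 (L + 1)) xi0) (fun h1 =>
        Ex (Om (Dm 0 L) xi0) fun h2 => ind (Six (SA h1 h2) (SB h1 h2) z n K))| ≤ 1 / 8 := by
      rw [← Ex_sub]
      refine (abs_Ex_le _).trans (Ex_le_const (Om_nonempty xi0_isHom) fun h1 _ => ?_)
      exact hb z hz (fun h2 => ind (Six (SA h1 h2) (SB h1 h2) z n K)) (fun _ => ind_nonneg _)
        (fun _ => ind_le_one _) (fun h h' e => loc _ _ _ _ (fun _ _ => rfl) e) (Dm z R) (Dm 0 L)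
        (Dm_even (by omega)) hDe (Dm_mono (by rw [dist1_self]; omega)) (Dm_mono (by omega))
    linarith [(abs_le.1 s1).2, (abs_le.1 s2).2]

/-! ### Back to the finite-volume model -/

lemma mem_Lam_iff {L : ℕ} {v : P} : v ∈ Lam L ↔ dist1 v 0 ≤ L := by simp [Lam, dist1]

open Classical in
/-- Extension of a configuration on `Λ(L)` by the flat configuration `xi0`. -/
def ext0 (L : ℕ) (h : ↥(Lam L) → ℤ) (v : P) : ℤ := if hv : v ∈ Lam L then h ⟨v, hv⟩ else xi0 v

lemma ext0_in {L : ℕ} {h : ↥(Lam L) → ℤ} {v : P} (hv : v ∈ Lam L) : ext0 L h v = h ⟨v, hv⟩ := by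
  unfold ext0; rw [dif_pos hv]

lemma ext0_out {L : ℕ} {h : ↥(Lam L) → ℤ} {v : P} (hv : v ∉ Lam L) : ext0 L h v = xi0 v := by
  unfold ext0; rw [dif_neg hv]

lemma sphere_bdry {L : ℕ} {v : P} (h : dist1 v 0 = L) : ∃ w, w ∉ Lam L ∧ adj2 v w := by
  simp only [mem_Lam_iff, adj2_iff]
  unfold dist1 at *
  simp only [Prod.fst_zero, Prod.snd_zero, sub_zero] at *
  rcases le_total 0 v.1 with a | a
  · refine ⟨(v.1 + 1, v.2), ?_, by simp⟩
    simp only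
    rw [abs_of_nonneg a] at h; rw [abs_of_nonneg (by omega)]; omega
  · refine ⟨(v.1 - 1, v.2), ?_, by simp⟩
    simp only
    rw [abs_of_nonpos a] at h; rw [abs_of_nonpos (by omega)]; omega

lemma bdry_sphere {L : ℕ} {v w : P} (hv : v ∈ Lam L) (hw : w ∉ Lam L) (a : adj2 v w) :
    dist1 v 0 = L := by
  rw [mem_Lam_iff] at *
  have := dist1_tri w v 0
  have e : dist1 w v = 1 := by
    have := adj2_symm a
    unfold adj2 at this; unfold dist1; exact this
  omega

lemma ext0_mem {L : ℕ} (hL : L % 2 = 0) {h : ↥(Lam L) → ℤ} (hh : h ∈ HF L) :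
    ext0 L h ∈ Om (Dm 0 L) xi0 := by
  obtain ⟨h1, h2, h3⟩ := hh
  have sph : ∀ v (hv : v ∈ Lam L), dist1 v 0 = L → h ⟨v, hv⟩ = 0 := fun v hv hd =>
    h3 ⟨v, hv⟩ (sphere_bdry hd)
  have par : ∀ v : P, dist1 v 0 = L → (v.1 + v.2) % 2 = 0 := fun v hd => by
    have := dist1_parity v 0
    simp only [Prod.fst_zero, Prod.snd_zero] at this
    omega
  have x0 : ∀ v : P, (v.1 + v.2) % 2 = 0 → xi0 v = 0 := fun v hv => by unfold xi0; exact hv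
  have mixed : ∀ u v, adj2 u v → u ∈ Lam L → v ∉ Lam L → ext0 L h u = 0 ∧ ext0 L h v = 1 := by
    intro u v a hu hv
    have hd := bdry_sphere hu hv a
    refine ⟨by rw [ext0_in hu]; exact sph u hu hd, ?_⟩
    rw [ext0_out hv]
    have := par u hd
    rw [adj2_iff] at a
    unfold xi0; omega
  refine mem_Om.2 ⟨⟨fun v => ?_, fun u v a => ?_⟩, fun v hv => ?_⟩
  · by_cases hv : v ∈ Lam L
    · rw [ext0_in hv]
      by_cases hp : (v.1 + v.2) % 2 = 0
      · have := h2 ⟨v, hv⟩ (Int.even_iff.2 hp)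
        rw [Int.even_iff] at this; omega
      · have hv' := mem_Lam_iff.1 hv
        have hne : dist1 v 0 ≠ L := fun hc => hp (par v hc)
        have a : adj2 v (v.1 + 1, v.2) := by rw [adj2_iff]; simp
        have hw : ((v.1 + 1, v.2) : P) ∈ Lam L := by
          by_contra hc; exact hne (bdry_sphere hv hc a)
        have e := h1 ⟨v, hv⟩ ⟨_, hw⟩ a
        have := h2 ⟨_, hw⟩ (Int.even_iff.2 (by simp only; omega))
        rw [Int.even_iff] at this
        rcases abs_cases (h ⟨v, hv⟩ - h ⟨_, hw⟩) with b | b <;> omega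
    · rw [ext0_out hv]; exact xi0_isHom.1 v
  · by_cases hu : u ∈ Lam L <;> by_cases hv : v ∈ Lam L
    · rw [ext0_in hu, ext0_in hv]
      exact (le_abs_self _).trans (h1 ⟨u, hu⟩ ⟨v, hv⟩ a).le
    · obtain ⟨e1, e2⟩ := mixed u v a hu hv; omega
    · obtain ⟨e1, e2⟩ := mixed v u (adj2_symm a) hv hu; omega
    · rw [ext0_out hu, ext0_out hv]; exact xi0_isHom.2 u v a
  · by_cases hv' : v ∈ Lam L
    · have hd : dist1 v 0 = L := by
        rw [mem_Dm] at hv; rw [mem_Lam_iff] at hv'; omega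
      rw [ext0_in hv', sph v hv' hd, x0 v (par v hd)]
    · exact ext0_out hv'

lemma restrict_mem {L : ℕ} (hL : L % 2 = 0) {g : P → ℤ} (hg : g ∈ Om (Dm 0 L) xi0) :
    (fun v : ↥(Lam L) => g v.1) ∈ HF L := by
  obtain ⟨h1, h2⟩ := mem_Om.1 hg
  refine ⟨fun u v a => ?_, fun v hv => ?_, ?_⟩
  · have e1 := h1.2 _ _ a
    have e2 := h1.2 _ _ (adj2_symm a)
    have p1 := h1.1 u.1
    have p2 := h1.1 v.1
    rw [adj2_iff] at a
    beta_reduce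
    rcases abs_cases (g u.1 - g v.1) with b | b <;> omega
  · have p1 := h1.1 v.1
    beta_reduce
    rw [Int.even_iff] at *; omega
  · rintro v ⟨w, hw, a⟩
    have hd := bdry_sphere v.2 hw a
    have := dist1_parity v.1 0
    simp only [Prod.fst_zero, Prod.snd_zero] at this
    beta_reduce
    rw [h2 v.1 (by rw [mem_Dm]; omega)]
    unfold xi0; omega

/-- Height functions on `Λ(L)` with zero boundary values correspond to height functions on `ℤ²`
equal to `xi0` off the open diamond. -/
def HFequiv (L : ℕ) (hL : L % 2 = 0) : ↥(HF L) ≃ {g // g ∈ Om (Dm 0 L) xi0} where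
  toFun h := ⟨ext0 L h.1, ext0_mem hL h.2⟩
  invFun g := ⟨fun v => g.1 v.1, restrict_mem hL g.2⟩
  left_inv h := by
    ext v
    exact ext0_in v.2
  right_inv g := by
    ext v
    by_cases hv : v ∈ Lam L
    · exact ext0_in hv
    · refine (ext0_out hv).trans ((mem_Om.1 g.2).2 v ?_).symm
      rw [mem_Lam_iff] at hv; rw [mem_Dm]; omega

/-- Sums over `HF L` are finite sums over the height functions on `Dm 0 L`, by the bijection
`HFequiv`. -/
lemma tsum_HF {L : ℕ} (hL : L % 2 = 0) (F : ℤ → ℝ) :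
    ∑' h : ↥(HF L), F (heightAt L h) = ∑ g ∈ Om (Dm 0 L) xi0, F (g 0) := by
  rw [← Finset.tsum_subtype (Om (Dm 0 L) xi0) (fun g => F (g 0)), ← (HFequiv L hL).tsum_eq]
  refine tsum_congr fun h => ?_
  congr 1
  exact (ext0_in (origin_mem L)).symm

/-- The mean at the origin vanishes by the symmetry `h ↦ -h`, so the variance is the second moment. -/
lemma varHeight_eq {L : ℕ} (hL : L % 2 = 0) (h0 : 0 < L) : varHeight L = V L := by
  have t : total L = (Om (Dm 0 L) xi0).card := by
    have := tsum_HF hL (fun _ => (1:ℝ))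
    unfold total; rw [this]; simp
  have m : meanHeight L = 0 := by
    unfold meanHeight
    rw [t, tsum_HF hL (fun x => (x : ℝ))]
    refine Ex_zero (U := Dm 0 L) (x := 0) xi0_isHom (even_xi0_bdry (Dm_even ?_)) ?_
    · simp; omega
    · rw [mem_Dm, dist1_self]; omega
  unfold varHeight
  rw [m, t, tsum_HF hL (fun x => (x : ℝ) ^ 2)]
  unfold V Ex
  ring

/-- **Delocalization of the two-dimensional homomorphism height function
(Chandgotia–Peled–Sheffield–Tassy).**
If `h_L` is uniform on homomorphism height functions on `Λ(L) ⊂ ℤ²` with zero boundary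
values, then `Var(h_L(0,0)) → ∞` as `L → ∞` along even `L`. -/
theorem delocalization :
    Filter.Tendsto varHeight (Filter.atTop ⊓ Filter.principal {L : ℕ | Even L})
      Filter.atTop := by
  refine Filter.tendsto_atTop.2 fun b => ?_
  have hb := not_Loc b
  unfold Loc at hb
  push Not at hb
  obtain ⟨L0, hL0, hV⟩ := hb
  rw [Filter.eventually_inf_principal, Filter.eventually_atTop]
  refine ⟨L0.toNat + 1, fun L hL hE => ?_⟩
  have hE : L % 2 = 0 := Nat.even_iff.1 hE
  rw [varHeight_eq hE (by omega)]
  refine hV.le.trans ?_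
  exact abs_SD' (Dm_even (by simpa using hL0)) (Dm_mono (by rw [dist1_self]; omega)) xi0_isHom
    xi0_nonneg _ fun a b h => sq_le_of_absle h 0

end Stmt5
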